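/- arXiv:1102.4020 — 2 statements merged into one kernel-verified Lean document; each statement's English description precedes it below -/
import Mathlib

section
/- Let u be a monotone traveling wave solution of the balanced Allen-Cahn equation in the plane, and let γ : ℝ → ℝ be the function whose graph is the zero level set of u. For s ∈ ℝ define the translate u_s(x,y) := u(s + x, γ(s) + y). Then for every sequence (s_m) with |s_m| → ∞ there exist a subsequence (s_{m_k}) and a sign ε ∈ {1, −1} such that u_{s_{m_k}} converges, together with all partial derivatives up to order 3, uniformly on every compact subset of ℝ², to the one-dimensional profile (x,y) ↦ g(ε x). -/
/-!
An interior gradient estimate, obtained from the maximum principle, bounds the first and second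
derivatives of a bounded entire solution of `Δw + c ∂w/∂y = f(w)` and upgrades locally uniform
convergence of such solutions to convergence in `C³`.

The vector field `(w_x w_y, (w_y² - w_x²)/2 - F(w))` has divergence `-c w_y²` when `f = F'`, so for
a monotone wave `∫ w_y² < ∞` and `w_y → 0` at infinity. Hence a limit of translates is a function
`V` of `x` alone with `V'' = F'(V)`, `|V| ≤ 1` and constant energy `V'²/2 - F(V) ≤ 0`.

This energy is `0`. Otherwise, as the energy of the horizontal slices tends to `0` when `y → ∞`,
one can raise each translation point to a height where the energy has half its value; since `w`
increases with `y`, the translates now converge to some `W ≥ V` whose energy is still negative, but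
larger by some `δ > 0`. As `F` increases on `[-1, 0]`, subtracting the two energies gives
`W'² ≥ 2δ` wherever `W ≤ 0`, which forces the bounded function `W` to be positive everywhere, hence
concave, hence constantly `1`; but then its energy is `0`.

With `V(0) = 0`, zero energy means `V'(0) = ±g'(0)`, and uniqueness for the ordinary differential
equation gives `V(x) = g(±x)`.
-/

open Real Filter MeasureTheory Metric

noncomputable def pdx (u : ℝ → ℝ → ℝ) (x y : ℝ) : ℝ := deriv (fun t => u t y) x

noncomputable def pdy (u : ℝ → ℝ → ℝ) (x y : ℝ) : ℝ := deriv (fun t => u x t) y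

noncomputable def pdxx (u : ℝ → ℝ → ℝ) (x y : ℝ) : ℝ := deriv (fun t => pdx u t y) x

noncomputable def pdyy (u : ℝ → ℝ → ℝ) (x y : ℝ) : ℝ := deriv (fun t => pdy u x t) y

/-- `F` is a balanced double-well potential. -/
def BalancedDoubleWell (F : ℝ → ℝ) : Prop :=
  ContDiff ℝ 3 F ∧ deriv F (-1) = 0 ∧ deriv F 1 = 0 ∧
  0 < deriv (deriv F) (-1) ∧ 0 < deriv (deriv F) 1 ∧
  (∀ s ∈ Set.Ioo (-1 : ℝ) 0, 0 < deriv F s) ∧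
  (∀ s ∈ Set.Ioo (0 : ℝ) 1, deriv F s < 0) ∧
  F (-1) = 0 ∧ F 1 = 0

/-- `u` is a `C³` solution of `Δu + c uᵧ = F'(u)` on `ℝ²` with `|u| ≤ 1`
which is monotone in `y`. -/
def IsSolution (F : ℝ → ℝ) (c : ℝ) (u : ℝ → ℝ → ℝ) : Prop :=
  ContDiff ℝ 3 (fun p : ℝ × ℝ => u p.1 p.2) ∧
  (∀ x y : ℝ, pdxx u x y + pdyy u x y + c * pdy u x y = deriv F (u x y)) ∧
  (∀ x y : ℝ, |u x y| ≤ 1) ∧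
  (∀ x y : ℝ, 0 < pdy u x y)

/-- A monotone traveling wave solution connecting `-1` to `1`. -/
def IsTravelingWave (F : ℝ → ℝ) (c : ℝ) (u : ℝ → ℝ → ℝ) : Prop :=
  IsSolution F c u ∧
  (∀ x : ℝ, Tendsto (fun y => u x y) atTop (nhds 1)) ∧
  (∀ x : ℝ, Tendsto (fun y => u x y) atBot (nhds (-1)))

namespace AllenCahn

/-! ### Directional derivatives -/

section DirDeriv

variable {E : Type*} [NormedAddCommGroup E] [NormedSpace ℝ E] {v w : E → ℝ}

/-- The directional derivative `∂ₐw`, curried so that it can be iterated. -/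
noncomputable def dirDeriv (a : E) (w : E → ℝ) : E → ℝ := fun p => fderiv ℝ w p a

theorem contDiff_dirDeriv {m n : ℕ} (hw : ContDiff ℝ n w) (hmn : m + 1 ≤ n) (a : E) :
    ContDiff ℝ m (dirDeriv a w) :=
  (hw.fderiv_right (m := m) (by exact_mod_cast hmn)).clm_apply contDiff_const

theorem differentiable_dirDeriv {n : ℕ} (hw : ContDiff ℝ n w) (hn : 2 ≤ n) (a : E) :
    Differentiable ℝ (dirDeriv a w) :=
  (contDiff_dirDeriv (m := 1) hw hn a).differentiable (by norm_num)

theorem hasDerivAt_along_line (hw : Differentiable ℝ w) (p a : E) (t : ℝ) :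
    HasDerivAt (fun s : ℝ => w (p + s • a)) (dirDeriv a w (p + t • a)) t := by
  have hline : HasDerivAt (fun s : ℝ => p + s • a) a t := by
    simpa using ((hasDerivAt_id t).smul_const a).const_add p
  exact (hw _).hasFDerivAt.comp_hasDerivAt t hline

theorem dirDeriv_eq_of_hasDerivAt (hw : Differentiable ℝ w) {p a : E} {w' : ℝ}
    (h : HasDerivAt (fun t : ℝ => w (p + t • a)) w' 0) : dirDeriv a w p = w' := by
  simpa using (hasDerivAt_along_line hw p a 0).unique h

theorem dirDeriv_const (a : E) (k : ℝ) : dirDeriv a (fun _ => k) = fun _ => 0 := by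
  funext p
  simp [dirDeriv]

theorem dirDeriv_comm (hw : ContDiff ℝ 2 w) (a b : E) :
    dirDeriv a (dirDeriv b w) = dirDeriv b (dirDeriv a w) := by
  funext p
  have hd : DifferentiableAt ℝ (fderiv ℝ w) p :=
    (hw.fderiv_right (m := 1) (by norm_num)).differentiable (by norm_num) p
  have hsecond (a b : E) : dirDeriv a (dirDeriv b w) p = fderiv ℝ (fderiv ℝ w) p a b := by
    unfold dirDeriv
    rw [fderiv_clm_apply hd (by fun_prop)]
    simp
  rw [hsecond, hsecond]
  exact (hw.contDiffAt.isSymmSndFDerivAt (by simp)) a b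

theorem dirDeriv_add (hv : Differentiable ℝ v) (hw : Differentiable ℝ w) (a : E) :
    dirDeriv a (v + w) = dirDeriv a v + dirDeriv a w := by
  funext p
  simp [dirDeriv, fderiv_add (hv p) (hw p)]

theorem dirDeriv_sub (hv : Differentiable ℝ v) (hw : Differentiable ℝ w) (a : E) :
    dirDeriv a (v - w) = dirDeriv a v - dirDeriv a w := by
  funext p
  simp [dirDeriv, fderiv_sub (hv p) (hw p)]

theorem dirDeriv_const_smul (k : ℝ) (w : E → ℝ) (a : E) :
    dirDeriv a (k • w) = k • dirDeriv a w := by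
  funext p
  simp [dirDeriv, fderiv_const_smul_field k]

theorem dirDeriv_mul (hv : Differentiable ℝ v) (hw : Differentiable ℝ w) (a : E) :
    dirDeriv a (v * w) = v * dirDeriv a w + w * dirDeriv a v := by
  funext p
  simp [dirDeriv, fderiv_mul (hv p) (hw p)]

theorem dirDeriv_comp {f : ℝ → ℝ} (hf : Differentiable ℝ f) (hw : Differentiable ℝ w) (a : E) :
    dirDeriv a (f ∘ w) = (deriv f ∘ w) * dirDeriv a w := by
  funext p
  simp [dirDeriv, ((hf _).hasDerivAt.comp_hasFDerivAt p (hw p).hasFDerivAt).fderiv]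

theorem dirDeriv_comp_add_right (w : E → ℝ) (a b : E) :
    dirDeriv a (fun q => w (q + b)) = fun q => dirDeriv a w (q + b) := by
  funext p
  simp [dirDeriv, fderiv_comp_add_right]

theorem abs_sub_along_line_le (hw : Differentiable ℝ w) {q a : E} {M h : ℝ} (hh : 0 ≤ h)
    (hM : ∀ t ∈ Set.Icc 0 h, |dirDeriv a w (q + t • a)| ≤ M) :
    |w (q + h • a) - w q| ≤ M * h := by
  have := norm_image_sub_le_of_norm_deriv_le_segment' (f := fun s : ℝ => w (q + s • a)) (a := 0)
    (fun t _ => (hasDerivAt_along_line hw q a t).hasDerivWithinAt)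
    (fun t ht => hM t ⟨ht.1, ht.2.le⟩) h ⟨hh, le_rfl⟩
  simpa using this

theorem deriv_deriv_nonpos_of_isLocalMax {k : ℝ → ℝ} {t : ℝ} (hk : ContinuousAt k t)
    (hmax : IsLocalMax k t) : deriv (deriv k) t ≤ 0 := by
  by_contra! hpos
  have hmin : IsLocalMin k t := isLocalMin_of_deriv_deriv_pos hpos hmax.deriv_eq_zero hk
  have hconst : k =ᶠ[nhds t] fun _ => k t := by
    filter_upwards [hmax, hmin] with s h1 h2 using le_antisymm h1 h2
  have hderiv : deriv k =ᶠ[nhds t] fun _ => 0 := by simpa using hconst.deriv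
  simp [hderiv.deriv_eq] at hpos

theorem isLocalMax_along_line {p : E} (hmax : IsLocalMax w p) (a : E) :
    IsLocalMax (fun t : ℝ => w (p + t • a)) 0 := by
  have hline : Tendsto (fun t : ℝ => p + t • a) (nhds 0) (nhds p) := by
    simpa using (show Continuous fun t : ℝ => p + t • a by fun_prop).tendsto 0
  simpa [IsLocalMax, IsMaxFilter] using hline.eventually hmax

theorem dirDeriv_eq_zero_of_isLocalMax (hw : Differentiable ℝ w) {p : E} (hmax : IsLocalMax w p)
    (a : E) : dirDeriv a w p = 0 := by
  simpa using (isLocalMax_along_line hmax a).hasDerivAt_eq_zero (hasDerivAt_along_line hw p a 0)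

theorem dirDeriv_dirDeriv_nonpos_of_isLocalMax (hw : ContDiff ℝ 2 w) {p : E}
    (hmax : IsLocalMax w p) (a : E) : dirDeriv a (dirDeriv a w) p ≤ 0 := by
  have dw : Differentiable ℝ w := hw.differentiable (by norm_num)
  have h := deriv_deriv_nonpos_of_isLocalMax (hasDerivAt_along_line dw p a 0).continuousAt
    (isLocalMax_along_line hmax a)
  rw [funext fun t => (hasDerivAt_along_line dw p a t).deriv,
    (hasDerivAt_along_line (differentiable_dirDeriv hw le_rfl a) p a 0).deriv] at h
  simpa using h

end DirDeriv

/-! ### The operator `Δ + c ∂/∂y` -/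

/-- The operator `Δ + c ∂/∂y` on functions of the plane. -/
noncomputable def driftLaplacian (c : ℝ) (w : ℝ × ℝ → ℝ) : ℝ × ℝ → ℝ :=
  dirDeriv (1, 0) (dirDeriv (1, 0) w) + dirDeriv (0, 1) (dirDeriv (0, 1) w)
    + c • dirDeriv (0, 1) w

section DriftLaplacian

variable {v w : ℝ × ℝ → ℝ}

theorem driftLaplacian_sub (c : ℝ) (hv : ContDiff ℝ 2 v) (hw : ContDiff ℝ 2 w) :
    driftLaplacian c (v - w) = driftLaplacian c v - driftLaplacian c w := by
  have hsub (a : ℝ × ℝ) : dirDeriv a (v - w) = dirDeriv a v - dirDeriv a w :=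
    dirDeriv_sub (hv.differentiable (by norm_num)) (hw.differentiable (by norm_num)) a
  have hsub' (a b : ℝ × ℝ) : dirDeriv a (dirDeriv b v - dirDeriv b w)
      = dirDeriv a (dirDeriv b v) - dirDeriv a (dirDeriv b w) :=
    dirDeriv_sub (differentiable_dirDeriv hv le_rfl b) (differentiable_dirDeriv hw le_rfl b) a
  simp only [driftLaplacian, hsub, hsub', smul_sub]
  abel

theorem driftLaplacian_const_smul (c k : ℝ) (w : ℝ × ℝ → ℝ) :
    driftLaplacian c (k • w) = k • driftLaplacian c w := by
  simp only [driftLaplacian, dirDeriv_const_smul, smul_add, smul_comm k c]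

theorem driftLaplacian_comp_add_right (c : ℝ) (w : ℝ × ℝ → ℝ) (b : ℝ × ℝ) :
    driftLaplacian c (fun q => w (q + b)) = fun q => driftLaplacian c w (q + b) := by
  simp only [driftLaplacian, dirDeriv_comp_add_right]
  rfl

theorem driftLaplacian_dirDeriv (c : ℝ) (hw : ContDiff ℝ 3 w) (a : ℝ × ℝ) :
    driftLaplacian c (dirDeriv a w) = dirDeriv a (driftLaplacian c w) := by
  have hw1 (b : ℝ × ℝ) : ContDiff ℝ 2 (dirDeriv b w) := contDiff_dirDeriv hw (by norm_num) b
  have hw2 (b d : ℝ × ℝ) : Differentiable ℝ (dirDeriv d (dirDeriv b w)) :=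
    differentiable_dirDeriv (hw1 b) le_rfl d
  have hcomm (b : ℝ × ℝ) : dirDeriv b (dirDeriv a w) = dirDeriv a (dirDeriv b w) :=
    dirDeriv_comm (hw.of_le (by norm_num)) b a
  unfold driftLaplacian
  rw [hcomm, hcomm, dirDeriv_add ((hw2 _ _).add (hw2 _ _))
      (((hw1 (0, 1)).differentiable (by norm_num)).const_smul c),
    dirDeriv_add (hw2 _ _) (hw2 _ _), dirDeriv_const_smul,
    dirDeriv_comm (hw1 (1, 0)), dirDeriv_comm (hw1 (0, 1))]

end DriftLaplacian

/-- `a` is one of the two coordinate directions; the other one is then `a.swap`. -/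
def IsCoord (a : ℝ × ℝ) : Prop := a = (1, 0) ∨ a = (0, 1)

theorem isCoord_fst : IsCoord (1, 0) := Or.inl rfl

theorem isCoord_snd : IsCoord (0, 1) := Or.inr rfl

theorem IsCoord.norm_eq {a : ℝ × ℝ} (ha : IsCoord a) : ‖a‖ = 1 := by
  rcases ha with rfl | rfl <;> simp [Prod.norm_def]

theorem IsCoord.driftLaplacian_eq {a : ℝ × ℝ} (ha : IsCoord a) (c : ℝ) (w : ℝ × ℝ → ℝ) :
    driftLaplacian c w = dirDeriv a (dirDeriv a w) + dirDeriv a.swap (dirDeriv a.swap w)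
      + c • dirDeriv (0, 1) w := by
  rcases ha with rfl | rfl
  · rfl
  · rw [Prod.swap_prod_mk, driftLaplacian, add_comm (dirDeriv (1, 0) _)]

/-! ### Interior gradient estimates -/

/-- The function `w` carried by the translation flow in the direction `b`; the last coordinate is
the time. -/
def flow (b : ℝ × ℝ) (w : ℝ × ℝ → ℝ) (z : (ℝ × ℝ) × ℝ) : ℝ := w (z.1 + z.2 • b)

/-- The barrier for the central differences, around `p`, of a function bounded by `M`. -/
def barrier (M B : ℝ) (p : ℝ × ℝ) (z : (ℝ × ℝ) × ℝ) : ℝ :=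
  2 * M * ((z.1.1 - p.1) ^ 2 + (z.1.2 - p.2) ^ 2) + (B + 2 * M) * z.2 - B * z.2 ^ 2

/-- The central difference `w (q + r a) - w (q - r a)`, as a function of `(q, r)`, minus its
barrier. -/
def barrierGap (a : ℝ × ℝ) (w : ℝ × ℝ → ℝ) (M B : ℝ) (p : ℝ × ℝ) : (ℝ × ℝ) × ℝ → ℝ :=
  flow a w - flow (-a) w - barrier M B p

section GradientEstimate

variable {w : ℝ × ℝ → ℝ} {c M N B : ℝ} {p a : ℝ × ℝ}

theorem contDiff_flow {n : ℕ} (hw : ContDiff ℝ n w) (b : ℝ × ℝ) : ContDiff ℝ n (flow b w) :=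
  hw.comp (contDiff_fst.add (contDiff_snd.smul contDiff_const))

theorem contDiff_barrier {n : ℕ} (M B : ℝ) (p : ℝ × ℝ) : ContDiff ℝ n (barrier M B p) := by
  unfold barrier
  fun_prop

theorem contDiff_barrierGap {n : ℕ} (hw : ContDiff ℝ n w) :
    ContDiff ℝ n (barrierGap a w M B p) :=
  ((contDiff_flow hw a).sub (contDiff_flow hw (-a))).sub (contDiff_barrier M B p)

theorem dirDeriv_flow (hw : Differentiable ℝ w) (b : ℝ × ℝ) (v : (ℝ × ℝ) × ℝ) :
    dirDeriv v (flow b w) = flow b (dirDeriv (v.1 + v.2 • b) w) := by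
  funext z
  refine dirDeriv_eq_of_hasDerivAt (by unfold flow; fun_prop) ?_
  have h := hasDerivAt_along_line hw (z.1 + z.2 • b) (v.1 + v.2 • b) 0
  rw [zero_smul, add_zero] at h
  refine h.congr_of_eventuallyEq (Eventually.of_forall fun t => congrArg w ?_)
  simp only [Prod.fst_add, Prod.snd_add, Prod.smul_fst, Prod.smul_snd, smul_eq_mul]
  module

theorem dirDeriv_barrier (M B : ℝ) (p : ℝ × ℝ) (v : (ℝ × ℝ) × ℝ) :
    dirDeriv v (barrier M B p) = fun z =>
      4 * M * ((z.1.1 - p.1) * v.1.1 + (z.1.2 - p.2) * v.1.2)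
        + (B + 2 * M - 2 * B * z.2) * v.2 := by
  funext z
  have dbarrier : Differentiable ℝ (barrier M B p) :=
    (contDiff_barrier (n := 1) M B p).differentiable (by norm_num)
  refine dirDeriv_eq_of_hasDerivAt dbarrier ?_
  have hline (x y : ℝ) : HasDerivAt (fun t : ℝ => x + t * y) y 0 := by
    simpa using ((hasDerivAt_id (0 : ℝ)).mul_const y).const_add x
  have h := (((((hline z.1.1 v.1.1).sub_const p.1).fun_pow 2).fun_add
    (((hline z.1.2 v.1.2).sub_const p.2).fun_pow 2)).const_mul (2 * M)).fun_add
      ((hline z.2 v.2).const_mul (B + 2 * M)) |>.fun_sub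
      (((hline z.2 v.2).fun_pow 2).const_mul B)
  exact h.congr_deriv (by simp; ring)

theorem dirDeriv_dirDeriv_barrier (M B : ℝ) (p : ℝ × ℝ) (v : (ℝ × ℝ) × ℝ) (z : (ℝ × ℝ) × ℝ) :
    dirDeriv v (dirDeriv v (barrier M B p)) z
      = 4 * M * (v.1.1 ^ 2 + v.1.2 ^ 2) - 2 * B * v.2 ^ 2 := by
  refine dirDeriv_eq_of_hasDerivAt
    (differentiable_dirDeriv (contDiff_barrier (n := 2) M B p) le_rfl v) ?_
  simp only [dirDeriv_barrier]
  have hline (x y : ℝ) : HasDerivAt (fun t : ℝ => x + t * y) y 0 := by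
    simpa using ((hasDerivAt_id (0 : ℝ)).mul_const y).const_add x
  have h := (((((hline z.1.1 v.1.1).sub_const p.1).mul_const v.1.1).fun_add
    (((hline z.1.2 v.1.2).sub_const p.2).mul_const v.1.2)).const_mul (4 * M)).fun_add
      ((((hline z.2 v.2).const_mul (2 * B)).const_sub (B + 2 * M)).mul_const v.2)
  exact h.congr_deriv (by ring)

theorem dirDeriv_barrierGap (hw : Differentiable ℝ w) (v : (ℝ × ℝ) × ℝ) :
    dirDeriv v (barrierGap a w M B p) = flow a (dirDeriv (v.1 + v.2 • a) w)
      - flow (-a) (dirDeriv (v.1 - v.2 • a) w) - dirDeriv v (barrier M B p) := by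
  have dbarrier : Differentiable ℝ (barrier M B p) :=
    (contDiff_barrier (n := 1) M B p).differentiable (by norm_num)
  have dflow (b : ℝ × ℝ) : Differentiable ℝ (flow b w) := by
    unfold flow
    fun_prop
  rw [barrierGap, dirDeriv_sub ((dflow a).sub (dflow (-a))) dbarrier,
    dirDeriv_sub (dflow a) (dflow (-a)), dirDeriv_flow hw,
    dirDeriv_flow hw, smul_neg, ← sub_eq_add_neg]

theorem dirDeriv_dirDeriv_barrierGap (hw : ContDiff ℝ 2 w) (v : (ℝ × ℝ) × ℝ) :
    dirDeriv v (dirDeriv v (barrierGap a w M B p))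
      = flow a (dirDeriv (v.1 + v.2 • a) (dirDeriv (v.1 + v.2 • a) w))
        - flow (-a) (dirDeriv (v.1 - v.2 • a) (dirDeriv (v.1 - v.2 • a) w))
        - dirDeriv v (dirDeriv v (barrier M B p)) := by
  have dw (e : ℝ × ℝ) : Differentiable ℝ (dirDeriv e w) := differentiable_dirDeriv hw le_rfl e
  have dflow (b e : ℝ × ℝ) : Differentiable ℝ (flow b (dirDeriv e w)) := by
    have := dw e
    unfold flow
    fun_prop
  rw [dirDeriv_barrierGap (hw.differentiable (by norm_num)),
    dirDeriv_sub ((dflow _ _).sub (dflow _ _))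
      (differentiable_dirDeriv (contDiff_barrier (n := 2) M B p) le_rfl v),
    dirDeriv_sub (dflow _ _) (dflow _ _), dirDeriv_flow (dw _), dirDeriv_flow (dw _), smul_neg,
    ← sub_eq_add_neg]

theorem driftLaplacian_sub_le_of_isLocalMax_barrierGap (c : ℝ) (hw : ContDiff ℝ 2 w)
    (ha : IsCoord a) {q : ℝ × ℝ} {r : ℝ} (hmax : IsLocalMax (barrierGap a w M B p) (q, r)) :
    driftLaplacian c w (q + r • a) - driftLaplacian c w (q - r • a)
      ≤ 4 * M * (1 + c * (q.2 - p.2)) - 2 * B := by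
  have hgap : ContDiff ℝ 2 (barrierGap a w M B p) := contDiff_barrierGap hw
  have hneg : dirDeriv (-a) (dirDeriv (-a) w) = dirDeriv a (dirDeriv a w) := by
    have h (v : ℝ × ℝ → ℝ) : dirDeriv (-a) v = (-1 : ℝ) • dirDeriv a v := by
      funext z
      simp [dirDeriv]
    rw [h w, dirDeriv_const_smul, h, smul_smul]
    norm_num
  have hswap : a.swap.1 ^ 2 + a.swap.2 ^ 2 = 1 := by
    rcases ha with rfl | rfl <;> norm_num
  have htime := dirDeriv_dirDeriv_nonpos_of_isLocalMax hgap hmax (0, 1)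
  have hspace := dirDeriv_dirDeriv_nonpos_of_isLocalMax hgap hmax (a.swap, 0)
  have hdrift := dirDeriv_eq_zero_of_isLocalMax (hgap.differentiable (by norm_num)) hmax
    ((0, 1), 0)
  rw [dirDeriv_dirDeriv_barrierGap hw] at htime hspace
  rw [dirDeriv_barrierGap (hw.differentiable (by norm_num)), dirDeriv_barrier] at hdrift
  simp only [Pi.sub_apply, dirDeriv_dirDeriv_barrier, flow, zero_smul, one_smul, add_zero, zero_add,
    sub_zero, zero_sub, Prod.fst_zero, Prod.snd_zero, hneg, hswap, smul_neg,
    ← sub_eq_add_neg] at htime hspace hdrift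
  simp only [ha.driftLaplacian_eq, Pi.add_apply, Pi.smul_apply, smul_eq_mul]
  linear_combination htime + hspace + c * hdrift

theorem add_smul_mem_closedBall {q : ℝ × ℝ} {r R t : ℝ} (hq : q ∈ closedBall p r) (ha : IsCoord a)
    (ht : r + |t| ≤ R) : q + t • a ∈ closedBall p R := by
  have hta : ‖t • a‖ = |t| := by rw [norm_smul, ha.norm_eq, mul_one, Real.norm_eq_abs]
  rw [mem_closedBall_iff_norm] at hq ⊢
  calc ‖q + t • a - p‖ = ‖(q - p) + t • a‖ := by congr 1; abel
    _ ≤ R := (norm_add_le _ _).trans (by linarith)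

theorem sub_smul_mem_closedBall {q : ℝ × ℝ} {r R t : ℝ} (hq : q ∈ closedBall p r) (ha : IsCoord a)
    (ht : r + |t| ≤ R) : q - t • a ∈ closedBall p R := by
  simpa [sub_eq_add_neg] using add_smul_mem_closedBall (t := -t) hq ha (by rwa [abs_neg])

theorem interior_of_barrierGap_pos (hM0 : 0 ≤ M) (hB0 : 0 ≤ B) (ha : IsCoord a)
    (hM : ∀ q ∈ closedBall p 2, |w q| ≤ M) {q : ℝ × ℝ} {r : ℝ} (hq : q ∈ closedBall p 1)
    (hr : r ∈ Set.Icc (0 : ℝ) 1) (hpos : 0 < barrierGap a w M B p (q, r)) :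
    q ∈ ball p 1 ∧ r ∈ Set.Ioo (0 : ℝ) 1 := by
  obtain ⟨hr0, hr1⟩ := hr
  have hr2 : 1 + |r| ≤ 2 := by
    rw [abs_of_nonneg hr0]
    linarith
  have hplus := abs_le.1 (hM _ (add_smul_mem_closedBall hq ha hr2))
  have hminus := abs_le.1 (hM _ (sub_smul_mem_closedBall hq ha hr2))
  have hnonneg : 0 ≤ M * ((q.1 - p.1) ^ 2 + (q.2 - p.2) ^ 2) := by positivity
  have hbound : 2 * M * ((q.1 - p.1) ^ 2 + (q.2 - p.2) ^ 2) + (B + 2 * M) * r - B * r ^ 2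
      < 2 * M := by
    simp only [barrierGap, flow, barrier, Pi.sub_apply, smul_neg, ← sub_eq_add_neg] at hpos
    linarith
  have hr0' : r ≠ 0 := by
    rintro rfl
    simp only [barrierGap, flow, barrier, Pi.sub_apply, zero_smul, add_zero] at hpos
    linarith
  have hr1' : r ≠ 1 := by
    rintro rfl
    linarith
  have hBr : 0 ≤ B * r * (1 - r) := mul_nonneg (mul_nonneg hB0 hr0) (by linarith)
  have hsq : (q.1 - p.1) ^ 2 + (q.2 - p.2) ^ 2 < 1 := by
    by_contra! h
    nlinarith [mul_le_mul_of_nonneg_left h hM0, mul_nonneg hM0 hr0]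
  refine ⟨?_, hr0.lt_of_ne' hr0', hr1.lt_of_ne hr1'⟩
  rw [mem_ball, Prod.dist_eq, max_lt_iff, Real.dist_eq, Real.dist_eq, ← sq_lt_one_iff_abs_lt_one,
    ← sq_lt_one_iff_abs_lt_one]
  constructor <;> linarith [sq_nonneg (q.1 - p.1), sq_nonneg (q.2 - p.2)]

theorem barrierGap_nonpos (hw : ContDiff ℝ 2 w) (hM : ∀ q ∈ closedBall p 2, |w q| ≤ M)
    (hN : ∀ q ∈ closedBall p 2, |driftLaplacian c w q| ≤ N) (hB : N + 2 * M * (1 + |c|) < B)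
    (ha : IsCoord a) {t : ℝ} (ht : t ∈ Set.Icc (0 : ℝ) 1) : barrierGap a w M B p (p, t) ≤ 0 := by
  have hp : p ∈ closedBall p 2 := mem_closedBall_self (by norm_num)
  have hM0 : 0 ≤ M := (abs_nonneg _).trans (hM p hp)
  have hN0 : 0 ≤ N := (abs_nonneg _).trans (hN p hp)
  have hpt : (p, t) ∈ closedBall p 1 ×ˢ Set.Icc (0 : ℝ) 1 := ⟨mem_closedBall_self zero_le_one, ht⟩
  obtain ⟨⟨q, r⟩, ⟨hq, hr⟩, hmax⟩ := ((isCompact_closedBall p 1).prod isCompact_Icc).exists_isMaxOn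
    ⟨_, hpt⟩ (contDiff_barrierGap (a := a) (M := M) (B := B) (p := p) hw).continuous.continuousOn
  refine (hmax hpt).trans ?_
  by_contra! hpos
  obtain ⟨hq', hr'⟩ :=
    interior_of_barrierGap_pos hM0 (le_trans (by positivity) hB.le) ha hM hq hr hpos
  have hlocal : IsLocalMax (barrierGap a w M B p) (q, r) := hmax.isLocalMax <|
    prod_mem_nhds (mem_of_superset (isOpen_ball.mem_nhds hq') ball_subset_closedBall)
      (Icc_mem_nhds hr'.1 hr'.2)
  have hr2 : 1 + |r| ≤ 2 := by
    rw [abs_of_nonneg hr.1]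
    linarith [hr.2]
  have hplus := abs_le.1 (hN _ (add_smul_mem_closedBall hq ha hr2))
  have hminus := abs_le.1 (hN _ (sub_smul_mem_closedBall hq ha hr2))
  have hdrift : c * (q.2 - p.2) ≤ |c| := by
    have : |q.2 - p.2| ≤ 1 := (le_max_right _ _).trans (mem_closedBall.1 hq)
    calc c * (q.2 - p.2) ≤ |c * (q.2 - p.2)| := le_abs_self _
      _ = |c| * |q.2 - p.2| := abs_mul _ _
      _ ≤ |c| := mul_le_of_le_one_right (abs_nonneg c) this
  have hL := driftLaplacian_sub_le_of_isLocalMax_barrierGap c hw ha hlocal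
  linarith [mul_le_mul_of_nonneg_left hdrift hM0]

theorem dirDeriv_le_of_barrierGap_nonpos (hw : Differentiable ℝ w)
    (h : ∀ t ∈ Set.Icc (0 : ℝ) 1, barrierGap a w M B p (p, t) ≤ 0) :
    2 * dirDeriv a w p ≤ B + 2 * M := by
  have hslope := ((hasDerivAt_along_line hw p a 0).fun_sub
    (hasDerivAt_along_line hw p (-a) 0)).tendsto_slope_zero_right
  have hlim : Tendsto (fun t : ℝ => B + 2 * M - B * t) (nhdsWithin 0 (Set.Ioi 0))
      (nhds (B + 2 * M)) := by
    have : Continuous fun t : ℝ => B + 2 * M - B * t := by fun_prop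
    simpa using (this.tendsto 0).mono_left (nhdsWithin_le_nhds (s := Set.Ioi 0))
  have hle := le_of_tendsto_of_tendsto hslope hlim ?_
  · simp only [dirDeriv, zero_smul, add_zero, map_neg] at hle ⊢
    linarith
  · filter_upwards [Ioo_mem_nhdsGT (show (0 : ℝ) < 1 by norm_num)] with t ht
    have hgap := h t ⟨ht.1.le, ht.2.le⟩
    simp only [barrierGap, flow, barrier, Pi.sub_apply] at hgap
    simp only [zero_add, zero_smul, add_zero, sub_self, sub_zero, smul_eq_mul]
    rw [inv_mul_le_iff₀ ht.1]
    linarith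

theorem dirDeriv_le (hw : ContDiff ℝ 2 w) (hM : ∀ q ∈ closedBall p 2, |w q| ≤ M)
    (hN : ∀ q ∈ closedBall p 2, |driftLaplacian c w q| ≤ N) (ha : IsCoord a) :
    dirDeriv a w p ≤ (2 + |c|) * (M + N) := by
  have hp : p ∈ closedBall p 2 := mem_closedBall_self (by norm_num)
  have hN0 : 0 ≤ N := (abs_nonneg _).trans (hN p hp)
  have hsharp : 2 * dirDeriv a w p - 2 * M ≤ N + 2 * M * (1 + |c|) :=
    le_of_forall_gt_imp_ge_of_dense fun B hB => by
      linarith [dirDeriv_le_of_barrierGap_nonpos (hw.differentiable (by norm_num)) fun t ht =>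
        barrierGap_nonpos hw hM hN hB ha ht]
  linarith [mul_nonneg (abs_nonneg c) hN0]

theorem abs_dirDeriv_le (hw : ContDiff ℝ 2 w) (hM : ∀ q ∈ closedBall p 2, |w q| ≤ M)
    (hN : ∀ q ∈ closedBall p 2, |driftLaplacian c w q| ≤ N) (ha : IsCoord a) :
    |dirDeriv a w p| ≤ (2 + |c|) * (M + N) := by
  refine abs_le'.2 ⟨dirDeriv_le hw hM hN ha, ?_⟩
  have h := dirDeriv_le (w := (-1 : ℝ) • w) (contDiff_const.smul hw) (p := p)
    (fun q hq => by simpa using hM q hq)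
    (fun q hq => by rw [driftLaplacian_const_smul]; simpa using hN q hq) ha
  rw [dirDeriv_const_smul] at h
  simpa using h

theorem abs_dirDeriv_dirDeriv_le {z : ℝ × ℝ → ℝ} (hz : ContDiff ℝ 2 z)
    (hLz : Differentiable ℝ (driftLaplacian c z)) {b : ℝ × ℝ} (ha : IsCoord a) (hb : IsCoord b)
    (hM : ∀ q ∈ closedBall p 3, |dirDeriv b z q| ≤ M)
    (hN : ∀ q ∈ closedBall p 3, |dirDeriv b (driftLaplacian c z) q| ≤ N) :
    |dirDeriv a (dirDeriv b z) p| ≤ (2 + |c|) * (M + N) := by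
  have dz : Differentiable ℝ z := hz.differentiable (by norm_num)
  have hsegment {q : ℝ × ℝ} (hq : q ∈ closedBall p 2) {h : ℝ} (hh : h ≤ 1) {t : ℝ}
      (ht : t ∈ Set.Icc 0 h) : q + t • b ∈ closedBall p 3 := by
    refine add_smul_mem_closedBall hq hb ?_
    rw [abs_of_nonneg ht.1]
    linarith [ht.2]
  have hquotient : ∀ h ∈ Set.Ioo (0 : ℝ) 1,
      |h⁻¹ * (dirDeriv a z (p + h • b) - dirDeriv a z p)| ≤ (2 + |c|) * (M + N) := by
    intro h hh
    have hshift : ContDiff ℝ 2 (fun q => z (q + h • b)) := hz.comp (contDiff_id.add contDiff_const)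
    have hinv : |h⁻¹| = h⁻¹ := abs_of_pos (inv_pos.2 hh.1)
    have := abs_dirDeriv_le (w := h⁻¹ • ((fun q => z (q + h • b)) - z)) (p := p) (M := M) (N := N)
      (c := c) (contDiff_const.smul (hshift.sub hz)) (fun q hq => ?_) (fun q hq => ?_) ha
    · rwa [dirDeriv_const_smul, dirDeriv_sub (hshift.differentiable (by norm_num)) dz,
        dirDeriv_comp_add_right] at this
    · rw [Pi.smul_apply, smul_eq_mul, abs_mul, hinv, inv_mul_le_iff₀ hh.1, mul_comm]
      exact abs_sub_along_line_le dz hh.1.le fun t ht => hM _ (hsegment hq hh.2.le ht)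
    · rw [driftLaplacian_const_smul, driftLaplacian_sub c hshift hz, driftLaplacian_comp_add_right,
        Pi.smul_apply, smul_eq_mul, abs_mul, hinv, inv_mul_le_iff₀ hh.1, mul_comm]
      exact abs_sub_along_line_le hLz hh.1.le fun t ht => hN _ (hsegment hq hh.2.le ht)
  have hslope := (hasDerivAt_along_line (differentiable_dirDeriv hz le_rfl a) p b
    0).tendsto_slope_zero_right
  simp only [zero_smul, add_zero, zero_add, smul_eq_mul] at hslope
  rw [dirDeriv_comm hz]
  refine le_of_tendsto hslope.abs ?_
  filter_upwards [Ioo_mem_nhdsGT zero_lt_one] with h hh using hquotient h hh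

end GradientEstimate

/-! ### Locally uniform convergence of solutions -/

section LocallyUniform

variable {ι X : Type*} {l : Filter ι}

theorem tendstoLocallyUniformly_comp_left {β β' : Type*} [TopologicalSpace X] [UniformSpace β]
    [UniformSpace β'] {u : ι → X → β} {v : X → β} {k : β → β'} (h : TendstoLocallyUniformly u v l)
    (hv : Continuous v) (hk : Continuous k) :
    TendstoLocallyUniformly (fun i => k ∘ u i) (k ∘ v) l := by
  rw [tendstoLocallyUniformly_iff_forall_tendsto] at h ⊢
  intro x
  have hvx : Tendsto (fun q : ι × X => v q.2) (l ×ˢ nhds x) (nhds (v x)) :=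
    (hv.tendsto x).comp tendsto_snd
  have hux : Tendsto (fun q : ι × X => u q.1 q.2) (l ×ˢ nhds x) (nhds (v x)) :=
    hvx.congr_uniformity (h x)
  exact (((hk.tendsto _).comp hvx).prodMk_nhds ((hk.tendsto _).comp hux)).mono_right
    (nhds_le_uniformity _)

theorem tendstoLocallyUniformly_of_local_estimate [PseudoMetricSpace X] [ProperSpace X]
    {U V W : ι → X → ℝ} {U₀ V₀ W₀ : X → ℝ} {C r : ℝ} (hU : TendstoLocallyUniformly U U₀ l)
    (hV : TendstoLocallyUniformly V V₀ l)
    (hW : ∀ i x M, (∀ y ∈ closedBall x r, |U i y - U₀ y| ≤ M) →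
      (∀ y ∈ closedBall x r, |V i y - V₀ y| ≤ M) → |W i x - W₀ x| ≤ C * M) :
    TendstoLocallyUniformly W W₀ l := by
  rw [Metric.tendstoLocallyUniformly_iff]
  intro ε hε x
  have hδ : 0 < ε / (|C| + 1) := by positivity
  have huniform {T : ι → X → ℝ} {T₀ : X → ℝ} (hT : TendstoLocallyUniformly T T₀ l) :=
    Metric.tendstoUniformlyOn_iff.1 (tendstoLocallyUniformly_iff_forall_isCompact.1 hT _
      (isCompact_closedBall x (r + 1))) _ hδ
  refine ⟨closedBall x 1, closedBall_mem_nhds x one_pos, ?_⟩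
  filter_upwards [huniform hU, huniform hV] with i hUi hVi y hy
  have hsub : closedBall y r ⊆ closedBall x (r + 1) :=
    closedBall_subset_closedBall' (by linarith [mem_closedBall.1 hy])
  rw [dist_comm, Real.dist_eq]
  calc |W i y - W₀ y| ≤ C * (ε / (|C| + 1)) :=
        hW i y _ (fun z hz => by simpa [Real.dist_eq, abs_sub_comm] using (hUi z (hsub hz)).le)
          fun z hz => by simpa [Real.dist_eq, abs_sub_comm] using (hVi z (hsub hz)).le
    _ < (|C| + 1) * (ε / (|C| + 1)) := by
        gcongr
        linarith [le_abs_self C]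
    _ = ε := by field_simp

variable {u : ι → ℝ × ℝ → ℝ} {v : ℝ × ℝ → ℝ} {c : ℝ}

theorem tendstoLocallyUniformly_dirDeriv (hu : ∀ i, ContDiff ℝ 2 (u i)) (hv : ContDiff ℝ 2 v)
    (h : TendstoLocallyUniformly u v l)
    (hL : TendstoLocallyUniformly (fun i => driftLaplacian c (u i)) (driftLaplacian c v) l)
    {a : ℝ × ℝ} (ha : IsCoord a) :
    TendstoLocallyUniformly (fun i => dirDeriv a (u i)) (dirDeriv a v) l := by
  refine tendstoLocallyUniformly_of_local_estimate (C := (2 + |c|) * 2) (r := 2) h hL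
    fun i p M hM hLM => ?_
  have := abs_dirDeriv_le (w := u i - v) (c := c) (N := M) ((hu i).sub hv) hM
    (by rwa [driftLaplacian_sub c (hu i) hv]) ha
  rw [dirDeriv_sub ((hu i).differentiable (by norm_num)) (hv.differentiable (by norm_num))] at this
  exact this.trans_eq (by ring)

theorem tendstoLocallyUniformly_dirDeriv_dirDeriv (hu : ∀ i, ContDiff ℝ 2 (u i))
    (hv : ContDiff ℝ 2 v) (hLu : ∀ i, Differentiable ℝ (driftLaplacian c (u i)))
    (hLv : Differentiable ℝ (driftLaplacian c v)) {a b : ℝ × ℝ} (ha : IsCoord a) (hb : IsCoord b)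
    (h : TendstoLocallyUniformly (fun i => dirDeriv b (u i)) (dirDeriv b v) l)
    (hL : TendstoLocallyUniformly (fun i => dirDeriv b (driftLaplacian c (u i)))
      (dirDeriv b (driftLaplacian c v)) l) :
    TendstoLocallyUniformly (fun i => dirDeriv a (dirDeriv b (u i))) (dirDeriv a (dirDeriv b v))
      l := by
  refine tendstoLocallyUniformly_of_local_estimate (C := (2 + |c|) * 2) (r := 3) h hL
    fun i p M hM hLM => ?_
  have hL := driftLaplacian_sub c (hu i) hv
  have hsub := dirDeriv_sub ((hu i).differentiable (by norm_num)) (hv.differentiable (by norm_num))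
    b
  have := abs_dirDeriv_dirDeriv_le (z := u i - v) (p := p) (c := c) (M := M) (N := M)
    ((hu i).sub hv) (hL ▸ (hLu i).sub hLv) ha hb (by rwa [hsub])
    (by rwa [hL, dirDeriv_sub (hLu i) hLv])
  rw [hsub, dirDeriv_sub (differentiable_dirDeriv (hu i) le_rfl b)
    (differentiable_dirDeriv hv le_rfl b)] at this
  exact this.trans_eq (by ring)

theorem norm_iteratedFDeriv_succ_le {n : ℕ} {w : ℝ × ℝ → ℝ} (hw : ContDiff ℝ (n + 1 : ℕ) w)
    (p : ℝ × ℝ) :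
    ‖iteratedFDeriv ℝ (n + 1) w p‖ ≤ ‖iteratedFDeriv ℝ n (dirDeriv (1, 0) w) p‖
      + ‖iteratedFDeriv ℝ n (dirDeriv (0, 1) w) p‖ := by
  have hdw (a : ℝ × ℝ) : ContDiffAt ℝ n (dirDeriv a w) p :=
    (contDiff_dirDeriv hw le_rfl a).contDiffAt
  refine ContinuousMultilinearMap.opNorm_le_bound (by positivity) fun m => ?_
  have hlast : dirDeriv (m (Fin.last n)) w
      = (m (Fin.last n)).1 • dirDeriv (1, 0) w + (m (Fin.last n)).2 • dirDeriv (0, 1) w := by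
    funext q
    have : m (Fin.last n) = (m (Fin.last n)).1 • (1, 0) + (m (Fin.last n)).2 • (0, 1) := by
      ext <;> simp
    simp only [dirDeriv, Pi.add_apply, Pi.smul_apply]
    rw [this, map_add, map_smul, map_smul]
    simp
  have hsplit : iteratedFDeriv ℝ (n + 1) w p m
      = (m (Fin.last n)).1 * iteratedFDeriv ℝ n (dirDeriv (1, 0) w) p (Fin.init m)
        + (m (Fin.last n)).2 * iteratedFDeriv ℝ n (dirDeriv (0, 1) w) p (Fin.init m) := by
    have hcurry := (ContinuousLinearMap.apply ℝ ℝ (m (Fin.last n))).iteratedFDeriv_comp_left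
      (f := fderiv ℝ w) (x := p) (hw.fderiv_right (m := n) le_rfl).contDiffAt (i := n) le_rfl
    have : iteratedFDeriv ℝ (n + 1) w p m
        = iteratedFDeriv ℝ n (dirDeriv (m (Fin.last n)) w) p (Fin.init m) := by
      rw [iteratedFDeriv_succ_apply_right]
      exact (congrArg (· (Fin.init m)) hcurry).symm
    have hsmul (t : ℝ) (a : ℝ × ℝ) : ContDiffAt ℝ n (t • dirDeriv a w) p := (hdw a).const_smul t
    rw [this, hlast, iteratedFDeriv_add_apply (hsmul _ _) (hsmul _ _),
      iteratedFDeriv_const_smul_apply (hdw _), iteratedFDeriv_const_smul_apply (hdw _)]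
    rfl
  have hprod (T : ContinuousMultilinearMap ℝ (fun _ : Fin n => ℝ × ℝ) ℝ) {t : ℝ}
      (ht : |t| ≤ ‖m (Fin.last n)‖) : |t * T (Fin.init m)| ≤ ‖T‖ * ∏ j, ‖m j‖ := by
    rw [abs_mul, Fin.prod_univ_castSucc, mul_comm, ← mul_assoc]
    exact mul_le_mul (T.le_opNorm _) ht (abs_nonneg _) (by positivity)
  rw [hsplit, add_mul]
  exact (abs_add_le _ _).trans (add_le_add (hprod _ (norm_fst_le (m _)))
    (hprod _ (norm_snd_le (m _))))

theorem tendstoLocallyUniformly_iteratedFDeriv_zero (h : TendstoLocallyUniformly u v l) :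
    TendstoLocallyUniformly (fun i => iteratedFDeriv ℝ 0 (u i)) (iteratedFDeriv ℝ 0 v) l := by
  simp only [iteratedFDeriv_zero_eq_comp]
  exact (LinearIsometryEquiv.isometry _).uniformContinuous.comp_tendstoLocallyUniformly h

theorem tendstoLocallyUniformly_iteratedFDeriv_succ {n : ℕ}
    (hu : ∀ i, ContDiff ℝ (n + 1 : ℕ) (u i)) (hv : ContDiff ℝ (n + 1 : ℕ) v)
    (h : ∀ a, IsCoord a → TendstoLocallyUniformly
      (fun i => iteratedFDeriv ℝ n (dirDeriv a (u i))) (iteratedFDeriv ℝ n (dirDeriv a v)) l) :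
    TendstoLocallyUniformly (fun i => iteratedFDeriv ℝ (n + 1) (u i))
      (iteratedFDeriv ℝ (n + 1) v) l := by
  rw [Metric.tendstoLocallyUniformly_iff]
  intro ε hε x
  obtain ⟨s, hs, hxs⟩ := Metric.tendstoLocallyUniformly_iff.1 (h _ isCoord_fst) _ (half_pos hε) x
  obtain ⟨t, ht, hxt⟩ := Metric.tendstoLocallyUniformly_iff.1 (h _ isCoord_snd) _ (half_pos hε) x
  refine ⟨s ∩ t, inter_mem hs ht, ?_⟩
  filter_upwards [hxs, hxt] with i hsi hti p hp
  have hsub (a : ℝ × ℝ) : iteratedFDeriv ℝ n (dirDeriv a (v - u i)) p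
      = iteratedFDeriv ℝ n (dirDeriv a v) p - iteratedFDeriv ℝ n (dirDeriv a (u i)) p := by
    rw [dirDeriv_sub (hv.differentiable (by simp)) ((hu i).differentiable (by simp)),
      iteratedFDeriv_sub_apply (contDiff_dirDeriv hv le_rfl a).contDiffAt
        (contDiff_dirDeriv (hu i) le_rfl a).contDiffAt]
  calc dist (iteratedFDeriv ℝ (n + 1) v p) (iteratedFDeriv ℝ (n + 1) (u i) p)
      = ‖iteratedFDeriv ℝ (n + 1) (v - u i) p‖ := by
        rw [dist_eq_norm, iteratedFDeriv_sub_apply hv.contDiffAt (hu i).contDiffAt]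
    _ ≤ ‖iteratedFDeriv ℝ n (dirDeriv (1, 0) (v - u i)) p‖
          + ‖iteratedFDeriv ℝ n (dirDeriv (0, 1) (v - u i)) p‖ :=
        norm_iteratedFDeriv_succ_le (hv.sub (hu i)) p
    _ < ε / 2 + ε / 2 := by
        rw [hsub, hsub, ← dist_eq_norm, ← dist_eq_norm]
        exact add_lt_add (hsi p hp.1) (hti p hp.2)
    _ = ε := add_halves ε

end LocallyUniform

theorem exists_abs_comp_le {X : Type*} {w : X → ℝ} {k : ℝ → ℝ} (hk : Continuous k) {M : ℝ}
    (hM : ∀ x, |w x| ≤ M) : ∃ K, ∀ x, |k (w x)| ≤ K := by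
  obtain ⟨K, hK⟩ := (isCompact_Icc (a := -M) (b := M)).exists_bound_of_continuousOn hk.continuousOn
  exact ⟨K, fun x => hK _ (abs_le.1 (hM x))⟩

/-- `w` is an entire `C³` solution of `Δw + c ∂w/∂y = f(w)` in the plane. -/
structure IsEntireSolution (f : ℝ → ℝ) (c : ℝ) (w : ℝ × ℝ → ℝ) : Prop where
  contDiff : ContDiff ℝ 3 w
  eq : driftLaplacian c w = f ∘ w

namespace IsEntireSolution

variable {f : ℝ → ℝ} {c : ℝ} {w : ℝ × ℝ → ℝ}

theorem contDiff_two (hw : IsEntireSolution f c w) : ContDiff ℝ 2 w :=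
  hw.contDiff.of_le (by norm_num)

theorem differentiable (hw : IsEntireSolution f c w) : Differentiable ℝ w :=
  hw.contDiff.differentiable (by norm_num)

theorem contDiff_dirDeriv (hw : IsEntireSolution f c w) (a : ℝ × ℝ) :
    ContDiff ℝ 2 (dirDeriv a w) :=
  AllenCahn.contDiff_dirDeriv hw.contDiff le_rfl a

theorem differentiable_dirDeriv (hw : IsEntireSolution f c w) (a : ℝ × ℝ) :
    Differentiable ℝ (dirDeriv a w) :=
  (hw.contDiff_dirDeriv a).differentiable (by norm_num)

theorem comp_add_right (hw : IsEntireSolution f c w) (b : ℝ × ℝ) :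
    IsEntireSolution f c fun q => w (q + b) where
  contDiff := hw.contDiff.comp (contDiff_id.add contDiff_const)
  eq := by
    rw [driftLaplacian_comp_add_right, hw.eq]
    rfl

theorem driftLaplacian_dirDeriv (hw : IsEntireSolution f c w) (hf : Differentiable ℝ f)
    (a : ℝ × ℝ) : driftLaplacian c (dirDeriv a w) = (deriv f ∘ w) * dirDeriv a w := by
  rw [AllenCahn.driftLaplacian_dirDeriv c hw.contDiff, hw.eq, dirDeriv_comp hf hw.differentiable]

theorem differentiable_driftLaplacian_dirDeriv (hw : IsEntireSolution f c w)
    (hf : ContDiff ℝ 2 f) (a : ℝ × ℝ) : Differentiable ℝ (driftLaplacian c (dirDeriv a w)) := by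
  rw [hw.driftLaplacian_dirDeriv (hf.differentiable (by norm_num))]
  exact (hf.differentiable_deriv_two.comp hw.differentiable).mul (hw.differentiable_dirDeriv a)

theorem dirDeriv_driftLaplacian_dirDeriv (hw : IsEntireSolution f c w) (hf : ContDiff ℝ 2 f)
    (a b : ℝ × ℝ) :
    dirDeriv b (driftLaplacian c (dirDeriv a w))
      = (deriv f ∘ w) * dirDeriv b (dirDeriv a w)
        + (deriv (deriv f) ∘ w) * dirDeriv b w * dirDeriv a w := by
  rw [hw.driftLaplacian_dirDeriv (hf.differentiable (by norm_num)),
    dirDeriv_mul (hf.differentiable_deriv_two.comp hw.differentiable)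
      (hw.differentiable_dirDeriv a),
    dirDeriv_comp hf.differentiable_deriv_two hw.differentiable]
  ring

theorem exists_abs_dirDeriv_le (hw : IsEntireSolution f c w) (hf : Continuous f) {M : ℝ}
    (hM : ∀ p, |w p| ≤ M) : ∃ K, ∀ a, IsCoord a → ∀ p, |dirDeriv a w p| ≤ K := by
  obtain ⟨N, hN⟩ := exists_abs_comp_le hf hM
  exact ⟨_, fun a ha p => abs_dirDeriv_le hw.contDiff_two (fun q _ => hM q)
    (fun q _ => by rw [hw.eq]; exact hN q) ha⟩

theorem exists_abs_dirDeriv_dirDeriv_le (hw : IsEntireSolution f c w) (hf : ContDiff ℝ 1 f)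
    {M : ℝ} (hM : ∀ p, |w p| ≤ M) :
    ∃ K, ∀ a b, IsCoord a → IsCoord b → ∀ p, |dirDeriv b (dirDeriv a w) p| ≤ K := by
  obtain ⟨K, hK⟩ := hw.exists_abs_dirDeriv_le hf.continuous hM
  obtain ⟨N, hN⟩ := exists_abs_comp_le (hf.continuous_deriv le_rfl) hM
  refine ⟨_, fun a b ha hb p => abs_dirDeriv_le (c := c) (N := N * K) (hw.contDiff_dirDeriv a)
    (fun q _ => hK a ha q) (fun q _ => ?_) hb⟩
  rw [hw.driftLaplacian_dirDeriv (hf.differentiable one_ne_zero), Pi.mul_apply, abs_mul]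
  exact mul_le_mul (hN q) (hK a ha q) (abs_nonneg _) ((abs_nonneg _).trans (hN q))

section Convergence

variable {ι : Type*} {l : Filter ι} {u : ι → ℝ × ℝ → ℝ} {v : ℝ × ℝ → ℝ}

theorem tendstoLocallyUniformly_dirDeriv (hu : ∀ i, IsEntireSolution f c (u i))
    (hv : IsEntireSolution f c v) (hf : Continuous f) (h : TendstoLocallyUniformly u v l)
    {a : ℝ × ℝ} (ha : IsCoord a) :
    TendstoLocallyUniformly (fun i => dirDeriv a (u i)) (dirDeriv a v) l := by
  refine AllenCahn.tendstoLocallyUniformly_dirDeriv (c := c) (fun i => (hu i).contDiff_two)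
    hv.contDiff_two h ?_ ha
  simp only [(hu _).eq, hv.eq]
  exact tendstoLocallyUniformly_comp_left h hv.differentiable.continuous hf

theorem tendstoLocallyUniformly_dirDeriv_dirDeriv (hu : ∀ i, IsEntireSolution f c (u i))
    (hv : IsEntireSolution f c v) (hf : ContDiff ℝ 1 f) (h : TendstoLocallyUniformly u v l)
    {a b : ℝ × ℝ} (ha : IsCoord a) (hb : IsCoord b) :
    TendstoLocallyUniformly (fun i => dirDeriv b (dirDeriv a (u i))) (dirDeriv b (dirDeriv a v))
      l := by
  have hf' : Continuous (deriv f) := hf.continuous_deriv le_rfl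
  have hcv : Continuous v := hv.differentiable.continuous
  have hda := tendstoLocallyUniformly_dirDeriv hu hv hf.continuous h ha
  refine AllenCahn.tendstoLocallyUniformly_dirDeriv (c := c)
    (fun i => (hu i).contDiff_dirDeriv a) (hv.contDiff_dirDeriv a) hda ?_ hb
  simp only [(hu _).driftLaplacian_dirDeriv (hf.differentiable one_ne_zero),
    hv.driftLaplacian_dirDeriv (hf.differentiable one_ne_zero)]
  exact (tendstoLocallyUniformly_comp_left h hcv hf').mul₀ hda (hf'.comp hcv)
    (hv.differentiable_dirDeriv a).continuous

theorem tendstoLocallyUniformly_dirDeriv_dirDeriv_dirDeriv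
    (hu : ∀ i, IsEntireSolution f c (u i)) (hv : IsEntireSolution f c v) (hf : ContDiff ℝ 2 f)
    (h : TendstoLocallyUniformly u v l) {a b d : ℝ × ℝ} (ha : IsCoord a) (hb : IsCoord b)
    (hd : IsCoord d) :
    TendstoLocallyUniformly (fun i => dirDeriv d (dirDeriv b (dirDeriv a (u i))))
      (dirDeriv d (dirDeriv b (dirDeriv a v))) l := by
  have hf1 : ContDiff ℝ 1 f := hf.of_le (by norm_num)
  have hf' : Continuous (deriv f) := hf.continuous_deriv (by norm_num)
  have hf'' : Continuous (deriv (deriv f)) := hf.deriv'.continuous_deriv le_rfl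
  have hcv : Continuous v := hv.differentiable.continuous
  have hca : Continuous (dirDeriv a v) := (hv.differentiable_dirDeriv a).continuous
  have hcb : Continuous (dirDeriv b v) := (hv.differentiable_dirDeriv b).continuous
  have hcab : Continuous (dirDeriv b (dirDeriv a v)) :=
    (AllenCahn.differentiable_dirDeriv (hv.contDiff_dirDeriv a) le_rfl b).continuous
  have hda := tendstoLocallyUniformly_dirDeriv hu hv hf.continuous h ha
  have hdb := tendstoLocallyUniformly_dirDeriv hu hv hf.continuous h hb
  have hdab := tendstoLocallyUniformly_dirDeriv_dirDeriv hu hv hf1 h ha hb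
  refine AllenCahn.tendstoLocallyUniformly_dirDeriv_dirDeriv (c := c)
    (fun i => (hu i).contDiff_dirDeriv a) (hv.contDiff_dirDeriv a)
    (fun i => (hu i).differentiable_driftLaplacian_dirDeriv hf a)
    (hv.differentiable_driftLaplacian_dirDeriv hf a) hd hb hdab ?_
  simp only [(hu _).dirDeriv_driftLaplacian_dirDeriv hf, hv.dirDeriv_driftLaplacian_dirDeriv hf]
  exact ((tendstoLocallyUniformly_comp_left h hcv hf').mul₀ hdab (hf'.comp hcv) hcab).add
    (((tendstoLocallyUniformly_comp_left h hcv hf'').mul₀ hdb (hf''.comp hcv) hcb).mul₀ hda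
      ((hf''.comp hcv).mul hcb) hca)

theorem tendstoLocallyUniformly_iteratedFDeriv (hu : ∀ i, IsEntireSolution f c (u i))
    (hv : IsEntireSolution f c v) (hf : ContDiff ℝ 2 f) (h : TendstoLocallyUniformly u v l)
    {n : ℕ} (hn : n ≤ 3) :
    TendstoLocallyUniformly (fun i => iteratedFDeriv ℝ n (u i)) (iteratedFDeriv ℝ n v) l := by
  have hf1 : ContDiff ℝ 1 f := hf.of_le (by norm_num)
  have smooth₀ {w} (hw : IsEntireSolution f c w) {m : ℕ} (hm : m ≤ 3) : ContDiff ℝ m w :=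
    hw.contDiff.of_le (by exact_mod_cast hm)
  have smooth₁ {w} (hw : IsEntireSolution f c w) (a : ℝ × ℝ) {m : ℕ} (hm : m ≤ 2) :
      ContDiff ℝ m (dirDeriv a w) :=
    AllenCahn.contDiff_dirDeriv (n := 3) hw.contDiff (by omega) a
  have smooth₂ {w} (hw : IsEntireSolution f c w) (a b : ℝ × ℝ) :
      ContDiff ℝ (0 + 1 : ℕ) (dirDeriv b (dirDeriv a w)) :=
    AllenCahn.contDiff_dirDeriv (hw.contDiff_dirDeriv a) le_rfl b
  interval_cases n
  · exact tendstoLocallyUniformly_iteratedFDeriv_zero h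
  · exact tendstoLocallyUniformly_iteratedFDeriv_succ (fun i => smooth₀ (hu i) (by omega))
      (smooth₀ hv (by omega)) fun a ha => tendstoLocallyUniformly_iteratedFDeriv_zero
        (tendstoLocallyUniformly_dirDeriv hu hv hf.continuous h ha)
  · exact tendstoLocallyUniformly_iteratedFDeriv_succ (fun i => smooth₀ (hu i) (by omega))
      (smooth₀ hv (by omega)) fun a ha => tendstoLocallyUniformly_iteratedFDeriv_succ
        (fun i => smooth₁ (hu i) a (by omega)) (smooth₁ hv a (by omega)) fun b hb =>
          tendstoLocallyUniformly_iteratedFDeriv_zero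
            (tendstoLocallyUniformly_dirDeriv_dirDeriv hu hv hf1 h ha hb)
  · exact tendstoLocallyUniformly_iteratedFDeriv_succ (fun i => smooth₀ (hu i) (by omega))
      (smooth₀ hv (by omega)) fun a ha => tendstoLocallyUniformly_iteratedFDeriv_succ
        (fun i => smooth₁ (hu i) a (by omega)) (smooth₁ hv a (by omega)) fun b hb =>
          tendstoLocallyUniformly_iteratedFDeriv_succ (fun i => smooth₂ (hu i) a b)
            (smooth₂ hv a b) fun d hd => tendstoLocallyUniformly_iteratedFDeriv_zero
              (tendstoLocallyUniformly_dirDeriv_dirDeriv_dirDeriv hu hv hf h ha hb hd)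

end Convergence

end IsEntireSolution

/-! ### Decay of the vertical derivative of a monotone wave -/

section Plane

variable {w : ℝ × ℝ → ℝ}

theorem hasDerivAt_fst (hw : Differentiable ℝ w) (x y : ℝ) :
    HasDerivAt (fun t => w (t, y)) (dirDeriv (1, 0) w (x, y)) x := by
  simpa using hasDerivAt_along_line hw (0, y) (1, 0) x

theorem hasDerivAt_snd (hw : Differentiable ℝ w) (x y : ℝ) :
    HasDerivAt (fun t => w (x, t)) (dirDeriv (0, 1) w (x, y)) y := by
  simpa using hasDerivAt_along_line hw (x, 0) (0, 1) y

theorem lipschitzWith_of_abs_dirDeriv_le (hw : Differentiable ℝ w) {K : ℝ}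
    (hK : ∀ a, IsCoord a → ∀ p, |dirDeriv a w p| ≤ K) : LipschitzWith (K + K).toNNReal w := by
  have hK0 : 0 ≤ K := (abs_nonneg _).trans (hK _ isCoord_fst 0)
  refine lipschitzWith_of_nnnorm_fderiv_le hw fun p => ?_
  rw [← NNReal.coe_le_coe, coe_nnnorm, Real.coe_toNNReal _ (add_nonneg hK0 hK0)]
  refine (fderiv ℝ w p).opNorm_le_bound (by positivity) fun v => ?_
  have hsplit : fderiv ℝ w p v = v.1 * dirDeriv (1, 0) w p + v.2 * dirDeriv (0, 1) w p := by
    have : v = v.1 • (1, 0) + v.2 • (0, 1) := by ext <;> simp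
    nth_rw 1 [this]
    rw [map_add, map_smul, map_smul]
    rfl
  have hterm {t d : ℝ} (ht : |t| ≤ ‖v‖) (hd : |d| ≤ K) : |t * d| ≤ K * ‖v‖ := by
    rw [abs_mul, mul_comm]
    exact mul_le_mul hd ht (abs_nonneg _) hK0
  rw [hsplit, add_mul]
  exact (abs_add_le _ _).trans (add_le_add (hterm (norm_fst_le v) (hK _ isCoord_fst p))
    (hterm (norm_snd_le v) (hK _ isCoord_snd p)))

end Plane

section Decay

variable {E : Type*} [NormedAddCommGroup E] [ProperSpace E] {h : E → ℝ}

theorem tendsto_cocompact_of_integrable_sq [MeasurableSpace E] [BorelSpace E]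
    {μ : Measure E} [μ.IsAddHaarMeasure] (hh : UniformContinuous h)
    (hint : Integrable (fun x => h x ^ 2) μ) : Tendsto h (cocompact E) (nhds 0) := by
  rw [← Metric.cobounded_eq_cocompact, Metric.tendsto_nhds]
  intro ε hε
  obtain ⟨δ, hδ, hclose⟩ := Metric.uniformContinuous_iff.1 hh (ε / 2) (half_pos hε)
  have hball : 0 < μ.real (ball (0 : E) δ) := ENNReal.toReal_pos (measure_ball_pos μ 0 hδ).ne'
    measure_ball_lt_top.ne
  have hlim : Tendsto (fun n : ℕ => ∫ x in {x : E | (n : ℝ) ≤ ‖x‖}, h x ^ 2 ∂μ) atTop (nhds 0) := by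
    have hempty : ⋂ n : ℕ, {x : E | (n : ℝ) ≤ ‖x‖} = ∅ :=
      Set.eq_empty_of_forall_notMem fun x hx =>
        let ⟨n, hn⟩ := exists_nat_gt ‖x‖
        hn.not_ge (Set.mem_iInter.1 hx n)
    simpa [hempty] using tendsto_setIntegral_of_antitone
      (fun n : ℕ => (isClosed_le continuous_const continuous_norm).measurableSet)
      (fun m n hmn x hx => (Nat.cast_le (α := ℝ).2 hmn).trans hx) ⟨0, hint.integrableOn⟩
  obtain ⟨n, hn⟩ := (hlim.eventually_lt_const
    (show 0 < (ε / 2) ^ 2 * μ.real (ball (0 : E) δ) by positivity)).exists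
  filter_upwards [tendsto_norm_cobounded_atTop.eventually_ge_atTop (n + δ)] with x hx
  by_contra hfar
  rw [dist_zero_right, not_lt, Real.norm_eq_abs] at hfar
  have hlower : (ε / 2) ^ 2 * μ.real (ball x δ) ≤ ∫ y in ball x δ, h y ^ 2 ∂μ := by
    refine setIntegral_ge_of_const_le_real measurableSet_ball measure_ball_lt_top.ne
      (fun y hy => ?_) hint.integrableOn
    have := hclose hy
    rw [Real.dist_eq, abs_sub_comm] at this
    rw [← sq_abs (h y)]
    exact pow_le_pow_left₀ (by positivity)
      (by linarith [abs_sub_abs_le_abs_sub (h x) (h y)]) 2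
  have hupper : ∫ y in ball x δ, h y ^ 2 ∂μ ≤ ∫ y in {y : E | (n : ℝ) ≤ ‖y‖}, h y ^ 2 ∂μ := by
    refine setIntegral_mono_set hint.integrableOn
      (Eventually.of_forall fun y => sq_nonneg _) (LE.le.eventuallyLE fun y hy => ?_)
    have := norm_sub_norm_le x y
    rw [mem_ball, dist_comm, dist_eq_norm] at hy
    exact show (n : ℝ) ≤ ‖y‖ by linarith
  rw [Measure.addHaar_real_ball_center] at hlower
  linarith

theorem tendstoLocallyUniformly_comp_add_right {ι : Type*} {l : Filter ι} {z : ι → E} {b : ℝ}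
    (hh : Tendsto h (cocompact E) (nhds b)) (hz : Tendsto z l (cocompact E)) :
    TendstoLocallyUniformly (fun i x => h (x + z i)) (fun _ => b) l := by
  rw [tendstoLocallyUniformly_iff_forall_tendsto]
  intro x
  have hcobounded : Tendsto (fun q : ι × E => q.2 + z q.1) (l ×ˢ nhds x) (cocompact E) := by
    rw [← Metric.cobounded_eq_cocompact] at hz ⊢
    rw [← tendsto_norm_atTop_iff_cobounded] at hz ⊢
    have hnear : ∀ᶠ q : ι × E in l ×ˢ nhds x, ‖q.2‖ < ‖x‖ + 1 :=
      tendsto_snd.eventually ((continuous_norm.tendsto x).eventually (gt_mem_nhds (lt_add_one _)))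
    refine tendsto_atTop_mono' _ ?_
      (tendsto_atTop_add_const_right _ (-(‖x‖ + 1)) (hz.comp tendsto_fst))
    filter_upwards [hnear] with q hq
    have := norm_sub_le (q.2 + z q.1) q.2
    rw [add_sub_cancel_left] at this
    simp only [Function.comp_apply]
    linarith
  exact (tendsto_const_nhds.prodMk_nhds (hh.comp hcobounded)).mono_right (nhds_le_uniformity _)

end Decay

/-- A balanced double-well potential whose wells `±1` are allowed to be degenerate. -/
structure IsDoubleWell (F : ℝ → ℝ) : Prop where
  contDiff : ContDiff ℝ 3 F
  deriv_neg_one : deriv F (-1) = 0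
  deriv_one : deriv F 1 = 0
  deriv_pos : ∀ s ∈ Set.Ioo (-1 : ℝ) 0, 0 < deriv F s
  deriv_neg : ∀ s ∈ Set.Ioo (0 : ℝ) 1, deriv F s < 0
  neg_one : F (-1) = 0
  one : F 1 = 0

theorem IsDoubleWell.contDiff_deriv {F : ℝ → ℝ} (hF : IsDoubleWell F) : ContDiff ℝ 2 (deriv F) :=
  (contDiff_succ_iff_deriv (n := 2).1 hF.contDiff).2.2

/-- An entire solution that is nondecreasing in `y` and connects `-1` to `1` on vertical lines. -/
structure IsWave (f : ℝ → ℝ) (c : ℝ) (w : ℝ × ℝ → ℝ) : Prop extends IsEntireSolution f c w where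
  nonneg : ∀ p, 0 ≤ dirDeriv (0, 1) w p
  tendsto_atTop : ∀ x, Tendsto (fun y => w (x, y)) atTop (nhds 1)
  tendsto_atBot : ∀ x, Tendsto (fun y => w (x, y)) atBot (nhds (-1))

theorem isEntireSolution_const {f : ℝ → ℝ} {k : ℝ} (hk : f k = 0) (c : ℝ) :
    IsEntireSolution f c fun _ => k where
  contDiff := contDiff_const
  eq := by
    funext q
    simp [driftLaplacian, dirDeriv_const, hk]

/-- The vertical component of the field
`(∂ₓw ∂ᵧw, (∂ᵧw)² / 2 - (∂ₓw)² / 2 - F(w))`, whose divergence is `-c (∂ᵧw)²` on solutions. -/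
noncomputable def flux (F : ℝ → ℝ) (w : ℝ × ℝ → ℝ) : ℝ × ℝ → ℝ :=
  (2⁻¹ : ℝ) • (dirDeriv (0, 1) w * dirDeriv (0, 1) w - dirDeriv (1, 0) w * dirDeriv (1, 0) w)
    - F ∘ w

namespace IsEntireSolution

variable {F : ℝ → ℝ} {c : ℝ} {w : ℝ × ℝ → ℝ}

theorem tendstoLocallyUniformly_dirDeriv_zero {f : ℝ → ℝ} (hw : IsEntireSolution f c w)
    (hf : Continuous f) {ι : Type*} {l : Filter ι} {z : ι → ℝ × ℝ} {k : ℝ} (hk : f k = 0)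
    (h : TendstoLocallyUniformly (fun i p => w (p + z i)) (fun _ => k) l) {a : ℝ × ℝ}
    (ha : IsCoord a) :
    TendstoLocallyUniformly (fun i p => dirDeriv a w (p + z i)) (fun _ => 0) l := by
  simpa only [dirDeriv_comp_add_right, dirDeriv_const] using
    tendstoLocallyUniformly_dirDeriv (fun i => hw.comp_add_right (z i))
      (isEntireSolution_const hk c) hf h ha

theorem differentiable_flux (hw : IsEntireSolution (deriv F) c w) (hF : Differentiable ℝ F) :
    Differentiable ℝ (flux F w) :=
  have dw (a : ℝ × ℝ) : Differentiable ℝ (dirDeriv a w) := hw.differentiable_dirDeriv a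
  ((((dw _).mul (dw _)).sub ((dw _).mul (dw _))).const_smul _).sub (hF.comp hw.differentiable)

theorem divergence_flux (hw : IsEntireSolution (deriv F) c w) (hF : Differentiable ℝ F) :
    dirDeriv (1, 0) (dirDeriv (1, 0) w * dirDeriv (0, 1) w) + dirDeriv (0, 1) (flux F w)
      = -c • (dirDeriv (0, 1) w * dirDeriv (0, 1) w) := by
  have dw (a : ℝ × ℝ) : Differentiable ℝ (dirDeriv a w) := hw.differentiable_dirDeriv a
  have hsq (a : ℝ × ℝ) : Differentiable ℝ (dirDeriv a w * dirDeriv a w) := (dw a).mul (dw a)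
  rw [flux, dirDeriv_sub (((hsq _).sub (hsq _)).const_smul _) (hF.comp hw.differentiable),
    dirDeriv_const_smul, dirDeriv_sub (hsq _) (hsq _), dirDeriv_comp hF hw.differentiable, ← hw.eq]
  simp only [dirDeriv_mul (dw _) (dw _), dirDeriv_comm hw.contDiff_two (0, 1) (1, 0),
    driftLaplacian]
  funext p
  simp only [Pi.add_apply, Pi.sub_apply, Pi.mul_apply, Pi.smul_apply, smul_eq_mul]
  ring

theorem integral_dirDeriv_snd_sq (hw : IsEntireSolution (deriv F) c w) (hF : Differentiable ℝ F)
    {a b : ℝ × ℝ} (hab : a ≤ b) :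
    c * ∫ p in Set.Icc a b, dirDeriv (0, 1) w p ^ 2 =
      (∫ x in a.1..b.1, flux F w (x, a.2)) - (∫ x in a.1..b.1, flux F w (x, b.2))
        + (∫ y in a.2..b.2, dirDeriv (1, 0) w (a.1, y) * dirDeriv (0, 1) w (a.1, y))
        - ∫ y in a.2..b.2, dirDeriv (1, 0) w (b.1, y) * dirDeriv (0, 1) w (b.1, y) := by
  have dP : Differentiable ℝ (dirDeriv (1, 0) w * dirDeriv (0, 1) w) :=
    (hw.differentiable_dirDeriv _).mul (hw.differentiable_dirDeriv _)
  have dQ : Differentiable ℝ (flux F w) := hw.differentiable_flux hF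
  have hdiv (p : ℝ × ℝ) : fderiv ℝ (dirDeriv (1, 0) w * dirDeriv (0, 1) w) p (1, 0)
      + fderiv ℝ (flux F w) p (0, 1) = -c * dirDeriv (0, 1) w p ^ 2 := by
    simpa [sq, dirDeriv] using congrFun (hw.divergence_flux hF) p
  have := integral_divergence_prod_Icc_of_hasFDerivAt_of_le _ _ _ _ a b hab
    dP.continuous.continuousOn dQ.continuous.continuousOn
    (fun p _ => (dP p).hasFDerivAt) (fun p _ => (dQ p).hasFDerivAt) (by
      simp only [hdiv]
      exact (((hw.differentiable_dirDeriv _).continuous.pow 2).const_smul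
        (-c)).continuousOn.integrableOn_compact isCompact_Icc)
  simp only [hdiv, integral_const_mul, Pi.mul_apply] at this
  linarith

theorem tendstoLocallyUniformly_flux (hw : IsEntireSolution (deriv F) c w) (hF : ContDiff ℝ 1 F)
    {l : Filter ℝ} {k : ℝ} (hk : F k = 0) (hk' : deriv F k = 0)
    (h : TendstoLocallyUniformly (fun Y p => w (p + (0, Y))) (fun _ => k) l) :
    TendstoLocallyUniformly (fun Y p => flux F w (p + (0, Y))) (fun _ => 0) l := by
  have hderiv {a : ℝ × ℝ} (ha : IsCoord a) :=
    hw.tendstoLocallyUniformly_dirDeriv_zero (hF.continuous_deriv le_rfl) hk' h ha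
  have hsq {a : ℝ × ℝ} (ha : IsCoord a) :=
    (hderiv ha).mul₀ (hderiv ha) continuous_const continuous_const
  have := (tendstoLocallyUniformly_comp_left ((hsq isCoord_snd).sub (hsq isCoord_fst))
    (by fun_prop) (continuous_const_smul (2⁻¹ : ℝ))).sub
      (tendstoLocallyUniformly_comp_left h continuous_const hF.continuous)
  refine this.congr_right fun p => ?_
  simp [hk]

theorem tendsto_integral_flux (hw : IsEntireSolution (deriv F) c w) (hF : ContDiff ℝ 1 F)
    {l : Filter ℝ} [l.IsCountablyGenerated] {k : ℝ} (hk : F k = 0) (hk' : deriv F k = 0)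
    (h : TendstoLocallyUniformly (fun Y p => w (p + (0, Y))) (fun _ => k) l) (a b : ℝ) :
    Tendsto (fun Y => ∫ x in a..b, flux F w (x, Y)) l (nhds 0) := by
  have hsegment : IsCompact ((fun x : ℝ => ((x, 0) : ℝ × ℝ)) '' Set.uIcc a b) :=
    isCompact_uIcc.image (by fun_prop)
  have huniform := (tendstoLocallyUniformlyOn_iff_tendstoUniformlyOn_of_compact hsegment).1
    (hw.tendstoLocallyUniformly_flux hF hk hk' h).tendstoLocallyUniformlyOn
  have := (huniform.comp fun x : ℝ => ((x, 0) : ℝ × ℝ)).mono (Set.subset_preimage_image _ _)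
  have hcont (Y : ℝ) : Continuous fun x : ℝ => flux F w ((x, 0) + (0, Y)) :=
    (hw.differentiable_flux (hF.differentiable (by norm_num))).continuous.comp (by fun_prop)
  simpa using TendstoUniformlyOn.tendsto_intervalIntegral_of_continuousOn (μ := volume)
    (Eventually.of_forall fun Y => (hcont Y).continuousOn) this

end IsEntireSolution

namespace IsWave

section Basic

variable {f : ℝ → ℝ} {c : ℝ} {w : ℝ × ℝ → ℝ}

theorem monotone (hw : IsWave f c w) (x : ℝ) : Monotone fun y => w (x, y) :=
  monotone_of_deriv_nonneg (fun y => (hasDerivAt_snd hw.differentiable x y).differentiableAt)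
    fun y => (hasDerivAt_snd hw.differentiable x y).deriv ▸ hw.nonneg _

theorem abs_le_one (hw : IsWave f c w) (p : ℝ × ℝ) : |w p| ≤ 1 :=
  abs_le.2 ⟨(hw.monotone p.1).le_of_tendsto (hw.tendsto_atBot p.1) p.2,
    (hw.monotone p.1).ge_of_tendsto (hw.tendsto_atTop p.1) p.2⟩

theorem uniformContinuous_dirDeriv (hw : IsWave f c w) (hf : ContDiff ℝ 1 f) {a : ℝ × ℝ}
    (ha : IsCoord a) : UniformContinuous (dirDeriv a w) :=
  let ⟨_, hK⟩ := hw.exists_abs_dirDeriv_dirDeriv_le hf hw.abs_le_one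
  (lipschitzWith_of_abs_dirDeriv_le (hw.differentiable_dirDeriv a)
    fun b hb => hK a b ha hb).uniformContinuous

theorem tendstoLocallyUniformly_atTop (hw : IsWave f c w) :
    TendstoLocallyUniformly (fun (Y : ℝ) p => w (p + (0, Y))) (fun _ => 1) atTop :=
  Monotone.tendstoLocallyUniformly_of_forall_tendsto
    (fun Y => hw.contDiff.continuous.comp (by fun_prop))
    (fun Y Z hYZ p => hw.monotone _ (add_le_add_right hYZ p.2)) continuous_const
    fun p => by
      simpa [Function.comp_def, Prod.add_def] using
        (hw.tendsto_atTop p.1).comp (tendsto_atTop_add_const_left atTop p.2 tendsto_id)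

theorem tendstoLocallyUniformly_atBot (hw : IsWave f c w) :
    TendstoLocallyUniformly (fun (Y : ℝ) p => w (p + (0, Y))) (fun _ => -1) atBot := by
  have hlim (p : ℝ × ℝ) : Tendsto (fun Y : ℝ => w (p + (0, Y))) atBot (nhds (-1)) := by
    simpa [Function.comp_def, Prod.add_def] using
      (hw.tendsto_atBot p.1).comp (tendsto_atBot_add_const_left atBot p.2 tendsto_id)
  exact Antitone.tendstoLocallyUniformly_of_forall_tendsto (ι := ℝᵒᵈ)
    (fun Y => hw.contDiff.continuous.comp (by fun_prop))
    (fun Y Z hYZ p => hw.monotone _ (add_le_add_right hYZ p.2)) continuous_const hlim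

theorem abs_integral_dirDeriv_mul_le (hw : IsWave f c w) {K : ℝ}
    (hK : ∀ p, |dirDeriv (1, 0) w p| ≤ K) (x : ℝ) {a b : ℝ} (hab : a ≤ b) :
    |∫ y in a..b, dirDeriv (1, 0) w (x, y) * dirDeriv (0, 1) w (x, y)| ≤ K * 2 := by
  have hcont : Continuous fun y => dirDeriv (0, 1) w (x, y) :=
    (hw.differentiable_dirDeriv _).continuous.comp (by fun_prop)
  calc |∫ y in a..b, dirDeriv (1, 0) w (x, y) * dirDeriv (0, 1) w (x, y)|
      ≤ ∫ y in a..b, K * dirDeriv (0, 1) w (x, y) := by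
        rw [← Real.norm_eq_abs]
        refine intervalIntegral.norm_integral_le_of_norm_le hab
          (Eventually.of_forall fun y _ => ?_) ((hcont.const_smul K).intervalIntegrable _ _)
        rw [norm_mul, Real.norm_eq_abs, Real.norm_of_nonneg (hw.nonneg _)]
        exact mul_le_mul_of_nonneg_right (hK _) (hw.nonneg _)
    _ = K * (w (x, b) - w (x, a)) := by
        rw [intervalIntegral.integral_const_mul, intervalIntegral.integral_eq_sub_of_hasDerivAt
          (fun y _ => hasDerivAt_snd hw.differentiable x y) (hcont.intervalIntegrable _ _)]
    _ ≤ K * 2 := mul_le_mul_of_nonneg_left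
        (by linarith [(abs_le.1 (hw.abs_le_one (x, b))).2, (abs_le.1 (hw.abs_le_one (x, a))).1])
        ((abs_nonneg _).trans (hK 0))

end Basic

section Energy

variable {F : ℝ → ℝ} {c : ℝ} {w : ℝ × ℝ → ℝ}

theorem exists_abs_integral_flux_le_one (hw : IsWave (deriv F) c w) (hF : IsDoubleWell F)
    (a b R : ℝ) : ∃ Y ≤ -R, ∃ Z ≥ R, |∫ x in a..b, flux F w (x, Y)| ≤ 1 ∧
      |∫ x in a..b, flux F w (x, Z)| ≤ 1 := by
  have hsmall {l : Filter ℝ} (h : Tendsto (fun Y => ∫ x in a..b, flux F w (x, Y)) l (nhds 0)) :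
      ∀ᶠ Y in l, |∫ x in a..b, flux F w (x, Y)| ≤ 1 :=
    h.abs.eventually_le_const (by simp)
  have hF1 : ContDiff ℝ 1 F := hF.contDiff.of_le (by norm_num)
  obtain ⟨Y, hY, hYR⟩ := ((hsmall (hw.tendsto_integral_flux hF1 hF.neg_one
    hF.deriv_neg_one hw.tendstoLocallyUniformly_atBot a b)).and (eventually_le_atBot _)).exists
  obtain ⟨Z, hZ, hZR⟩ := ((hsmall (hw.tendsto_integral_flux hF1 hF.one
    hF.deriv_one hw.tendstoLocallyUniformly_atTop a b)).and (eventually_ge_atTop _)).exists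
  exact ⟨Y, hYR, Z, hZR, hY, hZ⟩

theorem integrable_dirDeriv_snd_sq (hw : IsWave (deriv F) c w) (hF : IsDoubleWell F)
    (hc : c ≠ 0) : Integrable fun p => dirDeriv (0, 1) w p ^ 2 := by
  have hF1 : ContDiff ℝ 2 (deriv F) := hF.contDiff_deriv
  obtain ⟨K, hK⟩ := hw.exists_abs_dirDeriv_le hF1.continuous hw.abs_le_one
  have hcont : Continuous fun p => dirDeriv (0, 1) w p ^ 2 :=
    (hw.differentiable_dirDeriv _).continuous.pow 2
  choose Y hYn Z hZn hY hZ using fun n : ℕ =>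
    hw.exists_abs_integral_flux_le_one hF (-n) n n
  have hcover : AECover (volume : Measure (ℝ × ℝ)) atTop
      fun n : ℕ => Set.Icc (-(n : ℝ), Y n) ((n : ℝ), Z n) := by
    refine ⟨Eventually.of_forall fun p => ?_, fun n => measurableSet_Icc⟩
    filter_upwards [tendsto_natCast_atTop_atTop.eventually_ge_atTop (|p.1| ⊔ |p.2|)] with n hn
    obtain ⟨hx, hy⟩ := And.imp abs_le.1 abs_le.1 (sup_le_iff.1 hn)
    exact ⟨⟨hx.1, (hYn n).trans hy.1⟩, ⟨hx.2, hy.2.trans (hZn n)⟩⟩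
  refine hcover.integrable_of_integral_norm_bounded (|c|⁻¹ * (4 * K + 2))
    (fun n => hcont.continuousOn.integrableOn_compact isCompact_Icc)
    (Eventually.of_forall fun n => ?_)
  have hYZ : Y n ≤ Z n := (hYn n).trans ((neg_le_self n.cast_nonneg).trans (hZn n))
  have hbox := hw.integral_dirDeriv_snd_sq (hF.contDiff.differentiable (by norm_num))
    (a := (-n, Y n)) (b := (n, Z n)) ⟨neg_le_self n.cast_nonneg, hYZ⟩
  have hside (x : ℝ) := abs_le.1 (hw.abs_integral_dirDeriv_mul_le (hK _ isCoord_fst) x hYZ)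
  have hYn1 := abs_le.1 (hY n)
  have hZn1 := abs_le.1 (hZ n)
  simp only [norm_pow, Real.norm_eq_abs, sq_abs]
  rw [le_inv_mul_iff₀ (abs_pos.2 hc), ← abs_of_nonneg (integral_nonneg fun p => sq_nonneg _),
    ← abs_mul, hbox, abs_le]
  constructor <;> linarith [(hside (-n)).1, (hside (-n)).2, (hside n).1, (hside n).2]

theorem tendsto_dirDeriv_snd_cocompact (hw : IsWave (deriv F) c w) (hF : IsDoubleWell F)
    (hc : c ≠ 0) : Tendsto (dirDeriv (0, 1) w) (cocompact (ℝ × ℝ)) (nhds 0) :=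
  tendsto_cocompact_of_integrable_sq
    (hw.uniformContinuous_dirDeriv (hF.contDiff_deriv.of_le (by norm_num)) isCoord_snd)
    (hw.integrable_dirDeriv_snd_sq hF hc)

end Energy

end IsWave

/-! ### Standing waves -/

section BoundedFunctions

variable {V : ℝ → ℝ} {M δ : ℝ}

theorem frequently_atTop_abs_deriv_lt (hV : Differentiable ℝ V) (hM : ∀ᶠ x in atTop, |V x| ≤ M)
    (hδ : 0 < δ) : ∃ᶠ x in atTop, |deriv V x| < δ := by
  obtain ⟨x₀, hx₀⟩ := eventually_atTop.1 hM
  refine frequently_atTop.2 fun a => ?_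
  set b := max a x₀
  have hb : x₀ ≤ b := le_max_right a x₀
  have hM0 : 0 ≤ M := (abs_nonneg _).trans (hx₀ b hb)
  set L := 2 * M / δ + 1
  have hL : 0 < L := by positivity
  obtain ⟨x, hx, hslope⟩ := exists_deriv_eq_slope V (lt_add_of_pos_right b hL)
    hV.continuous.continuousOn hV.differentiableOn
  refine ⟨x, (le_max_left a x₀).trans hx.1.le, ?_⟩
  rw [hslope, add_sub_cancel_left, abs_div, abs_of_pos hL, div_lt_iff₀ hL]
  calc |V (b + L) - V b| ≤ |V (b + L)| + |V b| := abs_sub _ _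
    _ ≤ M + M := add_le_add (hx₀ _ (by linarith)) (hx₀ _ hb)
    _ < M + M + δ := lt_add_of_pos_right _ hδ
    _ = δ * L := by simp only [L]; field_simp; ring

theorem frequently_atBot_abs_deriv_lt (hV : Differentiable ℝ V) (hM : ∀ᶠ x in atBot, |V x| ≤ M)
    (hδ : 0 < δ) : ∃ᶠ x in atBot, |deriv V x| < δ := by
  have h := frequently_atTop_abs_deriv_lt (hV.comp differentiable_neg)
    (tendsto_neg_atTop_atBot.eventually hM) hδ
  refine tendsto_neg_atTop_atBot.frequently (h.mono fun x hx => ?_)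
  rwa [Function.comp_def, deriv_comp_neg, abs_neg] at hx

theorem pos_of_forall_nonpos_le_abs_deriv (hV : Differentiable ℝ V) (hM : ∀ x, |V x| ≤ M)
    (hδ : 0 < δ) (hsteep : ∀ x, V x ≤ 0 → δ ≤ |deriv V x|) (x : ℝ) : 0 < V x := by
  by_contra! hx
  have hpos {y : ℝ} (hy : |deriv V y| < δ) : 0 < V y :=
    not_le.1 fun h => hy.not_ge (hsteep y h)
  obtain ⟨a, ha, hax⟩ := ((frequently_atBot_abs_deriv_lt hV (Eventually.of_forall hM)
    hδ).and_eventually (eventually_lt_atBot x)).exists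
  obtain ⟨b, hb, hxb⟩ := ((frequently_atTop_abs_deriv_lt hV (Eventually.of_forall hM)
    hδ).and_eventually (eventually_gt_atTop x)).exists
  obtain ⟨z, hz, hmin⟩ := isCompact_Icc.exists_isMinOn (Set.nonempty_Icc.2 (hax.trans hxb).le)
    hV.continuous.continuousOn
  have hz0 : V z ≤ 0 := (hmin ⟨hax.le, hxb.le⟩).trans hx
  have hne {y : ℝ} (hy : |deriv V y| < δ) : z ≠ y := fun h => (h ▸ hz0).not_gt (hpos hy)
  have hcrit : deriv V z = 0 := (hmin.isLocalMin (Icc_mem_nhds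
    (hz.1.lt_of_ne' (hne ha)) (hz.2.lt_of_ne (hne hb)))).deriv_eq_zero
  have := hsteep z hz0
  rw [hcrit, abs_zero] at this
  exact this.not_gt hδ

theorem deriv_eq_zero_of_antitone_deriv (hV : Differentiable ℝ V) (hM : ∀ x, |V x| ≤ M)
    (hanti : Antitone (deriv V)) (x : ℝ) : deriv V x = 0 := by
  rcases lt_trichotomy (deriv V x) 0 with h | h | h
  · obtain ⟨y, hy, hxy⟩ := ((frequently_atTop_abs_deriv_lt hV (Eventually.of_forall hM)
      (neg_pos.2 h)).and_eventually (eventually_ge_atTop x)).exists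
    linarith [hanti hxy, neg_abs_le (deriv V y)]
  · exact h
  · obtain ⟨y, hy, hyx⟩ := ((frequently_atBot_abs_deriv_lt hV (Eventually.of_forall hM)
      h).and_eventually (eventually_le_atBot x)).exists
    linarith [hanti hyx, le_abs_self (deriv V y)]

end BoundedFunctions

theorem eq_of_hasDerivAt_of_contDiff {E : Type*} [NormedAddCommGroup E] [NormedSpace ℝ E]
    {v : E → E} (hv : ContDiff ℝ 1 v) {α β : ℝ → E}
    (hα : ∀ t, HasDerivAt α (v (α t)) t) (hβ : ∀ t, HasDerivAt β (v (β t)) t) {t₀ : ℝ}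
    (h : α t₀ = β t₀) : α = β :=
  isMIntegralCurve_Ioo_eq_of_contMDiff_boundaryless (I := modelWithCornersSelf ℝ E)
    (contMDiff_vectorSpace_iff_contDiff.2 hv) (fun t => (hα t).hasFDerivAt.hasMFDerivAt)
    (fun t => (hβ t).hasFDerivAt.hasMFDerivAt) h

/-- `V` solves the ordinary differential equation `V'' = f(V)` on the whole line. -/
structure IsStandingWave (f V : ℝ → ℝ) : Prop where
  contDiff : ContDiff ℝ 3 V
  eq : ∀ x, deriv (deriv V) x = f (V x)

/-- The mechanical energy of a particle moving along `V` in the potential `-F`. -/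
noncomputable def energy (F V : ℝ → ℝ) (x : ℝ) : ℝ :=
  deriv V x ^ 2 / 2 - F (V x)

namespace IsStandingWave

variable {f F V W : ℝ → ℝ}

theorem of_hasDerivAt (hf : ContDiff ℝ 1 f) {V₁ : ℝ → ℝ} (hV : ∀ x, HasDerivAt V (V₁ x) x)
    (hV₁ : ∀ x, HasDerivAt V₁ (f (V x)) x) : IsStandingWave f V := by
  have h : deriv V = V₁ := funext fun x => (hV x).deriv
  have h₁ : deriv V₁ = f ∘ V := funext fun x => (hV₁ x).deriv
  have dV : Differentiable ℝ V := fun x => (hV x).differentiableAt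
  have dV₁ : Differentiable ℝ V₁ := fun x => (hV₁ x).differentiableAt
  have smoothV : ContDiff ℝ 1 V := contDiff_one_iff_deriv.2 ⟨dV, h ▸ dV₁.continuous⟩
  have smoothV₁ : ContDiff ℝ 2 V₁ := contDiff_succ_iff_deriv (n := 1).2
    ⟨dV₁, by simp, h₁ ▸ hf.comp smoothV⟩
  exact ⟨contDiff_succ_iff_deriv (n := 2).2 ⟨dV, by simp, h ▸ smoothV₁⟩, fun x => by
    rw [h, h₁, Function.comp_apply]⟩

theorem differentiable (hV : IsStandingWave f V) : Differentiable ℝ V :=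
  hV.contDiff.differentiable (by norm_num)

theorem differentiable_deriv (hV : IsStandingWave f V) : Differentiable ℝ (deriv V) :=
  (contDiff_succ_iff_deriv (n := 2).1 hV.contDiff).2.2.differentiable (by norm_num)

theorem hasDerivAt_deriv (hV : IsStandingWave f V) (x : ℝ) :
    HasDerivAt (deriv V) (f (V x)) x :=
  hV.eq x ▸ (hV.differentiable_deriv x).hasDerivAt

theorem const {k : ℝ} (hk : f k = 0) : IsStandingWave f fun _ => k :=
  ⟨contDiff_const, fun x => by simp [hk]⟩

theorem comp_neg (hV : IsStandingWave f V) : IsStandingWave f fun x => V (-x) :=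
  ⟨hV.contDiff.comp contDiff_neg, fun x => by
    rw [show deriv (fun x => V (-x)) = -fun x => deriv V (-x) from funext (deriv_comp_neg V),
      deriv.neg, deriv_comp_neg, neg_neg, hV.eq]⟩

theorem isEntireSolution (hV : IsStandingWave f V) (c : ℝ) :
    IsEntireSolution f c fun p => V p.1 where
  contDiff := hV.contDiff.comp contDiff_fst
  eq := by
    have hfst {h : ℝ → ℝ} (hh : Differentiable ℝ h) (a : ℝ × ℝ) :
        dirDeriv a (fun p => h p.1) = fun p => deriv h p.1 * a.1 := by
      funext p
      simpa [dirDeriv, fderiv_fst, Function.comp_def] using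
        congrFun (dirDeriv_comp hh differentiable_fst a) p
    funext p
    simp [driftLaplacian, hfst hV.differentiable, hfst hV.differentiable_deriv, dirDeriv_const,
      hV.eq]

theorem eq_of_initial_eq (hV : IsStandingWave f V) (hW : IsStandingWave f W)
    (hf : ContDiff ℝ 1 f) {x₀ : ℝ} (h₀ : V x₀ = W x₀) (h₁ : deriv V x₀ = deriv W x₀) : V = W := by
  have hcurve := eq_of_hasDerivAt_of_contDiff
    (contDiff_snd.prodMk (hf.comp contDiff_fst) : ContDiff ℝ 1 fun p : ℝ × ℝ => (p.2, f p.1))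
    (fun x => (hV.differentiable x).hasDerivAt.prodMk (hV.hasDerivAt_deriv x))
    (fun x => (hW.differentiable x).hasDerivAt.prodMk (hW.hasDerivAt_deriv x))
    (Prod.ext h₀ h₁)
  exact funext fun x => congrArg Prod.fst (congrFun hcurve x)

theorem energy_eq (hV : IsStandingWave (deriv F) V) (hF : Differentiable ℝ F) (x y : ℝ) :
    energy F V x = energy F V y := by
  have h (t : ℝ) : HasDerivAt (energy F V) 0 t :=
    ((((hV.hasDerivAt_deriv t).pow 2).div_const 2).sub
      ((hF (V t)).hasDerivAt.comp t (hV.differentiable t).hasDerivAt)).congr_deriv (by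
        push_cast; ring)
  exact is_const_of_deriv_eq_zero (fun t => (h t).differentiableAt) (fun t => (h t).deriv) x y

theorem energy_nonpos (hV : IsStandingWave (deriv F) V) (hF : Differentiable ℝ F) {M : ℝ}
    (hM : ∀ᶠ x in atTop, |V x| ≤ M) (hFV : ∀ ε > 0, ∀ᶠ x in atTop, -ε ≤ F (V x)) (x : ℝ) :
    energy F V x ≤ 0 := by
  refine le_of_forall_pos_le_add fun ε hε => ?_
  obtain ⟨y, hslope, hy⟩ := ((frequently_atTop_abs_deriv_lt hV.differentiable hM
    (Real.sqrt_pos.2 hε)).and_eventually (hFV (ε / 2) (half_pos hε))).exists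
  have hsq : deriv V y ^ 2 ≤ ε := by
    rw [← sq_abs]
    exact (Real.le_sqrt (abs_nonneg _) hε.le).1 hslope.le
  rw [hV.energy_eq hF x y, energy]
  linarith

theorem energy_eq_zero_of_tendsto (hV : IsStandingWave (deriv F) V) (hF : Differentiable ℝ F)
    {k : ℝ} (hk : F k = 0) (hlim : Tendsto V atTop (nhds k)) (x : ℝ) : energy F V x = 0 := by
  have hFV : Tendsto (fun y => F (V y)) atTop (nhds 0) := hk ▸ (hF.continuous.tendsto k).comp hlim
  refine le_antisymm (hV.energy_nonpos hF (hlim.abs.eventually_le_const (lt_add_one |k|))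
    (fun ε hε => hFV.eventually_const_le (neg_lt_zero.2 hε)) x) ?_
  have hlower (y : ℝ) : -F (V y) ≤ energy F V x := by
    rw [hV.energy_eq hF x y, energy]
    linarith [sq_nonneg (deriv V y)]
  simpa using le_of_tendsto' hFV.neg hlower

theorem eq_or_eq_comp_neg (hV : IsStandingWave (deriv F) V) (hW : IsStandingWave (deriv F) W)
    (hF : ContDiff ℝ 1 (deriv F)) (h₀ : V 0 = W 0) (hE : energy F V 0 = energy F W 0) :
    V = W ∨ V = fun x => W (-x) := by
  have hsq : deriv V 0 ^ 2 = deriv W 0 ^ 2 := by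
    rw [energy, energy, h₀] at hE
    linarith
  refine (sq_eq_sq_iff_eq_or_eq_neg.1 hsq).imp (hV.eq_of_initial_eq hW hF h₀) fun h₁ =>
    hV.eq_of_initial_eq hW.comp_neg hF (x₀ := 0) (by simpa using h₀) ?_
  rw [h₁, deriv_comp_neg, neg_zero]

end IsStandingWave

namespace IsDoubleWell

variable {F : ℝ → ℝ}

theorem differentiable (hF : IsDoubleWell F) : Differentiable ℝ F :=
  hF.contDiff.differentiable (by norm_num)

theorem monotoneOn (hF : IsDoubleWell F) : MonotoneOn F (Set.Icc (-1) 0) :=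
  monotoneOn_of_deriv_nonneg (convex_Icc _ _) hF.differentiable.continuous.continuousOn
    hF.differentiable.differentiableOn fun s hs =>
      (hF.deriv_pos s (by rwa [interior_Icc] at hs)).le

theorem antitoneOn (hF : IsDoubleWell F) : AntitoneOn F (Set.Icc 0 1) :=
  antitoneOn_of_deriv_nonpos (convex_Icc _ _) hF.differentiable.continuous.continuousOn
    hF.differentiable.differentiableOn fun s hs =>
      (hF.deriv_neg s (by rwa [interior_Icc] at hs)).le

theorem nonneg (hF : IsDoubleWell F) {s : ℝ} (hs : |s| ≤ 1) : 0 ≤ F s := by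
  obtain ⟨h₁, h₂⟩ := abs_le.1 hs
  rcases le_total s 0 with h | h
  · exact hF.neg_one ▸ hF.monotoneOn ⟨le_rfl, by norm_num⟩ ⟨h₁, h⟩ h₁
  · exact hF.one ▸ hF.antitoneOn ⟨h, h₂⟩ ⟨by norm_num, le_rfl⟩ h₂

end IsDoubleWell

namespace IsStandingWave

variable {F V W : ℝ → ℝ}

theorem eq_one_of_pos (hV : IsStandingWave (deriv F) V) (hF : IsDoubleWell F)
    (hpos : ∀ x, 0 < V x) (hle : ∀ x, V x ≤ 1) : V = fun _ => 1 := by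
  have hM (x : ℝ) : |V x| ≤ 1 := by
    rw [abs_of_pos (hpos x)]
    exact hle x
  have hconcave (x : ℝ) : deriv (deriv V) x ≤ 0 := by
    rw [hV.eq]
    rcases (hle x).lt_or_eq with h | h
    · exact (hF.deriv_neg _ ⟨hpos x, h⟩).le
    · rw [h, hF.deriv_one]
  have hflat : deriv V = fun _ => 0 := funext (deriv_eq_zero_of_antitone_deriv hV.differentiable hM
    (antitone_of_deriv_nonpos hV.differentiable_deriv hconcave))
  refine funext fun x => (hle x).eq_of_not_lt fun hlt => ?_
  have := hF.deriv_neg _ ⟨hpos x, hlt⟩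
  rw [← hV.eq, hflat, deriv_const] at this
  exact this.false

theorem energy_nonneg_of_energy_lt (hV : IsStandingWave (deriv F) V)
    (hW : IsStandingWave (deriv F) W) (hF : IsDoubleWell F) (hV₁ : ∀ x, -1 ≤ V x)
    (hW₁ : ∀ x, |W x| ≤ 1) (hVW : V ≤ W) {x₀ : ℝ} (hE : energy F V x₀ < energy F W x₀) :
    0 ≤ energy F W x₀ := by
  have hsteep (x : ℝ) (hx : W x ≤ 0) :
      √(2 * (energy F W x₀ - energy F V x₀)) ≤ |deriv W x| := by
    have hFVW : F (V x) ≤ F (W x) :=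
      hF.monotoneOn ⟨hV₁ x, (hVW x).trans hx⟩ ⟨(hV₁ x).trans (hVW x), hx⟩ (hVW x)
    rw [← Real.sqrt_sq_eq_abs, hV.energy_eq hF.differentiable x₀ x,
      hW.energy_eq hF.differentiable x₀ x, energy, energy]
    exact Real.sqrt_le_sqrt (by linarith [sq_nonneg (deriv V x)])
  have hpos := pos_of_forall_nonpos_le_abs_deriv hW.differentiable hW₁
    (Real.sqrt_pos.2 (by linarith)) hsteep
  simp [hW.eq_one_of_pos hF hpos fun x => (abs_le.1 (hW₁ x)).2, energy, hF.one]

end IsStandingWave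

/-! ### Limits of translates -/

section Compactness

theorem exists_subseq_tendstoLocallyUniformly {X : Type*} [PseudoMetricSpace X] [ProperSpace X]
    {K : NNReal} {M : ℝ} {h : ℕ → X → ℝ} (hK : ∀ m, LipschitzWith K (h m))
    (hM : ∀ m x, |h m x| ≤ M) :
    ∃ φ : ℕ → ℕ, StrictMono φ ∧ ∃ v, TendstoLocallyUniformly (fun m => h (φ m)) v atTop := by
  set S : Set C(X, ℝ) := {v | (∀ x, v x ∈ Set.Icc (-M) M) ∧ LipschitzWith K v}
  have himage : ContinuousMap.toFun '' S
      = Set.univ.pi (fun _ => Set.Icc (-M) M) ∩ {v | LipschitzWith K v} := by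
    ext v
    refine ⟨?_, fun ⟨hv, hKv⟩ => ⟨⟨v, hKv.continuous⟩, ⟨fun x => hv x trivial, hKv⟩, rfl⟩⟩
    rintro ⟨v, ⟨hv, hKv⟩, rfl⟩
    exact ⟨fun x _ => hv x, hKv⟩
  have hS : IsCompact S := by
    refine ArzelaAscoli.isCompact_of_equicontinuous S ?_ ?_
    · rw [himage]
      exact (isCompact_univ_pi fun _ => isCompact_Icc).inter_right
        (isClosed_setOfPred_lipschitzWith K)
    · exact (LipschitzWith.uniformEquicontinuous _ K fun v => v.2.2).equicontinuous
  obtain ⟨v, -, φ, hφ, hv⟩ := hS.tendsto_subseq (x := fun m => ⟨h m, (hK m).continuous⟩)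
    fun m => ⟨fun x => abs_le.1 (hM m x), hK m⟩
  exact ⟨φ, hφ, v, ContinuousMap.tendsto_iff_tendstoLocallyUniformly.1 hv⟩

variable {ι : Type*} {l : Filter ι}

theorem tendstoLocallyUniformly_comp_index {X β κ : Type*} [TopologicalSpace X] [UniformSpace β]
    {u : ι → X → β} {v : X → β} {l' : Filter κ} {φ : κ → ι} (h : TendstoLocallyUniformly u v l)
    (hφ : Tendsto φ l' l) : TendstoLocallyUniformly (fun k => u (φ k)) v l' := fun s hs x =>
  let ⟨t, ht, hu⟩ := h s hs x
  ⟨t, ht, hφ.eventually hu⟩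

theorem tendsto_at_of_tendstoLocallyUniformly {X β : Type*} [TopologicalSpace X] [UniformSpace β]
    {u : ι → X → β} {v : X → β} (h : TendstoLocallyUniformly u v l) (x : X) :
    Tendsto (fun i => u i x) l (nhds (v x)) :=
  (tendstoLocallyUniformlyOn_univ.2 h).tendsto_at (Set.mem_univ x)

theorem hasDerivAt_along_line_of_tendstoLocallyUniformly {E : Type*} [NormedAddCommGroup E]
    [NormedSpace ℝ E] [l.NeBot] {u : ι → E → ℝ} {v v' : E → ℝ} {a : E}
    (hu : ∀ i, Differentiable ℝ (u i)) (h : TendstoLocallyUniformly u v l)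
    (h' : TendstoLocallyUniformly (fun i => dirDeriv a (u i)) v' l) (p : E) (t : ℝ) :
    HasDerivAt (fun s => v (p + s • a)) (v' (p + t • a)) t :=
  hasDerivAt_of_tendstoLocallyUniformlyOn isOpen_univ
    (tendstoLocallyUniformlyOn_univ.2 (h'.comp (fun s : ℝ => p + s • a) (by fun_prop)))
    (Eventually.of_forall fun i s _ => hasDerivAt_along_line (hu i) p a s)
    (fun s _ => tendsto_at_of_tendstoLocallyUniformly h (p + s • a)) (Set.mem_univ t)

end Compactness

section Limits

variable {ι : Type*} {l : Filter ι} [l.NeBot] {f : ℝ → ℝ} {c : ℝ} {u : ι → ℝ × ℝ → ℝ}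
  {v : ℝ × ℝ → ℝ}

theorem eq_comp_fst_of_tendstoLocallyUniformly (hu : ∀ i, Differentiable ℝ (u i))
    (h : TendstoLocallyUniformly u v l)
    (hy : TendstoLocallyUniformly (fun i => dirDeriv (0, 1) (u i)) (fun _ => 0) l) :
    v = fun p => v (p.1, 0) := by
  funext ⟨x, y⟩
  have hline (t : ℝ) : HasDerivAt (fun s => v (x, s)) 0 t := by
    simpa using hasDerivAt_along_line_of_tendstoLocallyUniformly hu h hy (x, 0) t
  exact is_const_of_deriv_eq_zero (fun t => (hline t).differentiableAt) (fun t => (hline t).deriv)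
    y 0

theorem IsEntireSolution.tendstoLocallyUniformly_dirDeriv_fst_fst
    (hu : ∀ i, IsEntireSolution f c (u i)) (hf : ContDiff ℝ 1 f)
    (h : TendstoLocallyUniformly u v l)
    (hy : TendstoLocallyUniformly (fun i => dirDeriv (0, 1) (u i)) (fun _ => 0) l) :
    TendstoLocallyUniformly (fun i => dirDeriv (1, 0) (dirDeriv (1, 0) (u i))) (f ∘ v) l := by
  have hv : Continuous v := h.continuous
    (Frequently.of_forall fun i => (hu i).differentiable.continuous)
  have hf' : Continuous (deriv f) := hf.continuous_deriv le_rfl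
  have hL : TendstoLocallyUniformly (fun i => driftLaplacian c (dirDeriv (0, 1) (u i)))
      (driftLaplacian c fun _ => 0) l := by
    have hzero : (driftLaplacian c fun _ => 0) = (deriv f ∘ v) * fun _ => 0 := by
      funext p
      simp [driftLaplacian, dirDeriv_const]
    simp only [(hu _).driftLaplacian_dirDeriv (hf.differentiable one_ne_zero), hzero]
    exact (tendstoLocallyUniformly_comp_left h hv hf').mul₀ hy (hf'.comp hv) continuous_const
  have hyy := AllenCahn.tendstoLocallyUniformly_dirDeriv (fun i => (hu i).contDiff_dirDeriv (0, 1))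
    contDiff_const hy hL isCoord_snd
  rw [dirDeriv_const] at hyy
  have hxx (i : ι) : dirDeriv (1, 0) (dirDeriv (1, 0) (u i))
      = f ∘ u i + (-(dirDeriv (0, 1) (dirDeriv (0, 1) (u i))) + -c • dirDeriv (0, 1) (u i)) := by
    rw [← (hu i).eq, driftLaplacian]
    module
  have hlim := (tendstoLocallyUniformly_comp_left h hv hf.continuous).add
    ((tendstoLocallyUniformly_comp_left hyy continuous_const continuous_neg).add
      (tendstoLocallyUniformly_comp_left hy continuous_const (continuous_const_smul (-c))))
  convert hlim using 1
  · exact funext hxx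
  · funext p
    simp

theorem IsStandingWave.of_tendstoLocallyUniformly (hu : ∀ i, IsEntireSolution f c (u i))
    (hf : ContDiff ℝ 1 f) (h : TendstoLocallyUniformly u v l) {v₁ : ℝ × ℝ → ℝ}
    (hx : TendstoLocallyUniformly (fun i => dirDeriv (1, 0) (u i)) v₁ l)
    (hy : TendstoLocallyUniformly (fun i => dirDeriv (0, 1) (u i)) (fun _ => 0) l) :
    IsStandingWave f fun x => v (x, 0) := by
  have hv := hasDerivAt_along_line_of_tendstoLocallyUniformly (fun i => (hu i).differentiable) h hx
  have hv₁ := hasDerivAt_along_line_of_tendstoLocallyUniformly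
    (fun i => (hu i).differentiable_dirDeriv _) hx
    (IsEntireSolution.tendstoLocallyUniformly_dirDeriv_fst_fst hu hf h hy)
  exact .of_hasDerivAt hf (fun x => by simpa using hv 0 x) fun x => by simpa using hv₁ 0 x

end Limits

theorem tendsto_cocompact_of_abs_fst {z : ℕ → ℝ × ℝ}
    (hz : Tendsto (fun m => |(z m).1|) atTop atTop) : Tendsto z atTop (cocompact (ℝ × ℝ)) := by
  rw [← Metric.cobounded_eq_cocompact, ← tendsto_norm_atTop_iff_cobounded]
  exact tendsto_atTop_mono (fun m => norm_fst_le (z m)) hz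

theorem IsEntireSolution.energy_slice {F : ℝ → ℝ} {c : ℝ} {w : ℝ × ℝ → ℝ}
    (hw : IsEntireSolution (deriv F) c w) (p : ℝ × ℝ) :
    energy F (fun x => w (x, p.2)) p.1 = dirDeriv (1, 0) w p ^ 2 / 2 - F (w p) := by
  rw [energy, (hasDerivAt_fst hw.differentiable p.1 p.2).deriv]

theorem IsEntireSolution.tendsto_energy {F : ℝ → ℝ} {c : ℝ} {w : ℝ × ℝ → ℝ}
    (hw : IsEntireSolution (deriv F) c w) (hF : ContDiff ℝ 1 F) {ι : Type*} {l : Filter ι}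
    {z : ι → ℝ × ℝ} {V : ℝ → ℝ} (hV : IsStandingWave (deriv F) V)
    (h : TendstoLocallyUniformly (fun i p => w (p + z i)) (fun p => V p.1) l) (p : ℝ × ℝ) :
    Tendsto (fun i => energy F (fun x => w (x, (p + z i).2)) (p + z i).1) l
      (nhds (energy F V p.1)) := by
  have hderiv := tendsto_at_of_tendstoLocallyUniformly
    (tendstoLocallyUniformly_dirDeriv (fun i => hw.comp_add_right (z i))
      (hV.isEntireSolution c) (hF.continuous_deriv le_rfl) h isCoord_fst) p
  rw [← (hasDerivAt_fst (hV.isEntireSolution c).differentiable p.1 p.2).deriv] at hderiv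
  simp only [dirDeriv_comp_add_right] at hderiv
  simp only [hw.energy_slice]
  exact ((hderiv.pow 2).div_const 2).sub
    ((hF.continuous.tendsto _).comp (tendsto_at_of_tendstoLocallyUniformly h p))

namespace IsWave

variable {F : ℝ → ℝ} {c : ℝ} {w : ℝ × ℝ → ℝ}

theorem exists_subseq_isStandingWave (hw : IsWave (deriv F) c w) (hF : IsDoubleWell F)
    (hc : c ≠ 0) {z : ℕ → ℝ × ℝ} (hz : Tendsto z atTop (cocompact (ℝ × ℝ))) :
    ∃ φ : ℕ → ℕ, StrictMono φ ∧ ∃ V, IsStandingWave (deriv F) V ∧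
      TendstoLocallyUniformly (fun m p => w (p + z (φ m))) (fun p => V p.1) atTop := by
  have hf : ContDiff ℝ 1 (deriv F) := hF.contDiff_deriv.of_le (by norm_num)
  obtain ⟨K, hK⟩ := hw.exists_abs_dirDeriv_le hf.continuous hw.abs_le_one
  obtain ⟨L, hL⟩ := hw.exists_abs_dirDeriv_dirDeriv_le hf hw.abs_le_one
  have htranslate {h : ℝ × ℝ → ℝ} {A : NNReal} (hh : LipschitzWith A h) (b : ℝ × ℝ) :
      LipschitzWith A fun p => h (p + b) := by
    simpa [Function.comp_def] using hh.comp (isometry_add_right b).lipschitz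
  obtain ⟨φ, hφ, v, hv⟩ := exists_subseq_tendstoLocallyUniformly
    (fun m => htranslate (lipschitzWith_of_abs_dirDeriv_le hw.differentiable hK) (z m))
    fun m p => hw.abs_le_one (p + z m)
  obtain ⟨ψ, hψ, v₁, hv₁⟩ := exists_subseq_tendstoLocallyUniformly
    (fun m => htranslate (lipschitzWith_of_abs_dirDeriv_le (hw.differentiable_dirDeriv (1, 0))
      fun b hb => hL _ b isCoord_fst hb) (z (φ m))) fun m p => hK _ isCoord_fst (p + z (φ m))
  have hsol (m : ℕ) := hw.comp_add_right (z (φ (ψ m)))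
  have hlim := tendstoLocallyUniformly_comp_index hv hψ.tendsto_atTop
  have hx : TendstoLocallyUniformly
      (fun m => dirDeriv (1, 0) fun p => w (p + z (φ (ψ m)))) v₁ atTop := by
    simpa only [dirDeriv_comp_add_right] using hv₁
  have hy : TendstoLocallyUniformly
      (fun m => dirDeriv (0, 1) fun p => w (p + z (φ (ψ m)))) (fun _ => 0) atTop := by
    simp only [dirDeriv_comp_add_right]
    exact tendstoLocallyUniformly_comp_add_right
      (hw.tendsto_dirDeriv_snd_cocompact hF hc) (hz.comp (hφ.comp hψ).tendsto_atTop)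
  refine ⟨φ ∘ ψ, hφ.comp hψ, _, .of_tendstoLocallyUniformly hsol hf hlim hx hy, ?_⟩
  rwa [← eq_comp_fst_of_tendstoLocallyUniformly (fun m => (hsol m).differentiable) hlim hy]

theorem tendsto_energy_atTop (hw : IsWave (deriv F) c w) (hF : IsDoubleWell F) (x : ℝ) :
    Tendsto (fun y => energy F (fun t => w (t, y)) x) atTop (nhds 0) := by
  simpa [energy, hF.one] using hw.tendsto_energy (hF.contDiff.of_le (by norm_num))
    (.const hF.deriv_one) hw.tendstoLocallyUniformly_atTop (x, 0)

theorem exists_ge_energy_eq_max (hw : IsWave (deriv F) c w) (hF : IsDoubleWell F) {e : ℝ}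
    (he : e < 0) (x y : ℝ) :
    ∃ z ≥ y, energy F (fun t => w (t, z)) x = max e (energy F (fun t => w (t, y)) x) := by
  rcases le_total e (energy F (fun t => w (t, y)) x) with h | h
  · exact ⟨y, le_rfl, (max_eq_right h).symm⟩
  · obtain ⟨Y, hY, hyY⟩ := (((hw.tendsto_energy_atTop hF x).eventually_const_lt he).and
      (eventually_ge_atTop y)).exists
    have hcont : Continuous fun z => energy F (fun t => w (t, z)) x := by
      simp only [fun z => hw.energy_slice (x, z)]
      exact ((((hw.differentiable_dirDeriv _).continuous.pow 2).div_const 2).sub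
        (hF.differentiable.continuous.comp hw.differentiable.continuous)).comp
          (Continuous.prodMk_right x)
    obtain ⟨z, hz, hze⟩ := intermediate_value_Icc hyY hcont.continuousOn ⟨h, hY.le⟩
    exact ⟨z, hz.1, hze.trans (max_eq_left h).symm⟩

theorem abs_le_one_of_tendstoLocallyUniformly (hw : IsWave (deriv F) c w) {z : ℕ → ℝ × ℝ}
    {V : ℝ → ℝ} (h : TendstoLocallyUniformly (fun m p => w (p + z m)) (fun p => V p.1) atTop)
    (x : ℝ) : |V x| ≤ 1 :=
  le_of_tendsto' (tendsto_at_of_tendstoLocallyUniformly h (x, 0)).abs fun _ => hw.abs_le_one _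

theorem exists_ge_isStandingWave_energy_eq_max (hw : IsWave (deriv F) c w) (hF : IsDoubleWell F)
    (hc : c ≠ 0) {z : ℕ → ℝ × ℝ} (hz : Tendsto (fun m => |(z m).1|) atTop atTop) {V : ℝ → ℝ}
    (hV : IsStandingWave (deriv F) V)
    (h : TendstoLocallyUniformly (fun m p => w (p + z m)) (fun p => V p.1) atTop) {e : ℝ}
    (he : e < 0) :
    ∃ W ≥ V, IsStandingWave (deriv F) W ∧ (∀ x, |W x| ≤ 1) ∧
      energy F W 0 = max e (energy F V 0) := by
  have hF1 : ContDiff ℝ 1 F := hF.contDiff.of_le (by norm_num)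
  choose y hy hye using fun m => hw.exists_ge_energy_eq_max hF he (z m).1 (z m).2
  obtain ⟨φ, hφ, W, hW, hlim⟩ := hw.exists_subseq_isStandingWave hF hc
    (tendsto_cocompact_of_abs_fst (z := fun m => ((z m).1, y m)) hz)
  have hφV := tendstoLocallyUniformly_comp_index h hφ.tendsto_atTop
  refine ⟨W, fun x => ?_, hW, hw.abs_le_one_of_tendstoLocallyUniformly hlim, ?_⟩
  · exact le_of_tendsto_of_tendsto' (tendsto_at_of_tendstoLocallyUniformly hφV (x, 0))
      (tendsto_at_of_tendstoLocallyUniformly hlim (x, 0))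
      fun m => hw.monotone _ (add_le_add_right (hy (φ m)) 0)
  · have hEV := (tendsto_const_nhds (x := e)).max (hw.tendsto_energy hF1 hV hφV 0)
    have hEW := hw.tendsto_energy hF1 hW hlim 0
    simp only [zero_add, hye] at hEV hEW
    exact tendsto_nhds_unique hEW hEV

theorem energy_eq_zero_of_tendstoLocallyUniformly (hw : IsWave (deriv F) c w)
    (hF : IsDoubleWell F) (hc : c ≠ 0) {z : ℕ → ℝ × ℝ}
    (hz : Tendsto (fun m => |(z m).1|) atTop atTop) {V : ℝ → ℝ} (hV : IsStandingWave (deriv F) V)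
    (h : TendstoLocallyUniformly (fun m p => w (p + z m)) (fun p => V p.1) atTop) :
    energy F V 0 = 0 := by
  have hV₁ := hw.abs_le_one_of_tendstoLocallyUniformly h
  have hle : energy F V 0 ≤ 0 := hV.energy_nonpos hF.differentiable (Eventually.of_forall hV₁)
    (fun ε hε => Eventually.of_forall fun x => (neg_lt_zero.2 hε).le.trans (hF.nonneg (hV₁ x))) 0
  refine hle.eq_of_not_lt fun hneg => ?_
  obtain ⟨W, hVW, hW, hW₁, hE⟩ := hw.exists_ge_isStandingWave_energy_eq_max hF hc hz hV h
    (e := energy F V 0 / 2) (by linarith)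
  rw [max_eq_left (by linarith)] at hE
  have := hV.energy_nonneg_of_energy_lt hW hF (fun x => (abs_le.1 (hV₁ x)).1) hW₁ hVW (x₀ := 0)
    (by linarith)
  linarith

end IsWave

theorem _root_.BalancedDoubleWell.isDoubleWell {F : ℝ → ℝ} (hF : BalancedDoubleWell F) :
    IsDoubleWell F :=
  let ⟨hsmooth, hneg₁, h₁, _, _, hpos, hneg, hF_neg₁, hF₁⟩ := hF
  ⟨hsmooth, hneg₁, h₁, hpos, hneg, hF_neg₁, hF₁⟩

theorem _root_.IsTravelingWave.isWave {F : ℝ → ℝ} {c : ℝ} {u : ℝ → ℝ → ℝ}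
    (hu : IsTravelingWave F c u) : IsWave (deriv F) c fun p => u p.1 p.2 := by
  obtain ⟨⟨hC, heq, -, hpos⟩, htop, hbot⟩ := hu
  set w : ℝ × ℝ → ℝ := fun p => u p.1 p.2
  have dw : Differentiable ℝ w := hC.differentiable (by norm_num)
  have ddw (a : ℝ × ℝ) : Differentiable ℝ (dirDeriv a w) :=
    differentiable_dirDeriv hC (by norm_num) a
  have hx (x y : ℝ) : pdx u x y = dirDeriv (1, 0) w (x, y) := (hasDerivAt_fst dw x y).deriv
  have hy (x y : ℝ) : pdy u x y = dirDeriv (0, 1) w (x, y) := (hasDerivAt_snd dw x y).deriv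
  have hxx (x y : ℝ) : pdxx u x y = dirDeriv (1, 0) (dirDeriv (1, 0) w) (x, y) := by
    simp only [pdxx, hx, (hasDerivAt_fst (ddw _) x y).deriv]
  have hyy (x y : ℝ) : pdyy u x y = dirDeriv (0, 1) (dirDeriv (0, 1) w) (x, y) := by
    simp only [pdyy, hy, (hasDerivAt_snd (ddw _) x y).deriv]
  refine ⟨⟨hC, funext fun p => ?_⟩, fun p => (hy p.1 p.2 ▸ hpos p.1 p.2).le, htop, hbot⟩
  rw [Function.comp_apply, ← heq, hxx, hyy, hy]
  rfl

theorem IsWave.exists_subseq_tendstoLocallyUniformly_profile {F : ℝ → ℝ} {c : ℝ} {w : ℝ × ℝ → ℝ}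
    (hw : IsWave (deriv F) c w) (hF : IsDoubleWell F) (hc : c ≠ 0) {g : ℝ → ℝ}
    (hg : IsStandingWave (deriv F) g) (hg₁ : Tendsto g atTop (nhds 1)) (hg₀ : g 0 = 0)
    {z : ℕ → ℝ × ℝ} (hz : Tendsto (fun m => |(z m).1|) atTop atTop) (hwz : ∀ m, w (z m) = 0) :
    ∃ φ : ℕ → ℕ, StrictMono φ ∧ ∃ ε : ℝ, (ε = 1 ∨ ε = -1) ∧
      TendstoLocallyUniformly (fun k p => w (p + z (φ k))) (fun p => g (ε * p.1)) atTop := by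
  obtain ⟨φ, hφ, V, hV, h⟩ := hw.exists_subseq_isStandingWave hF hc
    (tendsto_cocompact_of_abs_fst hz)
  have hV₀ : V 0 = 0 := tendsto_nhds_unique
    (by simpa using tendsto_at_of_tendstoLocallyUniformly h 0)
    ((tendsto_const_nhds (x := (0 : ℝ))).congr fun k => (hwz (φ k)).symm)
  have hEV : energy F V 0 = 0 :=
    hw.energy_eq_zero_of_tendstoLocallyUniformly hF hc (hz.comp hφ.tendsto_atTop) hV h
  have hEg : energy F g 0 = 0 := hg.energy_eq_zero_of_tendsto hF.differentiable hF.one hg₁ 0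
  refine ⟨φ, hφ, ?_⟩
  rcases hV.eq_or_eq_comp_neg hg (hF.contDiff_deriv.of_le (by norm_num)) (hV₀.trans hg₀.symm)
    (hEV.trans hEg.symm) with rfl | rfl
  · exact ⟨1, .inl rfl, by simpa using h⟩
  · exact ⟨-1, .inr rfl, by simpa using h⟩

end AllenCahn

theorem translates_converge_to_profile_general {F : ℝ → ℝ} (hF : AllenCahn.IsDoubleWell F) {c : ℝ}
    (hc : c ≠ 0) {u : ℝ → ℝ → ℝ} (hu : AllenCahn.IsWave (deriv F) c fun p => u p.1 p.2)
    {g : ℝ → ℝ} (hg : AllenCahn.IsStandingWave (deriv F) g) (hg₁ : Tendsto g atTop (nhds 1))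
    (hg₀ : g 0 = 0) {γ : ℝ → ℝ} (hγ : ∀ x, u x (γ x) = 0) {s : ℕ → ℝ}
    (hs : Tendsto (fun m => |s m|) atTop atTop) :
    ∃ φ : ℕ → ℕ, StrictMono φ ∧ ∃ ε : ℝ, (ε = 1 ∨ ε = -1) ∧
      ∀ i : ℕ, i ≤ 3 →
        TendstoLocallyUniformly
          (fun k (p : ℝ × ℝ) =>
            iteratedFDeriv ℝ i
              (fun q : ℝ × ℝ => u (s (φ k) + q.1) (γ (s (φ k)) + q.2)) p)
          (iteratedFDeriv ℝ i (fun q : ℝ × ℝ => g (ε * q.1))) atTop := by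
  obtain ⟨φ, hφ, ε, hε, h⟩ := hu.exists_subseq_tendstoLocallyUniformly_profile hF hc hg hg₁ hg₀
    (z := fun m => (s m, γ (s m))) hs fun m => hγ (s m)
  have hgε : AllenCahn.IsStandingWave (deriv F) fun x => g (ε * x) := by
    rcases hε with rfl | rfl
    · simpa using hg
    · simpa using hg.comp_neg
  refine ⟨φ, hφ, ε, hε, fun i hi => ?_⟩
  simpa only [Prod.fst_add, Prod.snd_add, add_comm] using
    AllenCahn.IsEntireSolution.tendstoLocallyUniformly_iteratedFDeriv
      (fun k => hu.comp_add_right (s (φ k), γ (s (φ k)))) (hgε.isEntireSolution c)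
      hF.contDiff_deriv h hi

/-- Along any sequence going to infinity, translates of `u` along the zero
level curve converge (up to a subsequence), in `C³` on compact sets, to a
one-dimensional profile `g(±x)` (Lemma 2.3). -/
theorem translates_converge_to_profile
    (F : ℝ → ℝ) (hF : BalancedDoubleWell F) (c : ℝ) (hc : 0 < c)
    (u : ℝ → ℝ → ℝ) (hu : IsTravelingWave F c u)
    (g : ℝ → ℝ) (hg : ContDiff ℝ 3 g)
    (hgeq : ∀ t : ℝ, deriv (deriv g) t = deriv F (g t))
    (hgtop : Tendsto g atTop (nhds 1)) (hgbot : Tendsto g atBot (nhds (-1)))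
    (hg0 : g 0 = 0)
    (γ : ℝ → ℝ) (hγ : ContDiff ℝ 3 γ)
    (hγlevel : ∀ x y : ℝ, u x y = 0 ↔ y = γ x)
    (s : ℕ → ℝ) (hs : Tendsto (fun m => |s m|) atTop atTop) :
    ∃ φ : ℕ → ℕ, StrictMono φ ∧ ∃ ε : ℝ, (ε = 1 ∨ ε = -1) ∧
      ∀ i : ℕ, i ≤ 3 →
        TendstoLocallyUniformly
          (fun k (p : ℝ × ℝ) =>
            iteratedFDeriv ℝ i
              (fun q : ℝ × ℝ => u (s (φ k) + q.1) (γ (s (φ k)) + q.2)) p)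
          (iteratedFDeriv ℝ i (fun q : ℝ × ℝ => g (ε * q.1))) atTop :=
  translates_converge_to_profile_general hF.isDoubleWell hc.ne' hu.isWave ⟨hg, hgeq⟩ hgtop hg0
    (fun _ => (hγlevel _ _).2 rfl) hs
end

section
/- Let u be a monotone traveling wave solution of the balanced Allen-Cahn equation in the plane, and let γ : ℝ → ℝ be the C¹ function whose graph y = γ(x) is the zero level set of u. Then γ'(x) → +∞ as x → +∞ and γ'(x) → −∞ as x → −∞ (i.e. the level curve opens upward at both ends). -/
open Real Filter MeasureTheory Metric

/-! The momentum density `u_x u_y` obeys the balance law `∂_x (u_x u_y) + ∂_y (u_y² / 2 - u_x² / 2 -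
F(u)) = -c u_y²`. Integrated over a strip, it says that the momentum `∫ u_x u_y dy` through a
vertical line decreases in `x` at the rate `c ∫ u_y² dy`. As this momentum is bounded, `u_y` is
square integrable on the plane, hence `u_y` and `u_yy` tend to zero at infinity, uniformly along
vertical lines. So far vertical lines see a one-dimensional profile, `u_x² ≈ 2 F(u)`, and the
momentum there is close to at most `E = ∫ √(2 F)`, and close to `E` if `u_x ≥ 0` on the level curve.
Being strictly decreasing, the momentum stays below `E` and away from it as `x → +∞`, so `u_x` is
negative there on the level curve and bounded away from zero, and `γ' = -u_x / u_y → +∞`. The other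
end follows by the reflection `x ↦ -x`. -/

section PartialDerivatives

variable {w : ℝ → ℝ → ℝ} {m n : WithTop ℕ∞}

lemma contDiff_flip (hw : ContDiff ℝ n fun p : ℝ × ℝ => w p.1 p.2) :
    ContDiff ℝ n fun p : ℝ × ℝ => w p.2 p.1 :=
  hw.comp (contDiff_snd.prodMk contDiff_fst)

lemma hasDerivAt_pdx (hw : Differentiable ℝ fun p : ℝ × ℝ => w p.1 p.2) (x y : ℝ) :
    HasDerivAt (fun t => w t y) (pdx w x y) x :=
  (hw.comp (differentiable_id.prodMk (differentiable_const y)) x).hasDerivAt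

lemma hasDerivAt_pdy (hw : Differentiable ℝ fun p : ℝ × ℝ => w p.1 p.2) (x y : ℝ) :
    HasDerivAt (fun t => w x t) (pdy w x y) y :=
  (hw.comp ((differentiable_const x).prodMk differentiable_id) y).hasDerivAt

lemma pdx_eq_fderiv (hw : Differentiable ℝ fun p : ℝ × ℝ => w p.1 p.2) (x y : ℝ) :
    pdx w x y = fderiv ℝ (fun p : ℝ × ℝ => w p.1 p.2) (x, y) (1, 0) :=
  (HasFDerivAt.comp_hasDerivAt (f := fun t : ℝ => (t, y)) x (hw (x, y)).hasFDerivAt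
    ((hasDerivAt_id x).prodMk (hasDerivAt_const x y))).deriv

lemma pdy_eq_fderiv (hw : Differentiable ℝ fun p : ℝ × ℝ => w p.1 p.2) (x y : ℝ) :
    pdy w x y = fderiv ℝ (fun p : ℝ × ℝ => w p.1 p.2) (x, y) (0, 1) :=
  (HasFDerivAt.comp_hasDerivAt (f := fun t : ℝ => (x, t)) y (hw (x, y)).hasFDerivAt
    ((hasDerivAt_const y x).prodMk (hasDerivAt_id y))).deriv

lemma contDiff_pdx (hw : ContDiff ℝ n fun p : ℝ × ℝ => w p.1 p.2) (hmn : m + 1 ≤ n) :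
    ContDiff ℝ m fun p : ℝ × ℝ => pdx w p.1 p.2 := by
  have hn : n ≠ 0 := (lt_of_lt_of_le (by simp) hmn).ne'
  simp only [pdx_eq_fderiv (hw.differentiable hn)]
  exact (hw.fderiv_right hmn).clm_apply contDiff_const

lemma contDiff_pdy (hw : ContDiff ℝ n fun p : ℝ × ℝ => w p.1 p.2) (hmn : m + 1 ≤ n) :
    ContDiff ℝ m fun p : ℝ × ℝ => pdy w p.1 p.2 :=
  contDiff_flip (w := pdx fun a b => w b a)
    (contDiff_pdx (w := fun a b => w b a) (contDiff_flip hw) hmn)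

lemma differentiable_pdx (hw : ContDiff ℝ 2 fun p : ℝ × ℝ => w p.1 p.2) :
    Differentiable ℝ fun p : ℝ × ℝ => pdx w p.1 p.2 :=
  (contDiff_pdx hw one_add_one_eq_two.le).differentiable one_ne_zero

lemma differentiable_pdy (hw : ContDiff ℝ 2 fun p : ℝ × ℝ => w p.1 p.2) :
    Differentiable ℝ fun p : ℝ × ℝ => pdy w p.1 p.2 :=
  (contDiff_pdy hw one_add_one_eq_two.le).differentiable one_ne_zero

lemma pdx_pdy_comm (hw : ContDiff ℝ 2 fun p : ℝ × ℝ => w p.1 p.2) :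
    pdx (pdy w) = pdy (pdx w) := by
  funext x y
  have hd := hw.differentiable two_ne_zero
  have hd' : Differentiable ℝ (fderiv ℝ fun p : ℝ × ℝ => w p.1 p.2) :=
    (hw.fderiv_right one_add_one_eq_two.le).differentiable one_ne_zero
  rw [pdx_eq_fderiv (differentiable_pdy hw), pdy_eq_fderiv (differentiable_pdx hw)]
  simp only [pdx_eq_fderiv hd, pdy_eq_fderiv hd]
  rw [fderiv_clm_apply (hd' _) (differentiableAt_const _),
    fderiv_clm_apply (hd' _) (differentiableAt_const _)]
  simpa using (hw.contDiffAt (x := (x, y))).isSymmSndFDerivAt (by simp) (1, 0) (0, 1)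

lemma pdx_add_deriv_mul_pdy_eq_zero (hw : Differentiable ℝ fun p : ℝ × ℝ => w p.1 p.2)
    {γ : ℝ → ℝ} (hγ : Differentiable ℝ γ) {s : ℝ} (hlevel : ∀ x, w x (γ x) = s) (x : ℝ) :
    pdx w x (γ x) + deriv γ x * pdy w x (γ x) = 0 := by
  have hcurve := (hw (x, γ x)).hasFDerivAt.comp_hasDerivAt x
    ((hasDerivAt_id x).prodMk (hγ x).hasDerivAt)
  have hconst : HasDerivAt (fun t => w t (γ t)) 0 x := by
    simpa only [hlevel] using hasDerivAt_const x s
  have hsplit : ((1 : ℝ), deriv γ x) = (1, 0) + deriv γ x • (0, 1) := by simp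
  rw [pdx_eq_fderiv hw, pdy_eq_fderiv hw, ← smul_eq_mul, ← map_smul, ← map_add, ← hsplit]
  exact hcurve.unique hconst

end PartialDerivatives

section MaximumPrinciple

lemma deriv_deriv_nonpos_of_isLocalMax {g : ℝ → ℝ} {x : ℝ} (hg : ContinuousAt g x)
    (hmax : IsLocalMax g x) : deriv (deriv g) x ≤ 0 := by
  by_contra! hpos
  have hmin : IsLocalMin g x := isLocalMin_of_deriv_deriv_pos hpos hmax.deriv_eq_zero hg
  have hconst : g =ᶠ[nhds x] fun _ => g x := by
    filter_upwards [hmax, hmin] with t h₁ h₂ using le_antisymm h₁ h₂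
  have hzero : deriv (deriv g) x = 0 := by simp [hconst.deriv.deriv_eq]
  exact hpos.ne' hzero

lemma nonpos_of_laplacian_pos {K : Set (ℝ × ℝ)} (hK : IsCompact K) {v : ℝ → ℝ → ℝ}
    (hv : ContinuousOn (fun p : ℝ × ℝ => v p.1 p.2) K)
    (hlap : ∀ p ∈ interior K, 0 < pdxx v p.1 p.2 + pdyy v p.1 p.2)
    (hbdry : ∀ p ∈ frontier K, v p.1 p.2 ≤ 0) {p : ℝ × ℝ} (hp : p ∈ K) : v p.1 p.2 ≤ 0 := by
  obtain ⟨⟨x, y⟩, hxy, hmax⟩ := hK.exists_isMaxOn ⟨p, hp⟩ hv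
  refine (hmax hp).trans ?_
  by_cases hint : (x, y) ∈ interior K
  · have hnhds : K ∈ nhds (x, y) := mem_interior_iff_mem_nhds.1 hint
    have hcont : ContinuousAt (fun p : ℝ × ℝ => v p.1 p.2) (x, y) := hv.continuousAt hnhds
    have hloc : IsLocalMax (fun p : ℝ × ℝ => v p.1 p.2) (x, y) := hmax.isLocalMax hnhds
    have hx : pdxx v x y ≤ 0 := deriv_deriv_nonpos_of_isLocalMax
      (g := fun t => v t y)
      (hcont.comp (f := fun t : ℝ => (t, y)) (Continuous.prodMk_left y).continuousAt)
      (hloc.comp_continuous (g := fun t : ℝ => (t, y)) (Continuous.prodMk_left y).continuousAt)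
    have hy : pdyy v x y ≤ 0 := deriv_deriv_nonpos_of_isLocalMax
      (g := fun t => v x t)
      (hcont.comp (f := fun t : ℝ => (x, t)) (Continuous.prodMk_right x).continuousAt)
      (hloc.comp_continuous (g := fun t : ℝ => (x, t)) (Continuous.prodMk_right x).continuousAt)
    exact absurd (hlap _ hint) (add_nonpos hx hy).not_gt
  · exact hbdry _ (hK.isClosed.frontier_eq ▸ ⟨hxy, hint⟩)

end MaximumPrinciple

section GradientEstimate

variable {w : ℝ → ℝ → ℝ} {M N : ℝ}

lemma mem_closedBall_zero_one_iff {x y : ℝ} :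
    (x, y) ∈ closedBall (0 : ℝ × ℝ) 1 ↔ x ∈ Set.Icc (-1) 1 ∧ y ∈ Set.Icc (-1) 1 := by
  rw [mem_closedBall_zero_iff, Prod.norm_mk, max_le_iff, Real.norm_eq_abs, Real.norm_eq_abs,
    abs_le, abs_le, Set.mem_Icc, Set.mem_Icc]

/-- The odd part of `w` in `y`, minus a barrier that dominates it on the boundary of the
half square `[-1, 1] × [0, 1]` when `|w| ≤ M`. -/
noncomputable def oddPartSubBarrier (w : ℝ → ℝ → ℝ) (M N x y : ℝ) : ℝ :=
  (w x y - w x (-y)) / 2 - M * (x ^ 2 + y * (2 - y)) - N / 2 * (y * (1 - y))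

lemma pdxx_oddPartSubBarrier (hw : ContDiff ℝ 2 fun p : ℝ × ℝ => w p.1 p.2) (x y : ℝ) :
    pdxx (oddPartSubBarrier w M N) x y = (pdxx w x y - pdxx w x (-y)) / 2 - 2 * M := by
  have hx : ∀ t, pdx (oddPartSubBarrier w M N) t y =
      (pdx w t y - pdx w t (-y)) / 2 - M * (2 * t) := fun t => by
    have hd := hasDerivAt_pdx (hw.differentiable two_ne_zero) t
    have h := ((((hd y).sub (hd (-y))).div_const 2).sub
      ((((hasDerivAt_id t).pow 2).add_const (y * (2 - y))).const_mul M)).sub_const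
        (N / 2 * (y * (1 - y)))
    exact (h.congr_deriv (by simp)).deriv
  have hd := hasDerivAt_pdx (differentiable_pdx hw) x
  have h := (((hd y).sub (hd (-y))).div_const 2).sub
    (((hasDerivAt_id x).const_mul 2).const_mul M)
  simp only [pdxx, hx]
  exact (h.congr_deriv (by simp [pdx, mul_comm])).deriv

lemma pdyy_oddPartSubBarrier (hw : ContDiff ℝ 2 fun p : ℝ × ℝ => w p.1 p.2) (x y : ℝ) :
    pdyy (oddPartSubBarrier w M N) x y =
      (pdyy w x y - pdyy w x (-y)) / 2 + 2 * M + N := by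
  have hodd {g : ℝ → ℝ → ℝ} (hg : Differentiable ℝ fun p : ℝ × ℝ => g p.1 p.2) (t : ℝ) :
      HasDerivAt (fun s => g x (-s)) (-pdy g x (-t)) t := by
    simpa using (hasDerivAt_pdy hg x (0 - t)).comp_const_sub 0 t
  have hy : ∀ t, pdy (oddPartSubBarrier w M N) x t =
      (pdy w x t + pdy w x (-t)) / 2 - M * (2 - 2 * t) - N / 2 * (1 - 2 * t) := fun t => by
    have hd := hw.differentiable two_ne_zero
    have h := ((((hasDerivAt_pdy hd x t).sub (hodd hd t)).div_const 2).sub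
      ((((hasDerivAt_id t).mul ((hasDerivAt_id t).const_sub 2)).const_add (x ^ 2)).const_mul
        M)).sub (((hasDerivAt_id t).mul ((hasDerivAt_id t).const_sub 1)).const_mul (N / 2))
    exact (h.congr_deriv (by simp only [id]; ring)).deriv
  have hd := differentiable_pdy hw
  have h := ((((hasDerivAt_pdy hd x y).add (hodd hd y)).div_const 2).sub
    ((((hasDerivAt_id y).const_mul 2).const_sub 2).const_mul M)).sub
      ((((hasDerivAt_id y).const_mul 2).const_sub 1).const_mul (N / 2))
  simp only [pdyy, hy]
  exact (h.congr_deriv (by simp only [pdy]; ring)).deriv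

lemma mem_closedBall_of_mem_halfSquare {x y : ℝ} (hx : x ∈ Set.Icc (-1) 1)
    (hy : y ∈ Set.Icc 0 1) :
    (x, y) ∈ closedBall (0 : ℝ × ℝ) 1 ∧ (x, -y) ∈ closedBall (0 : ℝ × ℝ) 1 := by
  constructor <;> rw [mem_closedBall_zero_one_iff] <;>
    exact ⟨hx, by constructor <;> linarith [hy.1, hy.2]⟩

lemma oddPartSubBarrier_nonpos_of_mem_frontier
    (hM : ∀ p ∈ closedBall (0 : ℝ × ℝ) 1, |w p.1 p.2| ≤ M) (hN : 0 ≤ N) {x y : ℝ}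
    (hxy : (x, y) ∈ frontier (Set.Icc (-1) 1 ×ˢ Set.Icc 0 1)) :
    oddPartSubBarrier w M N x y ≤ 0 := by
  rw [(isClosed_Icc.prod isClosed_Icc).frontier_eq, interior_prod_eq, interior_Icc,
    interior_Icc] at hxy
  obtain ⟨⟨hx, hy⟩, hint⟩ := hxy
  obtain ⟨h₁, h₂⟩ := mem_closedBall_of_mem_halfSquare hx hy
  have hM₀ : 0 ≤ M := (abs_nonneg _).trans (hM _ h₁)
  have hcases : y = 0 ∨ 1 ≤ x ^ 2 + y * (2 - y) := by
    by_contra! hcon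
    obtain ⟨hy₀, hlt⟩ := hcon
    have hy_pos : 0 < y := lt_of_le_of_ne hy.1 hy₀.symm
    refine hint ⟨abs_lt.1 ((sq_lt_one_iff_abs_lt_one x).1 ?_), hy_pos, ?_⟩ <;>
      nlinarith [hy.2, sq_nonneg x]
  have hodd : (w x y - w x (-y)) / 2 ≤ M := by
    linarith [(abs_le.1 (hM _ h₁)).2, (abs_le.1 (hM _ h₂)).1]
  have hq : 0 ≤ N / 2 * (y * (1 - y)) :=
    mul_nonneg (div_nonneg hN zero_le_two) (mul_nonneg hy.1 (sub_nonneg.2 hy.2))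
  rcases hcases with rfl | hone
  · simp only [oddPartSubBarrier, neg_zero, sub_self, zero_div, zero_mul, mul_zero, add_zero,
      zero_sub, sub_zero, neg_nonpos]
    positivity
  · have hMle : M ≤ M * (x ^ 2 + y * (2 - y)) := le_mul_of_one_le_right hM₀ hone
    unfold oddPartSubBarrier
    linarith

lemma oddPartSubBarrier_nonpos (hw : ContDiff ℝ 2 fun p : ℝ × ℝ => w p.1 p.2)
    (hM : ∀ p ∈ closedBall (0 : ℝ × ℝ) 1, |w p.1 p.2| ≤ M)
    (hN : ∀ p ∈ closedBall (0 : ℝ × ℝ) 1, |pdxx w p.1 p.2 + pdyy w p.1 p.2| < N)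
    {x y : ℝ} (hx : x ∈ Set.Icc (-1) 1) (hy : y ∈ Set.Icc 0 1) :
    oddPartSubBarrier w M N x y ≤ 0 := by
  have hN₀ : 0 ≤ N := (abs_nonneg _).trans (hN 0 (mem_closedBall_self zero_le_one)).le
  have hw₀ : Continuous fun p : ℝ × ℝ => w p.1 p.2 := hw.continuous
  have hcont : Continuous fun p : ℝ × ℝ => oddPartSubBarrier w M N p.1 p.2 := by
    have : Continuous fun p : ℝ × ℝ => w p.1 (-p.2) :=
      hw₀.comp (continuous_fst.prodMk continuous_snd.neg)
    unfold oddPartSubBarrier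
    fun_prop
  refine nonpos_of_laplacian_pos (K := Set.Icc (-1) 1 ×ˢ Set.Icc 0 1) (p := (x, y))
    (isCompact_Icc.prod isCompact_Icc) hcont.continuousOn ?_
    (fun p hp => oddPartSubBarrier_nonpos_of_mem_frontier hM hN₀ hp) ⟨hx, hy⟩
  rintro ⟨a, b⟩ hab
  obtain ⟨ha, hb⟩ := interior_subset hab
  obtain ⟨h₁, h₂⟩ := mem_closedBall_of_mem_halfSquare ha hb
  have l₁ := (abs_lt.1 (hN _ h₁)).1
  have l₂ := (abs_lt.1 (hN _ h₂)).2
  rw [pdxx_oddPartSubBarrier hw, pdyy_oddPartSubBarrier hw]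
  linarith

lemma pdy_zero_le_of_laplacian (hw : ContDiff ℝ 2 fun p : ℝ × ℝ => w p.1 p.2)
    (hM : ∀ p ∈ closedBall (0 : ℝ × ℝ) 1, |w p.1 p.2| ≤ M)
    (hN : ∀ p ∈ closedBall (0 : ℝ × ℝ) 1, |pdxx w p.1 p.2 + pdyy w p.1 p.2| < N) :
    pdy w 0 0 ≤ 2 * M + N / 2 := by
  have hM₀ : 0 ≤ M := (abs_nonneg _).trans (hM 0 (mem_closedBall_self zero_le_one))
  have hN₀ : 0 ≤ N := (abs_nonneg _).trans (hN 0 (mem_closedBall_self zero_le_one)).le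
  have hd := hasDerivAt_pdy (hw.differentiable two_ne_zero) 0
  have hneg : HasDerivAt (fun t => w 0 (-t)) (-pdy w 0 0) 0 := by
    simpa using (hd (0 - 0)).comp_const_sub 0 0
  have hodd : HasDerivAt (fun t => (w 0 t - w 0 (-t)) / 2) (pdy w 0 0) 0 :=
    (((hd 0).sub hneg).div_const 2).congr_deriv (by ring)
  refine le_of_tendsto hodd.tendsto_slope_zero_right ?_
  filter_upwards [Ioc_mem_nhdsGT one_pos] with t ht
  have hbar : oddPartSubBarrier w M N 0 t ≤ 0 :=
    oddPartSubBarrier_nonpos hw hM hN (by simp) ⟨ht.1.le, ht.2⟩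
  unfold oddPartSubBarrier at hbar
  rw [zero_add, neg_zero, sub_self, zero_div, sub_zero, smul_eq_mul, inv_mul_le_iff₀ ht.1]
  nlinarith [mul_nonneg hM₀ (sq_nonneg t), mul_nonneg hN₀ (sq_nonneg t)]

lemma pdxx_neg (w : ℝ → ℝ → ℝ) (x y : ℝ) :
    pdxx (fun x y => -w x y) x y = -pdxx w x y := by
  simp only [pdxx, pdx, deriv.fun_neg]

lemma pdyy_neg (w : ℝ → ℝ → ℝ) (x y : ℝ) :
    pdyy (fun x y => -w x y) x y = -pdyy w x y := by
  simp only [pdyy, pdy, deriv.fun_neg]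

lemma abs_pdy_zero_le_of_laplacian (hw : ContDiff ℝ 2 fun p : ℝ × ℝ => w p.1 p.2)
    (hM : ∀ p ∈ closedBall (0 : ℝ × ℝ) 1, |w p.1 p.2| ≤ M)
    (hN : ∀ p ∈ closedBall (0 : ℝ × ℝ) 1, |pdxx w p.1 p.2 + pdyy w p.1 p.2| ≤ N) :
    |pdy w 0 0| ≤ 2 * M + N / 2 := by
  refine le_of_forall_pos_le_add fun ε hε => ?_
  have hlt : ∀ p ∈ closedBall (0 : ℝ × ℝ) 1, |pdxx w p.1 p.2 + pdyy w p.1 p.2| < N + ε :=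
    fun p hp => (hN p hp).trans_lt (lt_add_of_pos_right N hε)
  have hpos := pdy_zero_le_of_laplacian hw hM hlt
  have hneg := pdy_zero_le_of_laplacian (w := fun x y => -w x y) (N := N + ε) hw.neg
    (fun p hp => by simpa only [abs_neg] using hM p hp)
    (fun p hp => by
      rw [pdxx_neg, pdyy_neg, ← neg_add, abs_neg]
      exact hlt p hp)
  rw [show pdy (fun x y => -w x y) 0 0 = -pdy w 0 0 from deriv.fun_neg] at hneg
  exact abs_le.2 ⟨by linarith, by linarith⟩

lemma abs_pdx_zero_le_of_laplacian (hw : ContDiff ℝ 2 fun p : ℝ × ℝ => w p.1 p.2)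
    (hM : ∀ p ∈ closedBall (0 : ℝ × ℝ) 1, |w p.1 p.2| ≤ M)
    (hN : ∀ p ∈ closedBall (0 : ℝ × ℝ) 1, |pdxx w p.1 p.2 + pdyy w p.1 p.2| ≤ N) :
    |pdx w 0 0| ≤ 2 * M + N / 2 := by
  have hswap {p : ℝ × ℝ} (hp : p ∈ closedBall (0 : ℝ × ℝ) 1) :
      (p.2, p.1) ∈ closedBall (0 : ℝ × ℝ) 1 :=
    mem_closedBall_zero_one_iff.2 (mem_closedBall_zero_one_iff.1 hp).symm
  exact abs_pdy_zero_le_of_laplacian (w := fun x y => w y x) (contDiff_flip hw)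
    (fun p hp => hM _ (hswap hp))
    (fun p hp => (congrArg abs (add_comm _ _)).trans_le (hN _ (hswap hp)))

lemma pdx_exp_mul (c : ℝ) (w : ℝ → ℝ → ℝ) (x y : ℝ) :
    pdx (fun x y => exp (c / 2 * y) * w x y) x y = exp (c / 2 * y) * pdx w x y :=
  deriv_const_mul_field _

lemma pdy_exp_mul (c : ℝ) (hw : Differentiable ℝ fun p : ℝ × ℝ => w p.1 p.2) (x y : ℝ) :
    pdy (fun x y => exp (c / 2 * y) * w x y) x y =
      exp (c / 2 * y) * (pdy w x y + c / 2 * w x y) := by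
  have h := ((hasDerivAt_id y).const_mul (c / 2)).exp.mul (hasDerivAt_pdy hw x y)
  exact (h.congr_deriv (by simp only [id]; ring)).deriv

-- The factor `exp (c y / 2)` conjugates `Δ + c ∂_y + c ^ 2 / 4` to the Laplacian.
lemma laplacian_exp_mul (c : ℝ) (hw : ContDiff ℝ 2 fun p : ℝ × ℝ => w p.1 p.2) (x y : ℝ) :
    pdxx (fun x y => exp (c / 2 * y) * w x y) x y + pdyy (fun x y => exp (c / 2 * y) * w x y) x y =
      exp (c / 2 * y) * (pdxx w x y + pdyy w x y + c * pdy w x y + c ^ 2 / 4 * w x y) := by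
  have hd := hw.differentiable two_ne_zero
  have hxx : pdxx (fun x y => exp (c / 2 * y) * w x y) x y = exp (c / 2 * y) * pdxx w x y := by
    simp only [pdxx, pdx_exp_mul]
    exact deriv_const_mul_field _
  have hyy : pdyy (fun x y => exp (c / 2 * y) * w x y) x y =
      exp (c / 2 * y) * (pdyy w x y + c / 2 * pdy w x y + c / 2 * (pdy w x y + c / 2 * w x y)) := by
    have hd' : Differentiable ℝ fun p : ℝ × ℝ => pdy w p.1 p.2 + c / 2 * w p.1 p.2 :=
      (differentiable_pdy hw).add (hd.const_mul _)
    have hsum : pdy (fun x y => pdy w x y + c / 2 * w x y) x y = pdyy w x y + c / 2 * pdy w x y :=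
      ((hasDerivAt_pdy (differentiable_pdy hw) x y).add
        ((hasDerivAt_pdy hd x y).const_mul (c / 2))).deriv
    rw [← hsum, ← pdy_exp_mul c hd' x y]
    exact congrArg (fun g => pdy g x y) (funext₂ (pdy_exp_mul c hd))
  rw [hxx, hyy]
  ring

lemma abs_exp_mul_le (c : ℝ) {p : ℝ × ℝ} (hp : p ∈ closedBall (0 : ℝ × ℝ) 1) :
    |exp (c / 2 * p.2)| ≤ exp (|c| / 2) := by
  have hp₂ : |p.2| ≤ 1 := (norm_snd_le p).trans (mem_closedBall_zero_iff.1 hp)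
  rw [abs_exp, exp_le_exp]
  calc c / 2 * p.2 ≤ |c / 2| * |p.2| := (le_abs_self _).trans (abs_mul _ _).le
    _ ≤ |c / 2| * 1 := by gcongr
    _ = |c| / 2 := by rw [mul_one, abs_div, abs_two]

lemma gradient_zero_estimate (c : ℝ) (hw : ContDiff ℝ 2 fun p : ℝ × ℝ => w p.1 p.2)
    (hM : ∀ p ∈ closedBall (0 : ℝ × ℝ) 1, |w p.1 p.2| ≤ M)
    (hN : ∀ p ∈ closedBall (0 : ℝ × ℝ) 1,
      |pdxx w p.1 p.2 + pdyy w p.1 p.2 + c * pdy w p.1 p.2| ≤ N) :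
    |pdx w 0 0| ≤ 2 * (exp (|c| / 2) * M) + exp (|c| / 2) * (N + c ^ 2 / 4 * M) / 2 ∧
      |pdy w 0 0 + c / 2 * w 0 0| ≤
        2 * (exp (|c| / 2) * M) + exp (|c| / 2) * (N + c ^ 2 / 4 * M) / 2 := by
  have hv : ContDiff ℝ 2 fun p : ℝ × ℝ => exp (c / 2 * p.2) * w p.1 p.2 := by fun_prop
  have hvM : ∀ p ∈ closedBall (0 : ℝ × ℝ) 1, |exp (c / 2 * p.2) * w p.1 p.2| ≤
      exp (|c| / 2) * M := fun p hp => by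
    rw [abs_mul]
    gcongr
    exacts [abs_exp_mul_le c hp, hM p hp]
  have hvN : ∀ p ∈ closedBall (0 : ℝ × ℝ) 1,
      |pdxx (fun x y => exp (c / 2 * y) * w x y) p.1 p.2 +
        pdyy (fun x y => exp (c / 2 * y) * w x y) p.1 p.2| ≤
          exp (|c| / 2) * (N + c ^ 2 / 4 * M) := fun p hp => by
    rw [laplacian_exp_mul c hw, abs_mul]
    gcongr
    · exact abs_exp_mul_le c hp
    · refine (abs_add_le _ _).trans (add_le_add (hN p hp) ?_)
      rw [abs_mul, abs_of_nonneg (by positivity : 0 ≤ c ^ 2 / 4)]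
      gcongr
      exact hM p hp
  have hx := abs_pdx_zero_le_of_laplacian hv hvM hvN
  have hy := abs_pdy_zero_le_of_laplacian hv hvM hvN
  rw [pdx_exp_mul, mul_zero, exp_zero, one_mul] at hx
  rw [pdy_exp_mul c (hw.differentiable two_ne_zero), mul_zero, exp_zero, one_mul] at hy
  exact ⟨by linarith, by linarith⟩

lemma exists_gradient_zero_estimate (c : ℝ) : ∃ C : ℝ, ∀ (w : ℝ → ℝ → ℝ) (M N : ℝ),
    ContDiff ℝ 2 (fun p : ℝ × ℝ => w p.1 p.2) →
    (∀ p ∈ closedBall (0 : ℝ × ℝ) 1, |w p.1 p.2| ≤ M) →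
    (∀ p ∈ closedBall (0 : ℝ × ℝ) 1,
      |pdxx w p.1 p.2 + pdyy w p.1 p.2 + c * pdy w p.1 p.2| ≤ N) →
    |pdx w 0 0| ≤ C * (M + N) ∧ |pdy w 0 0| ≤ C * (M + N) := by
  set E := exp (|c| / 2)
  have : 0 < E := exp_pos _
  refine ⟨E * (2 + c ^ 2 / 8) + |c| / 2, fun w M N hw hM hN => ?_⟩
  have hM₀ : 0 ≤ M := (abs_nonneg _).trans (hM 0 (mem_closedBall_self zero_le_one))
  have hN₀ : 0 ≤ N := (abs_nonneg _).trans (hN 0 (mem_closedBall_self zero_le_one))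
  obtain ⟨hx, hy⟩ := gradient_zero_estimate c hw hM hN
  have hdrift : |c / 2 * w 0 0| ≤ |c| / 2 * M := by
    rw [abs_mul, abs_div, abs_two]
    gcongr
    exact hM 0 (mem_closedBall_self zero_le_one)
  have hcM : 0 ≤ |c| / 2 * M := by positivity
  have hEN : 0 ≤ E * N * (3 / 2 + c ^ 2 / 8) + |c| / 2 * N := by positivity
  have hsub := abs_sub (pdy w 0 0 + c / 2 * w 0 0) (c / 2 * w 0 0)
  rw [add_sub_cancel_right] at hsub
  exact ⟨by linarith, by linarith⟩

lemma exists_gradient_estimate (c : ℝ) : ∃ C : ℝ, ∀ (w : ℝ → ℝ → ℝ) (x y M N : ℝ),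
    ContDiff ℝ 2 (fun p : ℝ × ℝ => w p.1 p.2) →
    (∀ p ∈ closedBall (x, y) 1, |w p.1 p.2| ≤ M) →
    (∀ p ∈ closedBall (x, y) 1,
      |pdxx w p.1 p.2 + pdyy w p.1 p.2 + c * pdy w p.1 p.2| ≤ N) →
    |pdx w x y| ≤ C * (M + N) ∧ |pdy w x y| ≤ C * (M + N) := by
  obtain ⟨C, hest⟩ := exists_gradient_zero_estimate c
  refine ⟨C, fun w x y M N hw hM hN => ?_⟩
  have hball {p : ℝ × ℝ} (hp : p ∈ closedBall (0 : ℝ × ℝ) 1) :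
      (x + p.1, y + p.2) ∈ closedBall (x, y) 1 := by
    simpa [Prod.dist_eq, Prod.norm_def] using hp
  have hpx (g : ℝ → ℝ → ℝ) (a b : ℝ) :
      pdx (fun a b => g (x + a) (y + b)) a b = pdx g (x + a) (y + b) :=
    deriv_comp_const_add (f := fun t => g t (y + b)) x a
  have hpy (g : ℝ → ℝ → ℝ) (a b : ℝ) :
      pdy (fun a b => g (x + a) (y + b)) a b = pdy g (x + a) (y + b) :=
    deriv_comp_const_add (f := fun t => g (x + a) t) y b
  have hpxx (a b : ℝ) : pdxx (fun a b => w (x + a) (y + b)) a b = pdxx w (x + a) (y + b) :=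
    (congrArg (fun g => pdx g a b) (funext₂ (hpx w))).trans (hpx (pdx w) a b)
  have hpyy (a b : ℝ) : pdyy (fun a b => w (x + a) (y + b)) a b = pdyy w (x + a) (y + b) :=
    (congrArg (fun g => pdy g a b) (funext₂ (hpy w))).trans (hpy (pdy w) a b)
  have h := hest (fun a b => w (x + a) (y + b)) M N (by fun_prop) (fun p hp => hM _ (hball hp))
    fun p hp => by
      rw [hpxx, hpyy, hpy]
      exact hN _ (hball hp)
  simpa only [hpx, hpy, add_zero] using h

end GradientEstimate

namespace IsSolution

variable {F : ℝ → ℝ} {c : ℝ} {u : ℝ → ℝ → ℝ}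

lemma contDiff (hu : IsSolution F c u) : ContDiff ℝ 3 fun p : ℝ × ℝ => u p.1 p.2 :=
  hu.1

lemma contDiff_two (hu : IsSolution F c u) : ContDiff ℝ 2 fun p : ℝ × ℝ => u p.1 p.2 :=
  hu.1.of_le (by norm_num)

lemma differentiable (hu : IsSolution F c u) : Differentiable ℝ fun p : ℝ × ℝ => u p.1 p.2 :=
  hu.1.differentiable (by norm_num)

lemma contDiff_pdx (hu : IsSolution F c u) : ContDiff ℝ 2 fun p : ℝ × ℝ => pdx u p.1 p.2 :=
  _root_.contDiff_pdx hu.1 (by norm_num)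

lemma contDiff_pdy (hu : IsSolution F c u) : ContDiff ℝ 2 fun p : ℝ × ℝ => pdy u p.1 p.2 :=
  _root_.contDiff_pdy hu.1 (by norm_num)

lemma continuous_pdx_line (hu : IsSolution F c u) (x : ℝ) : Continuous fun y => pdx u x y :=
  hu.contDiff_pdx.continuous.comp (Continuous.prodMk_right x)

lemma equation (hu : IsSolution F c u) (x y : ℝ) :
    pdxx u x y + pdyy u x y + c * pdy u x y = deriv F (u x y) :=
  hu.2.1 x y

lemma mem_Icc (hu : IsSolution F c u) (x y : ℝ) : u x y ∈ Set.Icc (-1) 1 :=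
  abs_le.1 (hu.2.2.1 x y)

lemma pdy_pos (hu : IsSolution F c u) (x y : ℝ) : 0 < pdy u x y :=
  hu.2.2.2 x y

lemma exists_gradient_bound (hF : ContDiff ℝ 1 F) (hu : IsSolution F c u) :
    ∃ K : ℝ, ∀ x y, |pdx u x y| ≤ K ∧ |pdy u x y| ≤ K := by
  obtain ⟨N, hN⟩ := isCompact_Icc.exists_bound_of_continuousOn (s := Set.Icc (-1 : ℝ) 1)
    hF.continuous_deriv_one.continuousOn
  obtain ⟨C, hC⟩ := exists_gradient_estimate c
  refine ⟨C * (1 + N), fun x y => hC u x y 1 N hu.contDiff_two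
    (fun p _ => abs_le.2 (hu.mem_Icc _ _)) fun p _ => ?_⟩
  rw [hu.equation]
  exact hN _ (hu.mem_Icc _ _)

lemma linearized_equation (hF : ContDiff ℝ 2 F) (hu : IsSolution F c u) (x y : ℝ) :
    pdxx (pdy u) x y + pdyy (pdy u) x y + c * pdy (pdy u) x y =
      deriv (deriv F) (u x y) * pdy u x y := by
  have hxx : HasDerivAt (fun t => pdxx u x t) (pdxx (pdy u) x y) y := by
    have hcomm : pdy (pdx (pdx u)) = pdx (pdx (pdy u)) := by
      rw [← pdx_pdy_comm hu.contDiff_pdx, pdx_pdy_comm hu.contDiff_two]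
    have h := hasDerivAt_pdy (differentiable_pdx hu.contDiff_pdx) x y
    rwa [hcomm] at h
  have hyy : HasDerivAt (fun t => pdyy u x t) (pdyy (pdy u) x y) y :=
    hasDerivAt_pdy (differentiable_pdy hu.contDiff_pdy) x y
  have hy := (hasDerivAt_pdy (differentiable_pdy hu.contDiff_two) x y).const_mul c
  have hlhs := (hxx.add hyy).add hy
  have hrhs : HasDerivAt (fun t => deriv F (u x t)) (deriv (deriv F) (u x y) * pdy u x y) y :=
    (hF.differentiable_deriv_two (u x y)).hasDerivAt.comp y (hasDerivAt_pdy hu.differentiable x y)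
  exact hlhs.unique (hrhs.congr_of_eventuallyEq (.of_forall fun t => hu.equation x t))

lemma exists_pdy_gradient_estimate (hF : ContDiff ℝ 2 F) (hu : IsSolution F c u) :
    ∃ D : ℝ, ∀ x y ε, (∀ p ∈ closedBall (x, y) 1, |pdy u p.1 p.2| ≤ ε) →
      |pdx (pdy u) x y| ≤ D * ε ∧ |pdyy u x y| ≤ D * ε := by
  have hF' : ContDiff ℝ 1 (deriv F) := ContDiff.deriv' (by rwa [one_add_one_eq_two])
  obtain ⟨B, hB⟩ := isCompact_Icc.exists_bound_of_continuousOn (s := Set.Icc (-1 : ℝ) 1)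
    hF'.continuous_deriv_one.continuousOn
  obtain ⟨C, hC⟩ := exists_gradient_estimate c
  refine ⟨C * (1 + B), fun x y ε hε => ?_⟩
  rw [show C * (1 + B) * ε = C * (ε + B * ε) by ring]
  refine hC (pdy u) x y ε (B * ε) hu.contDiff_pdy hε fun p hp => ?_
  rw [hu.linearized_equation hF, abs_mul]
  have hB' := hB _ (hu.mem_Icc p.1 p.2)
  exact mul_le_mul hB' (hε p hp) (abs_nonneg _) ((norm_nonneg _).trans hB')

lemma exists_hessian_bound (hF : ContDiff ℝ 2 F) (hu : IsSolution F c u) :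
    ∃ K : ℝ, ∀ x y, |pdxx u x y| ≤ K ∧ |pdx (pdy u) x y| ≤ K ∧ |pdyy u x y| ≤ K := by
  have hF₁ : ContDiff ℝ 1 F := hF.of_le one_le_two
  obtain ⟨N, hN⟩ := isCompact_Icc.exists_bound_of_continuousOn (s := Set.Icc (-1 : ℝ) 1)
    hF₁.continuous_deriv_one.continuousOn
  obtain ⟨K, hK⟩ := hu.exists_gradient_bound hF₁
  obtain ⟨D, hD⟩ := hu.exists_pdy_gradient_estimate hF
  have hy := fun x y => hD x y K fun p _ => (hK p.1 p.2).2
  refine ⟨max (N + |c| * K + D * K) (D * K), fun x y => ⟨le_max_of_le_left ?_,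
    le_max_of_le_right (hy x y).1, le_max_of_le_right (hy x y).2⟩⟩
  have hxx : pdxx u x y = deriv F (u x y) - c * pdy u x y - pdyy u x y := by
    rw [← hu.equation]
    ring
  rw [hxx]
  refine (abs_sub _ _).trans (add_le_add ((abs_sub _ _).trans (add_le_add ?_ ?_)) (hy x y).2)
  · exact hN _ (hu.mem_Icc x y)
  · rw [abs_mul]
    exact mul_le_mul_of_nonneg_left (hK x y).2 (abs_nonneg c)

end IsSolution

lemma tendsto_deriv_zero_of_lipschitzWith {ι : Type*} {l : Filter ι} {f : ι → ℝ → ℝ} {L : NNReal}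
    {a : ℝ} (hf : ∀ i, Differentiable ℝ (f i)) (hL : ∀ i, LipschitzWith L (deriv (f i)))
    (hlim : ∀ t, Tendsto (fun i => f i t) l (nhds a)) (x : ℝ) :
    Tendsto (fun i => deriv (f i) x) l (nhds 0) := by
  rw [Metric.tendsto_nhds]
  intro ε hε
  obtain ⟨h, hh, hLh⟩ : ∃ h : ℝ, 0 < h ∧ L * h ≤ ε / 2 := by
    refine ⟨ε / 2 / (L + 1), by positivity, ?_⟩
    rw [mul_div_assoc', div_le_iff₀ (by positivity)]
    nlinarith [L.coe_nonneg]
  have hdiff : Tendsto (fun i => (f i (x + h) - f i x) / (x + h - x)) l (nhds 0) := by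
    simpa using ((hlim (x + h)).sub (hlim x)).div_const (x + h - x)
  filter_upwards [Metric.tendsto_nhds.1 hdiff (ε / 2) (half_pos hε)] with i hi
  obtain ⟨ξ, hξ, hslope⟩ := exists_deriv_eq_slope (f i) (lt_add_of_pos_right x hh)
    (hf i).continuous.continuousOn (hf i).differentiableOn
  rw [← hslope] at hi
  have hdist : dist x ξ ≤ h := by
    rw [Real.dist_eq, abs_le]
    constructor <;> linarith [hξ.1, hξ.2]
  calc dist (deriv (f i) x) 0 ≤ dist (deriv (f i) x) (deriv (f i) ξ) + dist (deriv (f i) ξ) 0 :=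
        dist_triangle _ _ _
    _ < L * h + ε / 2 :=
        add_lt_add_of_le_of_lt (((hL i).dist_le_mul x ξ).trans (by gcongr)) hi
    _ ≤ ε := by linarith

namespace IsSolution

variable {F : ℝ → ℝ} {c : ℝ} {u : ℝ → ℝ → ℝ}

lemma tendsto_gradient_zero (hF : ContDiff ℝ 2 F) (hu : IsSolution F c u) {l : Filter ℝ}
    {a : ℝ} (hshift : ∀ t : ℝ, Tendsto (fun y => y + t) l l)
    (hlim : ∀ x, Tendsto (fun y => u x y) l (nhds a)) (x : ℝ) :
    Tendsto (fun y => pdx u x y) l (nhds 0) ∧ Tendsto (fun y => pdy u x y) l (nhds 0) := by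
  obtain ⟨K, hK⟩ := hu.exists_hessian_bound hF
  have hd := hu.differentiable
  have hx := differentiable_pdx hu.contDiff_two
  have hy := differentiable_pdy hu.contDiff_two
  have hlipx (y : ℝ) : LipschitzWith K.toNNReal (deriv fun t => u t y) :=
    lipschitzWith_of_nnnorm_deriv_le (fun t => (hasDerivAt_pdx hx t y).differentiableAt)
      fun t => NNReal.le_toNNReal_of_coe_le (hK t y).1
  have hlipy (y : ℝ) : LipschitzWith K.toNNReal (deriv fun t => u x (y + t)) := by
    have hshift' : (deriv fun t => u x (y + t)) = fun t => pdy u x (y + t) :=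
      funext (deriv_comp_const_add (f := fun t => u x t) y)
    rw [hshift']
    refine lipschitzWith_of_nnnorm_deriv_le
      (fun t => ((hasDerivAt_pdy hy x (y + t)).comp_const_add y t).differentiableAt) fun t => ?_
    rw [deriv_comp_const_add (f := fun t => pdy u x t)]
    exact NNReal.le_toNNReal_of_coe_le (hK x (y + t)).2.2
  refine ⟨tendsto_deriv_zero_of_lipschitzWith
    (fun y t => (hasDerivAt_pdx hd t y).differentiableAt) hlipx hlim x, ?_⟩
  have h := tendsto_deriv_zero_of_lipschitzWith (f := fun y t => u x (y + t))
    (fun y t => ((hasDerivAt_pdy hd x (y + t)).comp_const_add y t).differentiableAt) hlipy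
    (fun t => (hlim x).comp (hshift t)) 0
  have h₀ (y : ℝ) : deriv (fun t => u x (y + t)) 0 = pdy u x y := by
    rw [deriv_comp_const_add (f := fun t => u x t), add_zero]
    rfl
  simpa only [h₀] using h

end IsSolution

namespace IsTravelingWave

variable {F : ℝ → ℝ} {c : ℝ} {u : ℝ → ℝ → ℝ}

lemma isSolution (hu : IsTravelingWave F c u) : IsSolution F c u :=
  hu.1

lemma tendsto_one_atTop (hu : IsTravelingWave F c u) (x : ℝ) :
    Tendsto (fun y => u x y) atTop (nhds 1) :=
  hu.2.1 x

lemma tendsto_neg_one_atBot (hu : IsTravelingWave F c u) (x : ℝ) :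
    Tendsto (fun y => u x y) atBot (nhds (-1)) :=
  hu.2.2 x

lemma tendsto_gradient_zero_atTop (hF : ContDiff ℝ 2 F) (hu : IsTravelingWave F c u) (x : ℝ) :
    Tendsto (fun y => pdx u x y) atTop (nhds 0) ∧ Tendsto (fun y => pdy u x y) atTop (nhds 0) :=
  hu.isSolution.tendsto_gradient_zero hF
    (fun t => tendsto_atTop_add_const_right _ t tendsto_id) hu.tendsto_one_atTop x

lemma tendsto_gradient_zero_atBot (hF : ContDiff ℝ 2 F) (hu : IsTravelingWave F c u) (x : ℝ) :
    Tendsto (fun y => pdx u x y) atBot (nhds 0) ∧ Tendsto (fun y => pdy u x y) atBot (nhds 0) :=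
  hu.isSolution.tendsto_gradient_zero hF
    (fun t => tendsto_atBot_add_const_right _ t tendsto_id) hu.tendsto_neg_one_atBot x

end IsTravelingWave

lemma integral_pdx_add_pdy {f g : ℝ → ℝ → ℝ} (hf : ContDiff ℝ 1 fun p : ℝ × ℝ => f p.1 p.2)
    (hg : ContDiff ℝ 1 fun p : ℝ × ℝ => g p.1 p.2) {a b s t : ℝ} (hab : a ≤ b) (hst : s ≤ t) :
    ∫ p in Set.Icc (a, s) (b, t), (pdx f p.1 p.2 + pdy g p.1 p.2) =
      (((∫ x in a..b, g x t) - ∫ x in a..b, g x s) + ∫ y in s..t, f b y) - ∫ y in s..t, f a y := by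
  have hdf := hf.differentiable one_ne_zero
  have hdg := hg.differentiable one_ne_zero
  have hint : IntegrableOn (fun p : ℝ × ℝ => pdx f p.1 p.2 + pdy g p.1 p.2)
      (Set.Icc (a, s) (b, t)) :=
    ((contDiff_pdx hf (m := 0) (by simp)).continuous.add
      (contDiff_pdy hg (m := 0) (by simp)).continuous).integrableOn_Icc
  simp only [pdx_eq_fderiv hdf, pdy_eq_fderiv hdg] at hint ⊢
  exact integral_divergence_prod_Icc_of_hasFDerivAt_of_le _ _ _ _ (a, s) (b, t) ⟨hab, hst⟩
    hf.continuous.continuousOn hg.continuous.continuousOn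
    (fun p _ => (hdf p).hasFDerivAt) (fun p _ => (hdg p).hasFDerivAt) hint

/-- The flux in the `y` direction of the balance law for the momentum density `u_x u_y`. -/
noncomputable def stress (F : ℝ → ℝ) (u : ℝ → ℝ → ℝ) (x y : ℝ) : ℝ :=
  pdy u x y ^ 2 / 2 - pdx u x y ^ 2 / 2 - F (u x y)

namespace IsSolution

variable {F : ℝ → ℝ} {c : ℝ} {u : ℝ → ℝ → ℝ}

lemma contDiff_stress (hF : ContDiff ℝ 1 F) (hu : IsSolution F c u) :
    ContDiff ℝ 1 fun p : ℝ × ℝ => stress F u p.1 p.2 :=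
  ((((hu.contDiff_pdy.of_le one_le_two).pow 2).div_const 2).sub
    (((hu.contDiff_pdx.of_le one_le_two).pow 2).div_const 2)).sub
      (hF.comp (hu.contDiff_two.of_le one_le_two))

lemma momentum_balance (hF : Differentiable ℝ F) (hu : IsSolution F c u) (x y : ℝ) :
    pdx (fun x y => pdx u x y * pdy u x y) x y + pdy (stress F u) x y = -(c * pdy u x y ^ 2) := by
  have hdx := differentiable_pdx hu.contDiff_two
  have hdy := differentiable_pdy hu.contDiff_two
  have hpdx : pdx (fun x y => pdx u x y * pdy u x y) x y =
      pdxx u x y * pdy u x y + pdx u x y * pdx (pdy u) x y :=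
    ((hasDerivAt_pdx hdx x y).mul (hasDerivAt_pdx hdy x y)).deriv
  have hstress : pdy (stress F u) x y = pdy u x y * pdyy u x y -
      pdx u x y * pdx (pdy u) x y - deriv F (u x y) * pdy u x y := by
    have hFu := (hF (u x y)).hasDerivAt.comp y (hasDerivAt_pdy hu.differentiable x y)
    have h := ((((hasDerivAt_pdy hdy x y).pow 2).div_const 2).sub
      (((hasDerivAt_pdy hdx x y).pow 2).div_const 2)).sub hFu
    refine (h.congr_deriv ?_).deriv
    rw [pdx_pdy_comm hu.contDiff_two, pdyy, ← pdy]
    ring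
  rw [hpdx, hstress, ← hu.equation]
  ring

lemma integral_momentum_balance (hF : ContDiff ℝ 1 F) (hu : IsSolution F c u) {a b s t : ℝ}
    (hab : a ≤ b) (hst : s ≤ t) :
    c * ∫ p in Set.Icc (a, s) (b, t), pdy u p.1 p.2 ^ 2 =
      ((∫ y in s..t, pdx u a y * pdy u a y) - ∫ y in s..t, pdx u b y * pdy u b y) +
        ((∫ x in a..b, stress F u x s) - ∫ x in a..b, stress F u x t) := by
  have hdiv := integral_pdx_add_pdy (f := fun x y => pdx u x y * pdy u x y) (g := stress F u)
    ((hu.contDiff_pdx.mul hu.contDiff_pdy).of_le one_le_two) (hu.contDiff_stress hF) hab hst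
  simp only [hu.momentum_balance (hF.differentiable one_ne_zero), integral_neg,
    integral_const_mul] at hdiv
  linarith

lemma tendsto_integral_stress (hF : ContDiff ℝ 1 F) (hu : IsSolution F c u) {l : Filter ℝ}
    [l.IsCountablyGenerated] {m : ℝ} (hm : F m = 0)
    (hlim : ∀ x, Tendsto (fun y => u x y) l (nhds m))
    (hgrad : ∀ x, Tendsto (fun y => pdx u x y) l (nhds 0) ∧
      Tendsto (fun y => pdy u x y) l (nhds 0)) (a b : ℝ) :
    Tendsto (fun y => ∫ x in a..b, stress F u x y) l (nhds 0) := by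
  obtain ⟨K, hK⟩ := hu.exists_gradient_bound hF
  obtain ⟨A, hA⟩ := isCompact_Icc.exists_bound_of_continuousOn (s := Set.Icc (-1 : ℝ) 1)
    hF.continuous.continuousOn
  have hcont := (hu.contDiff_stress hF).continuous
  rw [← intervalIntegral.integral_zero (a := a) (b := b) (μ := volume)]
  refine intervalIntegral.tendsto_integral_filter_of_dominated_convergence
    (fun _ => K ^ 2 / 2 + K ^ 2 / 2 + A) (.of_forall fun y => ?_)
    (.of_forall fun y => ae_of_all _ fun x _ => ?_) (by simp) (ae_of_all _ fun x _ => ?_)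
  · exact Continuous.aestronglyMeasurable (by fun_prop)
  · have hsq {r : ℝ} (hr : |r| ≤ K) : |r ^ 2 / 2| ≤ K ^ 2 / 2 := by
      rw [abs_div, abs_pow, abs_two]
      gcongr
    exact (abs_sub _ _).trans (add_le_add
      ((abs_sub _ _).trans (add_le_add (hsq (hK x y).2) (hsq (hK x y).1))) (hA _ (hu.mem_Icc x y)))
  · have hFu := (hF.continuous.tendsto m).comp (hlim x)
    simpa [hm, stress] using
      ((((hgrad x).2.pow 2).div_const 2).sub (((hgrad x).1.pow 2).div_const 2)).sub hFu

end IsSolution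

/-- A `C²` potential vanishing at `±1` and positive in between. -/
structure BalancedPotential (F : ℝ → ℝ) : Prop where
  contDiff : ContDiff ℝ 2 F
  map_neg_one : F (-1) = 0
  map_one : F 1 = 0
  pos : ∀ s ∈ Set.Ioo (-1 : ℝ) 1, 0 < F s

namespace BalancedPotential

variable {F : ℝ → ℝ}

lemma contDiff_one (hF : BalancedPotential F) : ContDiff ℝ 1 F :=
  hF.contDiff.of_le one_le_two

lemma continuous (hF : BalancedPotential F) : Continuous F :=
  hF.contDiff.continuous

lemma nonneg (hF : BalancedPotential F) {s : ℝ} (hs : s ∈ Set.Icc (-1 : ℝ) 1) : 0 ≤ F s := by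
  rcases eq_or_ne s (-1) with rfl | h₁
  · exact hF.map_neg_one.ge
  · rcases eq_or_ne s 1 with rfl | h₂
    · exact hF.map_one.ge
    · exact (hF.pos s ⟨lt_of_le_of_ne hs.1 h₁.symm, lt_of_le_of_ne hs.2 h₂⟩).le

end BalancedPotential

lemma BalancedDoubleWell.balancedPotential {F : ℝ → ℝ} (hF : BalancedDoubleWell F) :
    BalancedPotential F := by
  obtain ⟨hdiff, -, -, -, -, hinc, hdec, hleft, hright⟩ := hF
  have hmono : StrictMonoOn F (Set.Icc (-1) 0) :=
    strictMonoOn_of_deriv_pos (convex_Icc _ _) hdiff.continuous.continuousOn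
      fun s hs => hinc s (by rwa [interior_Icc] at hs)
  have hanti : StrictAntiOn F (Set.Icc 0 1) :=
    strictAntiOn_of_deriv_neg (convex_Icc _ _) hdiff.continuous.continuousOn
      fun s hs => hdec s (by rwa [interior_Icc] at hs)
  refine ⟨hdiff.of_le (by norm_num), hleft, hright, fun s hs => ?_⟩
  rcases le_total s 0 with h | h
  · exact hleft ▸ hmono (by simp) ⟨hs.1.le, h⟩ hs.1
  · exact hright ▸ hanti ⟨h, hs.2.le⟩ (by simp) hs.2

namespace IsTravelingWave

variable {F : ℝ → ℝ} {c : ℝ} {u : ℝ → ℝ → ℝ}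

lemma tendsto_integral_stress_atTop (hF : BalancedPotential F) (hu : IsTravelingWave F c u)
    (a b : ℝ) : Tendsto (fun y => ∫ x in a..b, stress F u x y) atTop (nhds 0) :=
  hu.isSolution.tendsto_integral_stress hF.contDiff_one hF.map_one hu.tendsto_one_atTop
    (hu.tendsto_gradient_zero_atTop hF.contDiff) a b

lemma tendsto_integral_stress_atBot (hF : BalancedPotential F) (hu : IsTravelingWave F c u)
    (a b : ℝ) : Tendsto (fun y => ∫ x in a..b, stress F u x y) atBot (nhds 0) :=
  hu.isSolution.tendsto_integral_stress hF.contDiff_one hF.map_neg_one hu.tendsto_neg_one_atBot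
    (hu.tendsto_gradient_zero_atBot hF.contDiff) a b

end IsTravelingWave

/-- The flux across the line `{x} × ℝ` in the balance law for the momentum density `u_x u_y`. -/
noncomputable def momentum (u : ℝ → ℝ → ℝ) (x : ℝ) : ℝ :=
  ∫ y, pdx u x y * pdy u x y

namespace IsTravelingWave

variable {F : ℝ → ℝ} {c : ℝ} {u : ℝ → ℝ → ℝ}

lemma hasDerivAt_pdy (hu : IsTravelingWave F c u) (x y : ℝ) :
    HasDerivAt (fun t => u x t) (pdy u x y) y :=
  _root_.hasDerivAt_pdy hu.isSolution.differentiable x y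

lemma continuous_line (hu : IsTravelingWave F c u) (x : ℝ) : Continuous fun y => u x y :=
  continuous_iff_continuousAt.2 fun y => (hu.hasDerivAt_pdy x y).continuousAt

lemma strictMono (hu : IsTravelingWave F c u) (x : ℝ) : StrictMono fun y => u x y :=
  strictMono_of_deriv_pos (hu.isSolution.pdy_pos x)

lemma range_line (hu : IsTravelingWave F c u) (x : ℝ) :
    Set.range (fun y => u x y) = Set.Ioo (-1) 1 := by
  refine Set.Subset.antisymm ?_ fun s hs => ?_
  · rintro _ ⟨y, rfl⟩
    exact ⟨(hu.isSolution.mem_Icc x (y - 1)).1.trans_lt (hu.strictMono x (sub_one_lt y)),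
      (hu.strictMono x (lt_add_one y)).trans_le (hu.isSolution.mem_Icc x (y + 1)).2⟩
  · exact mem_range_of_exists_le_of_exists_ge (hu.continuous_line x)
      ((hu.tendsto_neg_one_atBot x).eventually_le_const hs.1).exists
      ((hu.tendsto_one_atTop x).eventually_const_le hs.2).exists

lemma integral_comp_mul_pdy (hu : IsTravelingWave F c u) (g : ℝ → ℝ) (x : ℝ) :
    ∫ y, g (u x y) * pdy u x y = ∫ s in (-1)..1, g s := by
  have h := integral_image_eq_integral_abs_deriv_smul MeasurableSet.univ
    (fun y _ => (hu.hasDerivAt_pdy x y).hasDerivWithinAt) (hu.strictMono x).injective.injOn g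
  rw [Set.image_univ, hu.range_line, setIntegral_univ] at h
  simp only [abs_of_pos (hu.isSolution.pdy_pos x _), smul_eq_mul, mul_comm (pdy u x _)] at h
  rw [← h, intervalIntegral.integral_of_le (by norm_num), integral_Ioc_eq_integral_Ioo]

lemma integrable_pdy (hu : IsTravelingWave F c u) (x : ℝ) : Integrable fun y => pdy u x y := by
  have h := integrableOn_image_iff_integrableOn_abs_deriv_smul MeasurableSet.univ
    (fun y _ => (hu.hasDerivAt_pdy x y).hasDerivWithinAt) (hu.strictMono x).injective.injOn
    fun _ => (1 : ℝ)
  rw [Set.image_univ, hu.range_line, integrableOn_univ] at h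
  simpa only [abs_of_pos (hu.isSolution.pdy_pos x _), smul_eq_mul, mul_one] using
    h.1 (integrableOn_const measure_Ioo_lt_top.ne)

lemma integrable_mul_pdy (hu : IsTravelingWave F c u) {f : ℝ → ℝ} (hf : Continuous f) {K : ℝ}
    (hK : ∀ y, |f y| ≤ K) (x : ℝ) : Integrable fun y => f y * pdy u x y :=
  (hu.integrable_pdy x).bdd_mul hf.aestronglyMeasurable (ae_of_all _ hK)

lemma integral_abs_mul_pdy_le (hu : IsTravelingWave F c u) {f : ℝ → ℝ} (hf : Continuous f) {K : ℝ}
    (hK : ∀ y, |f y| ≤ K) (x : ℝ) : ∫ y, |f y * pdy u x y| ≤ 2 * K := by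
  calc ∫ y, |f y * pdy u x y| ≤ ∫ y, K * pdy u x y := by
        refine integral_mono (hu.integrable_mul_pdy hf hK x).abs
          ((hu.integrable_pdy x).const_mul K) fun y => ?_
        simp only [abs_mul, abs_of_pos (hu.isSolution.pdy_pos x y)]
        exact mul_le_mul_of_nonneg_right (hK y) (hu.isSolution.pdy_pos x y).le
    _ = 2 * K := by
        rw [hu.integral_comp_mul_pdy fun _ => K, intervalIntegral.integral_const, smul_eq_mul]
        norm_num

lemma abs_integral_mul_pdy_sub_le (hu : IsTravelingWave F c u) {f g : ℝ → ℝ} (hf : Continuous f)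
    (hg : Continuous g) {ε x : ℝ} (hfg : ∀ y, |f y - g (u x y)| ≤ ε) :
    |(∫ y, f y * pdy u x y) - ∫ s in (-1)..1, g s| ≤ 2 * ε := by
  obtain ⟨A, hA⟩ := isCompact_Icc.exists_bound_of_continuousOn (s := Set.Icc (-1 : ℝ) 1)
    hg.continuousOn
  have hgu : Continuous fun y => g (u x y) := hg.comp (hu.continuous_line x)
  have hdiff : Integrable fun y => (f y - g (u x y)) * pdy u x y :=
    hu.integrable_mul_pdy (hf.sub hgu) hfg x
  have hint := hu.integrable_mul_pdy hgu (fun y => hA _ (hu.isSolution.mem_Icc x y)) x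
  have hsplit : ∫ y, f y * pdy u x y =
      (∫ y, (f y - g (u x y)) * pdy u x y) + ∫ y, g (u x y) * pdy u x y := by
    rw [← integral_add hdiff hint]
    simp only [← add_mul, sub_add_cancel]
  rw [hsplit, hu.integral_comp_mul_pdy, add_sub_cancel_right]
  exact (abs_integral_le_integral_abs).trans (hu.integral_abs_mul_pdy_le (hf.sub hgu) hfg x)

lemma integrable_momentum_density (hF : ContDiff ℝ 1 F) (hu : IsTravelingWave F c u) (x : ℝ) :
    Integrable fun y => pdx u x y * pdy u x y :=
  have ⟨_, hK⟩ := hu.isSolution.exists_gradient_bound hF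
  hu.integrable_mul_pdy (hu.isSolution.continuous_pdx_line x) (fun y => (hK x y).1) x

lemma exists_integral_abs_momentum_density_le (hF : ContDiff ℝ 1 F) (hu : IsTravelingWave F c u) :
    ∃ S : ℝ, ∀ x, ∫ y, |pdx u x y * pdy u x y| ≤ S :=
  have ⟨K, hK⟩ := hu.isSolution.exists_gradient_bound hF
  ⟨2 * K, fun x => hu.integral_abs_mul_pdy_le (hu.isSolution.continuous_pdx_line x)
    (fun y => (hK x y).1) x⟩

lemma integral_pdy_sq_le_momentum_sub (hF : BalancedPotential F) (hc : 0 ≤ c)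
    (hu : IsTravelingWave F c u) {a b : ℝ} (hab : a ≤ b) (s t : ℝ) :
    c * ∫ p in Set.Icc (a, s) (b, t), pdy u p.1 p.2 ^ 2 ≤ momentum u a - momentum u b := by
  have hline (x : ℝ) : Tendsto (fun R : ℝ => ∫ y in (-R)..R, pdx u x y * pdy u x y) atTop
      (nhds (momentum u x)) :=
    intervalIntegral_tendsto_integral (hu.integrable_momentum_density hF.contDiff_one x)
      tendsto_neg_atTop_atBot tendsto_id
  have hlim := ((hline a).sub (hline b)).add
    (((hu.tendsto_integral_stress_atBot hF a b).comp tendsto_neg_atTop_atBot).sub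
      (hu.tendsto_integral_stress_atTop hF a b))
  rw [sub_zero, add_zero] at hlim
  refine ge_of_tendsto hlim ?_
  filter_upwards [eventually_ge_atTop |s|, eventually_ge_atTop |t|] with R hs ht
  have hcont : Continuous fun p : ℝ × ℝ => pdy u p.1 p.2 ^ 2 :=
    hu.isSolution.contDiff_pdy.continuous.pow 2
  calc c * ∫ p in Set.Icc (a, s) (b, t), pdy u p.1 p.2 ^ 2
      ≤ c * ∫ p in Set.Icc (a, -R) (b, R), pdy u p.1 p.2 ^ 2 := by
        refine mul_le_mul_of_nonneg_left (setIntegral_mono_set hcont.integrableOn_Icc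
          (ae_of_all _ fun _ => sq_nonneg _) (Set.Icc_subset_Icc ?_ ?_).eventuallyLE) hc
        · exact ⟨le_rfl, (abs_le.1 hs).1⟩
        · exact ⟨le_rfl, (abs_le.1 ht).2⟩
    _ = _ := hu.isSolution.integral_momentum_balance hF.contDiff_one hab
        (neg_le_self ((abs_nonneg s).trans hs))

lemma integrable_pdy_sq (hF : BalancedPotential F) (hc : 0 < c) (hu : IsTravelingWave F c u) :
    Integrable fun p : ℝ × ℝ => pdy u p.1 p.2 ^ 2 := by
  obtain ⟨S, hS⟩ := hu.exists_integral_abs_momentum_density_le hF.contDiff_one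
  have hmom (x : ℝ) : |momentum u x| ≤ S := abs_integral_le_integral_abs.trans (hS x)
  have hcover : AECover (volume : Measure (ℝ × ℝ)) atTop
      fun R : ℝ => closedBall (0 : ℝ × ℝ) R := aecover_closedBall tendsto_id
  have hcont : Continuous fun p : ℝ × ℝ => pdy u p.1 p.2 ^ 2 :=
    hu.isSolution.contDiff_pdy.continuous.pow 2
  refine hcover.integrable_of_integral_bounded_of_nonneg_ae ((S + S) / c)
    (fun R => hcont.continuousOn.integrableOn_compact (isCompact_closedBall _ _))
    (ae_of_all _ fun p => sq_nonneg _) ?_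
  filter_upwards [eventually_ge_atTop 0] with R hR
  have hball : closedBall (0 : ℝ × ℝ) R = Set.Icc (-R, -R) (R, R) := by
    rw [Prod.zero_eq_mk, ← closedBall_prod_same, Real.closedBall_eq_Icc, Set.Icc_prod_Icc]
    simp only [zero_sub, zero_add]
  rw [hball, le_div_iff₀ hc, mul_comm]
  calc _ ≤ momentum u (-R) - momentum u R :=
        hu.integral_pdy_sq_le_momentum_sub hF hc.le (neg_le_self hR) _ _
    _ ≤ S + S := (le_abs_self _).trans ((abs_sub _ _).trans (add_le_add (hmom _) (hmom _)))

lemma exists_le_integral_stress (hF : BalancedPotential F) (hc : 0 ≤ c)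
    (hu : IsTravelingWave F c u) :
    ∃ S : ℝ, ∀ a b y, a ≤ b → S ≤ ∫ x in a..b, stress F u x y := by
  obtain ⟨S, hS⟩ := hu.exists_integral_abs_momentum_density_le hF.contDiff_one
  refine ⟨-(S + S), fun a b y hab => ?_⟩
  have hlim := (hu.tendsto_integral_stress_atTop hF a b).const_sub (∫ x in a..b, stress F u x y)
  rw [sub_zero] at hlim
  refine ge_of_tendsto hlim ?_
  filter_upwards [eventually_ge_atTop y] with t ht
  have hbalance := hu.isSolution.integral_momentum_balance hF.contDiff_one hab ht
  have hnonneg : 0 ≤ c * ∫ p in Set.Icc (a, y) (b, t), pdy u p.1 p.2 ^ 2 :=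
    mul_nonneg hc (integral_nonneg fun _ => sq_nonneg _)
  have hline (x : ℝ) : |∫ y in y..t, pdx u x y * pdy u x y| ≤ S := by
    calc |∫ y in y..t, pdx u x y * pdy u x y|
        ≤ ∫ y in Set.uIoc y t, |pdx u x y * pdy u x y| :=
          intervalIntegral.norm_integral_le_integral_norm_uIoc (f := fun y => pdx u x y * pdy u x y)
      _ ≤ ∫ y, |pdx u x y * pdy u x y| :=
          setIntegral_le_integral (hu.integrable_momentum_density hF.contDiff_one x).abs
            (ae_of_all _ fun _ => abs_nonneg _)
      _ ≤ S := hS x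
  linarith [(abs_le.1 (hline a)).2, (abs_le.1 (hline b)).1]

end IsTravelingWave

section Decay

open Bornology

lemma eventually_cobounded_forall_closedBall {X : Type*} [PseudoMetricSpace X] {p : X → Prop}
    (hp : ∀ᶠ x in cobounded X, p x) (R : ℝ) :
    ∀ᶠ x in cobounded X, ∀ t ∈ closedBall x R, p t := by
  rcases isEmpty_or_nonempty X with _ | ⟨⟨o⟩⟩
  · exact .of_forall isEmptyElim
  obtain ⟨r, -, hr⟩ := (hasBasis_cobounded_compl_closedBall o).eventually_iff.1 hp
  refine (hasBasis_cobounded_compl_closedBall o).eventually_iff.2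
    ⟨r + R, trivial, fun x hx t ht => hr ?_⟩
  simp only [Set.mem_compl_iff, mem_closedBall, not_le] at hx ht ⊢
  linarith [dist_triangle_left x o t]

lemma tendsto_setIntegral_closedBall_cobounded {X G : Type*} [PseudoMetricSpace X]
    [MeasurableSpace X] [OpensMeasurableSpace X] [NormedAddCommGroup G] [NormedSpace ℝ G]
    {μ : Measure X} {g : X → G} (hg : Integrable g μ) (R : ℝ) :
    Tendsto (fun x => ∫ t in closedBall x R, g t ∂μ) (cobounded X) (nhds 0) := by
  rcases isEmpty_or_nonempty X with _ | ⟨⟨o⟩⟩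
  · exact tendsto_of_isEmpty
  have : (cobounded X).IsCountablyGenerated := by
    rw [← comap_dist_right_atTop o]
    infer_instance
  simp only [← integral_indicator measurableSet_closedBall]
  rw [← integral_zero X G (μ := μ)]
  refine tendsto_integral_filter_of_dominated_convergence (fun t => ‖g t‖)
    (.of_forall fun x => hg.aestronglyMeasurable.indicator measurableSet_closedBall)
    (.of_forall fun x => ae_of_all _ fun t => norm_indicator_le_norm_self g t)
    hg.norm (ae_of_all _ fun t => tendsto_const_nhds.congr' ?_)
  filter_upwards [(tendsto_dist_left_cobounded_atTop t).eventually_gt_atTop R] with x hx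
  exact (Set.indicator_of_notMem (fun ht => (mem_closedBall.1 ht).not_gt hx) g).symm

lemma tendsto_zero_cobounded_of_integrable_norm_pow {E G : Type*}
    [NormedAddCommGroup E] [NormedSpace ℝ E] [FiniteDimensional ℝ E] [MeasurableSpace E]
    [BorelSpace E] {μ : Measure E} [μ.IsAddHaarMeasure] [NormedAddCommGroup G] {f : E → G}
    {n : ℕ} (hf : UniformContinuous f) (hint : Integrable (fun x => ‖f x‖ ^ n) μ) :
    Tendsto f (cobounded E) (nhds 0) := by
  rw [Metric.tendsto_nhds]
  intro ε hε
  obtain ⟨δ, hδ, hclose⟩ := Metric.uniformContinuous_iff.1 hf (ε / 2) (half_pos hε)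
  have hvol : 0 < μ.real (closedBall (0 : E) (δ / 2)) :=
    ENNReal.toReal_pos (measure_closedBall_pos _ _ (half_pos hδ)).ne' measure_closedBall_lt_top.ne
  have hsmall := (tendsto_setIntegral_closedBall_cobounded hint (δ / 2)).eventually_lt_const
    (mul_pos (pow_pos (half_pos hε) n) hvol)
  filter_upwards [hsmall] with x hx
  by_contra! hlarge
  rw [dist_zero_right] at hlarge
  refine hx.not_ge ?_
  rw [← Measure.addHaar_real_closedBall_center μ x]
  refine setIntegral_ge_of_const_le_real measurableSet_closedBall measure_closedBall_lt_top.ne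
    (fun t ht => pow_le_pow_left₀ (half_pos hε).le ?_ n) hint.integrableOn
  have hdist := hclose ((mem_closedBall.1 ht).trans_lt (half_lt_self hδ))
  rw [dist_eq_norm] at hdist
  linarith [norm_sub_norm_le (f x) (f t), norm_sub_rev (f x) (f t)]

lemma eventually_cobounded_forall_abs_le {X Y : Type*} [PseudoMetricSpace X] [PseudoMetricSpace Y]
    {f : X × Y → ℝ} (hf : Tendsto f (cobounded (X × Y)) (nhds 0)) {ε : ℝ} (hε : 0 < ε) :
    ∀ᶠ x in cobounded X, ∀ y, |f (x, y)| ≤ ε := by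
  have h := (Metric.tendsto_nhds.1 hf ε hε).filter_mono LipschitzWith.prod_fst.comap_cobounded_le
  filter_upwards [eventually_comap.1 h] with x hx y
  exact (dist_zero_right (f (x, y)) ▸ hx (x, y) rfl).le

lemma eventually_cobounded_abs_le_of_integral_le {ι : Type*} {e e' g : ι → ℝ → ℝ} {S : ℝ}
    (hg : ∀ i, Continuous (g i)) (hS : ∀ i a b, a ≤ b → ∫ x in a..b, g i x ≤ S)
    (he : ∀ i x, HasDerivAt (e i) (e' i x) x)
    (hsmall : ∀ η > 0, ∀ᶠ x in cobounded ℝ, ∀ i, |e' i x| ≤ η ∧ |e i x| ≤ g i x + η)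
    {ε : ℝ} (hε : 0 < ε) : ∀ᶠ x in cobounded ℝ, ∀ i, |e i x| ≤ ε := by
  -- `g i` must be small somewhere in a window of length `R`, and `e i` barely varies across it.
  obtain ⟨R, hR, hSR⟩ : ∃ R : ℝ, 0 ≤ R ∧ S < R * (ε / 2) := by
    refine ⟨(|S| + 1) / (ε / 2), by positivity, ?_⟩
    rw [div_mul_cancel₀ _ (by positivity)]
    exact (le_abs_self S).trans_lt (lt_add_one _)
  have hη : 0 < ε / 2 / (1 + R) := by positivity
  filter_upwards [eventually_cobounded_forall_closedBall (hsmall _ hη) R] with x hx i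
  set η := ε / 2 / (1 + R) with hηdef
  have hball {t : ℝ} (ht : t ∈ Set.Icc x (x + R)) : t ∈ closedBall x R := by
    rw [Real.closedBall_eq_Icc]
    exact ⟨by linarith [ht.1], ht.2⟩
  obtain ⟨t, ht, hgt⟩ : ∃ t ∈ Set.Icc x (x + R), g i t ≤ ε / 2 := by
    by_contra! hlarge
    have hmono : ∫ _ in x..x + R, ε / 2 ≤ ∫ t in x..x + R, g i t :=
      intervalIntegral.integral_mono_on (le_add_of_nonneg_right hR) intervalIntegrable_const
        ((hg i).intervalIntegrable _ _) fun t ht => (hlarge t ht).le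
    rw [intervalIntegral.integral_const, add_sub_cancel_left, smul_eq_mul] at hmono
    linarith [hS i x (x + R) (le_add_of_nonneg_right hR)]
  have hmvt : |e i x - e i t| ≤ η * |x - t| :=
    (convex_Icc x (x + R)).norm_image_sub_le_of_norm_hasDerivWithin_le
      (fun s _ => (he i s).hasDerivWithinAt) (fun s hs => (hx s (hball hs) i).1) ht
      ⟨le_rfl, le_add_of_nonneg_right hR⟩
  have hdist : |x - t| ≤ R := abs_le.2 ⟨by linarith [ht.2], by linarith [ht.1]⟩
  calc |e i x| ≤ |e i t| + |e i x - e i t| := by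
        simpa only [add_sub_cancel] using abs_add_le (e i t) (e i x - e i t)
    _ ≤ (ε / 2 + η) + η * R :=
        add_le_add (((hx t (hball ht) i).2).trans (by gcongr)) (hmvt.trans (by gcongr))
    _ = ε := by
        rw [hηdef]
        field_simp
        ring

end Decay

namespace IsTravelingWave

open Bornology

variable {F : ℝ → ℝ} {c : ℝ} {u : ℝ → ℝ → ℝ}

lemma tendsto_pdy_cobounded (hF : BalancedPotential F) (hc : 0 < c) (hu : IsTravelingWave F c u) :
    Tendsto (fun p : ℝ × ℝ => pdy u p.1 p.2) (cobounded (ℝ × ℝ)) (nhds 0) := by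
  obtain ⟨K, hK⟩ := hu.isSolution.exists_hessian_bound hF.contDiff
  have hd := differentiable_pdy hu.isSolution.contDiff_two
  have hlip : LipschitzWith (K.toNNReal + K.toNNReal) (Function.uncurry (pdy u)) :=
    .uncurry
      (fun y => lipschitzWith_of_nnnorm_deriv_le
        (fun x => (hasDerivAt_pdx hd x y).differentiableAt)
        fun x => NNReal.le_toNNReal_of_coe_le (hK x y).2.1)
      fun x => lipschitzWith_of_nnnorm_deriv_le
        (fun y => (_root_.hasDerivAt_pdy hd x y).differentiableAt)
        fun y => NNReal.le_toNNReal_of_coe_le (hK x y).2.2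
  refine tendsto_zero_cobounded_of_integrable_norm_pow (μ := volume) (n := 2)
    hlip.uniformContinuous ?_
  simpa only [Function.uncurry, norm_eq_abs, sq_abs] using hu.integrable_pdy_sq hF hc

lemma tendsto_pdyy_cobounded (hF : BalancedPotential F) (hc : 0 < c) (hu : IsTravelingWave F c u) :
    Tendsto (fun p : ℝ × ℝ => pdyy u p.1 p.2) (cobounded (ℝ × ℝ)) (nhds 0) := by
  obtain ⟨D, hD⟩ := hu.isSolution.exists_pdy_gradient_estimate hF.contDiff
  rw [Metric.tendsto_nhds]
  intro ε hε
  have hη : 0 < ε / (|D| + 1) := by positivity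
  filter_upwards [eventually_cobounded_forall_closedBall
    (Metric.tendsto_nhds.1 (hu.tendsto_pdy_cobounded hF hc) _ hη) 1] with p hp
  simp only [dist_zero_right, norm_eq_abs] at hp ⊢
  calc |pdyy u p.1 p.2| ≤ D * (ε / (|D| + 1)) := (hD p.1 p.2 _ fun q hq => (hp q hq).le).2
    _ < (|D| + 1) * (ε / (|D| + 1)) :=
        mul_lt_mul_of_pos_right ((le_abs_self D).trans_lt (lt_add_one _)) hη
    _ = ε := mul_div_cancel₀ ε (by positivity)

lemma hasDerivAt_profile_energy (hF : Differentiable ℝ F) (hu : IsTravelingWave F c u) (x y : ℝ) :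
    HasDerivAt (fun t => pdx u t y ^ 2 - 2 * F (u t y))
      (pdx u x y * (-2 * (pdyy u x y + c * pdy u x y))) x := by
  have hux := hasDerivAt_pdx (differentiable_pdx hu.isSolution.contDiff_two) x y
  have hFu := (hF (u x y)).hasDerivAt.comp x (hasDerivAt_pdx hu.isSolution.differentiable x y)
  refine ((hux.pow 2).sub (hFu.const_mul 2)).congr_deriv ?_
  rw [← hu.isSolution.equation, pdxx, ← pdx]
  ring

lemma eventually_profile_energy_le (hF : BalancedPotential F) (hc : 0 < c)
    (hu : IsTravelingWave F c u) {ε : ℝ} (hε : 0 < ε) :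
    ∀ᶠ x in cobounded ℝ, ∀ y, |pdx u x y ^ 2 - 2 * F (u x y)| ≤ ε := by
  obtain ⟨K, hK⟩ := hu.isSolution.exists_gradient_bound hF.contDiff_one
  obtain ⟨S, hS⟩ := hu.exists_le_integral_stress hF hc.le
  have hpdy := hu.tendsto_pdy_cobounded hF hc
  have hforce : Tendsto (fun p : ℝ × ℝ => -2 * (pdyy u p.1 p.2 + c * pdy u p.1 p.2))
      (cobounded (ℝ × ℝ)) (nhds 0) := by
    simpa using ((hu.tendsto_pdyy_cobounded hF hc).add (hpdy.const_mul c)).const_mul (-2)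
  have hderiv : Tendsto (fun p : ℝ × ℝ => pdx u p.1 p.2 *
      (-2 * (pdyy u p.1 p.2 + c * pdy u p.1 p.2))) (cobounded (ℝ × ℝ)) (nhds 0) :=
    bdd_le_mul_tendsto_zero' K (.of_forall fun p => (hK p.1 p.2).1) hforce
  have hpdy_sq : Tendsto (fun p : ℝ × ℝ => pdy u p.1 p.2 ^ 2) (cobounded (ℝ × ℝ)) (nhds 0) := by
    simpa using hpdy.pow 2
  have hcont := (hu.isSolution.contDiff_stress hF.contDiff_one).continuous
  refine eventually_cobounded_abs_le_of_integral_le (g := fun y x => -2 * stress F u x y)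
    (S := -2 * S) (fun y => by fun_prop) (fun y a b hab => ?_)
    (fun y x => hu.hasDerivAt_profile_energy (hF.contDiff_one.differentiable one_ne_zero) x y)
    (fun η hη => ?_) hε
  · rw [intervalIntegral.integral_const_mul]
    linarith [hS a b y hab]
  · filter_upwards [eventually_cobounded_forall_abs_le hderiv hη,
      eventually_cobounded_forall_abs_le hpdy_sq hη] with x hx hx' y
    refine ⟨hx y, ?_⟩
    have hFu := hF.nonneg (hu.isSolution.mem_Icc x y)
    have hsq := sq_nonneg (pdx u x y)
    have hy := (le_abs_self _).trans (hx' y)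
    rw [stress]
    exact abs_le.2 ⟨by linarith, by linarith⟩

end IsTravelingWave

/-- The energy of the one-dimensional profile connecting the wells of `F`. -/
noncomputable def transitionEnergy (F : ℝ → ℝ) : ℝ :=
  ∫ s in (-1)..1, √(2 * F s)

lemma abs_abs_sub_sqrt_le {p q : ℝ} (hq : 0 ≤ q) : |(|p| - √q)| ≤ √|p ^ 2 - q| := by
  refine abs_le_sqrt ?_
  have hle : |(|p| - √q)| ≤ |p| + √q := by
    simpa only [abs_abs, abs_of_nonneg (sqrt_nonneg q)] using abs_sub |p| √q
  calc (|p| - √q) ^ 2 = |(|p| - √q)| * |(|p| - √q)| := by rw [← sq, sq_abs]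
    _ ≤ |(|p| - √q)| * (|p| + √q) := by gcongr
    _ = |p ^ 2 - q| := by
        rw [← abs_of_nonneg (add_nonneg (abs_nonneg p) (sqrt_nonneg q)), ← abs_mul, mul_comm,
          ← sq_sub_sq, sq_abs, sq_sqrt hq]

namespace BalancedPotential

variable {F : ℝ → ℝ}

lemma exists_pos_le_on_uIcc (hF : BalancedPotential F) {s : ℝ} (hs : s ∈ Set.Ioo (-1 : ℝ) 1)
    {m : ℝ} (hm : 0 < m) :
    ∃ κ > 0, ∀ σ ∈ Set.Icc (-1 : ℝ) 1, m ≤ F σ → ∀ τ ∈ Set.uIcc s σ, κ ≤ F τ := by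
  set T := insert s (Set.Icc (-1) 1 ∩ {σ | m ≤ F σ})
  have hcompact : IsCompact T :=
    (isCompact_Icc.inter_right (isClosed_le continuous_const hF.continuous)).insert s
  have hsub : T ⊆ Set.Ioo (-1) 1 := by
    rintro σ (rfl | ⟨hσ, hmσ⟩)
    · exact hs
    · refine ⟨hσ.1.lt_of_ne ?_, hσ.2.lt_of_ne ?_⟩ <;> rintro rfl
      · exact (hm.trans_le hmσ).ne' hF.map_neg_one
      · exact (hm.trans_le hmσ).ne' hF.map_one
  have hsT : s ∈ T := Set.mem_insert s _
  obtain ⟨l, hlT, hl⟩ := hcompact.exists_isLeast ⟨s, hsT⟩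
  obtain ⟨r, hrT, hr⟩ := hcompact.exists_isGreatest ⟨s, hsT⟩
  obtain ⟨τ₀, hτ₀, hmin⟩ := isCompact_Icc.exists_isMinOn (Set.nonempty_Icc.2 (hl hrT))
    hF.continuous.continuousOn
  refine ⟨F τ₀, hF.pos τ₀ (Set.Icc_subset_Ioo (hsub hlT).1 (hsub hrT).2 hτ₀),
    fun σ hσ hmσ τ hτ => hmin (Set.uIcc_subset_Icc ⟨hl hsT, hr hsT⟩ ?_ hτ)⟩
  have hσT : σ ∈ T := Set.mem_insert_of_mem s ⟨hσ, hmσ⟩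
  exact ⟨hl hσT, hr hσT⟩

lemma exists_abs_sub_sqrt_le (hF : BalancedPotential F) {s : ℝ} (hs : s ∈ Set.Ioo (-1 : ℝ) 1)
    {ε : ℝ} (hε : 0 < ε) :
    ∃ δ > 0, ∀ p v : ℝ → ℝ, Continuous p → Monotone v → (∀ y, v y ∈ Set.Icc (-1 : ℝ) 1) →
      (∀ y, |p y ^ 2 - 2 * F (v y)| ≤ δ) → ∀ y₀, v y₀ = s → 0 ≤ p y₀ →
        ∀ y, |p y - √(2 * F (v y))| ≤ ε := by
  obtain ⟨κ, hκ, hbarrier⟩ := hF.exists_pos_le_on_uIcc hs (m := (ε / 4) ^ 2 / 2) (by positivity)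
  refine ⟨min ((ε / 2) ^ 2) κ, by positivity, fun p v hp hv hmem henergy y₀ hy₀ hpos y => ?_⟩
  have hq (y : ℝ) : 0 ≤ 2 * F (v y) := mul_nonneg zero_le_two (hF.nonneg (hmem y))
  have hclose : |(|p y| - √(2 * F (v y)))| ≤ ε / 2 :=
    (abs_abs_sub_sqrt_le (hq y)).trans
      ((sqrt_le_left (by positivity)).2 ((henergy y).trans (min_le_left _ _)))
  rcases le_or_gt 0 (p y) with hpy | hpy
  · rw [abs_of_nonneg hpy] at hclose
    linarith
  -- If `p y < 0`, then `p` vanishes at some `z` on the way from `y₀`, so `F (v z)` is small; the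
  -- choice of `κ` allows this only if `F (v y)` is small too.
  · obtain ⟨z, hz, hpz⟩ := intermediate_value_uIcc (a := y₀) (b := y) hp.continuousOn
      (Set.mem_uIcc_of_ge hpy.le hpos)
    have hFz : 2 * F (v z) ≤ κ := by
      have h := (henergy z).trans (min_le_right _ _)
      rw [hpz, zero_pow two_ne_zero, zero_sub, abs_neg] at h
      exact (le_abs_self _).trans h
    have hvz : v z ∈ Set.uIcc s (v y) := hy₀ ▸ hv.image_uIcc_subset (Set.mem_image_of_mem v hz)
    have hFy : F (v y) < (ε / 4) ^ 2 / 2 := by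
      by_contra! hm
      linarith [hbarrier _ (hmem y) hm _ hvz]
    have hsqrt : √(2 * F (v y)) ≤ ε / 4 := (sqrt_le_left (by positivity)).2 (by linarith)
    rw [abs_of_neg hpy] at hclose
    rw [abs_of_nonpos (by linarith [sqrt_nonneg (2 * F (v y))])]
    linarith [(abs_le.1 hclose).2]

end BalancedPotential

namespace IsTravelingWave

open Bornology IsOrderBornology

variable {F : ℝ → ℝ} {c : ℝ} {u : ℝ → ℝ → ℝ} {s : ℝ}

lemma strictAnti_momentum (hF : BalancedPotential F) (hc : 0 < c) (hu : IsTravelingWave F c u) :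
    StrictAnti (momentum u) := by
  intro a b hab
  have hcont : Continuous fun p : ℝ × ℝ => pdy u p.1 p.2 ^ 2 :=
    hu.isSolution.contDiff_pdy.continuous.pow 2
  have hvol : 0 < volume (Set.Icc ((a, 0) : ℝ × ℝ) (b, 1)) := by
    rw [← Set.Icc_prod_Icc, Measure.volume_eq_prod, Measure.prod_prod]
    simp [hab]
  have hpos : 0 < ∫ p in Set.Icc ((a, 0) : ℝ × ℝ) (b, 1), pdy u p.1 p.2 ^ 2 := by
    rw [setIntegral_pos_iff_support_of_nonneg_ae (ae_of_all _ fun p => sq_nonneg _)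
      hcont.integrableOn_Icc]
    refine hvol.trans_le (measure_mono fun p hp => ⟨?_, hp⟩)
    exact (pow_pos (hu.isSolution.pdy_pos p.1 p.2) 2).ne'
  linarith [mul_pos hc hpos, hu.integral_pdy_sq_le_momentum_sub hF hc.le hab.le 0 1]

lemma abs_integral_mul_pdy_sub_transitionEnergy_le (hF : Continuous F)
    (hu : IsTravelingWave F c u) {f : ℝ → ℝ} (hf : Continuous f) {ε x : ℝ}
    (hfu : ∀ y, |f y - √(2 * F (u x y))| ≤ ε) :
    |(∫ y, f y * pdy u x y) - transitionEnergy F| ≤ 2 * ε :=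
  hu.abs_integral_mul_pdy_sub_le (g := fun s => √(2 * F s)) hf
    (continuous_sqrt.comp (hF.const_mul 2)) hfu

lemma eventually_momentum_le (hF : BalancedPotential F) (hc : 0 < c) (hu : IsTravelingWave F c u)
    {ε : ℝ} (hε : 0 < ε) : ∀ᶠ x in cobounded ℝ, momentum u x ≤ transitionEnergy F + ε := by
  obtain ⟨K, hK⟩ := hu.isSolution.exists_gradient_bound hF.contDiff_one
  filter_upwards [hu.eventually_profile_energy_le hF hc (pow_pos (half_pos hε) 2)] with x hx
  have hcont := hu.isSolution.continuous_pdx_line x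
  have hclose (y : ℝ) : |(|pdx u x y| - √(2 * F (u x y)))| ≤ ε / 2 :=
    (abs_abs_sub_sqrt_le (mul_nonneg zero_le_two (hF.nonneg (hu.isSolution.mem_Icc x y)))).trans
      ((sqrt_le_left (half_pos hε).le).2 (hx y))
  have hmono : momentum u x ≤ ∫ y, |pdx u x y| * pdy u x y := by
    refine integral_mono (hu.integrable_momentum_density hF.contDiff_one x)
      (hu.integrable_mul_pdy hcont.abs (fun y => (abs_abs _).trans_le (hK x y).1) x) fun y => ?_
    exact mul_le_mul_of_nonneg_right (le_abs_self _) (hu.isSolution.pdy_pos x y).le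
  have hprofile :=
    hu.abs_integral_mul_pdy_sub_transitionEnergy_le hF.continuous hcont.abs hclose
  linarith [(abs_le.1 hprofile).2]

lemma eventually_le_momentum (hF : BalancedPotential F) (hc : 0 < c) (hu : IsTravelingWave F c u)
    (hs : s ∈ Set.Ioo (-1 : ℝ) 1) {ε : ℝ} (hε : 0 < ε) :
    ∀ᶠ x in cobounded ℝ, ∀ y, u x y = s → 0 ≤ pdx u x y →
      transitionEnergy F - ε ≤ momentum u x := by
  obtain ⟨δ, hδ, hsign⟩ := hF.exists_abs_sub_sqrt_le hs (half_pos hε)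
  filter_upwards [hu.eventually_profile_energy_le hF hc hδ] with x hx y hy hpos
  have hcont := hu.isSolution.continuous_pdx_line x
  have hprofile := hu.abs_integral_mul_pdy_sub_transitionEnergy_le hF.continuous hcont
    (hsign _ _ hcont (hu.strictMono x).monotone (hu.isSolution.mem_Icc x) hx y hy hpos)
  rw [momentum]
  linarith [(abs_le.1 hprofile).1]

lemma momentum_lt_transitionEnergy (hF : BalancedPotential F) (hc : 0 < c)
    (hu : IsTravelingWave F c u) (x : ℝ) : momentum u x < transitionEnergy F := by
  have hanti := hu.strictAnti_momentum hF hc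
  refine (hanti (sub_one_lt x)).trans_le (le_of_forall_pos_le_add fun ε hε => ?_)
  obtain ⟨a, ha, hax⟩ := (((hu.eventually_momentum_le hF hc hε).filter_mono
    atBot_le_cobounded).and (eventually_le_atBot (x - 1))).exists
  exact (hanti.antitone hax).trans ha

lemma eventually_pdx_neg (hF : BalancedPotential F) (hc : 0 < c) (hu : IsTravelingWave F c u)
    (hs : s ∈ Set.Ioo (-1 : ℝ) 1) : ∀ᶠ x in atTop, ∀ y, u x y = s → pdx u x y < 0 := by
  have hgap : 0 < (transitionEnergy F - momentum u 0) / 2 :=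
    half_pos (sub_pos.2 (hu.momentum_lt_transitionEnergy hF hc 0))
  filter_upwards [(hu.eventually_le_momentum hF hc hs hgap).filter_mono atTop_le_cobounded,
    eventually_ge_atTop 0] with x hx hx₀ y hy
  by_contra! hpos
  linarith [hx y hy hpos, (hu.strictAnti_momentum hF hc).antitone hx₀]

lemma eventually_pdx_le (hF : BalancedPotential F) (hc : 0 < c) (hu : IsTravelingWave F c u)
    (hs : s ∈ Set.Ioo (-1 : ℝ) 1) : ∀ᶠ x in atTop, ∀ y, u x y = s → pdx u x y ≤ -√(F s) := by
  filter_upwards [hu.eventually_pdx_neg hF hc hs,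
    (hu.eventually_profile_energy_le hF hc (hF.pos s hs)).filter_mono atTop_le_cobounded]
    with x hneg henergy y rfl
  refine le_neg_of_le_neg (sqrt_le_iff.2 ⟨(neg_pos.2 (hneg y rfl)).le, ?_⟩)
  linarith [(abs_le.1 (henergy y)).1, neg_sq (pdx u x y)]

lemma tendsto_deriv_level_atTop (hF : BalancedPotential F) (hc : 0 < c)
    (hu : IsTravelingWave F c u) (hs : s ∈ Set.Ioo (-1 : ℝ) 1) {γ : ℝ → ℝ}
    (hγ : Differentiable ℝ γ) (hlevel : ∀ x, u x (γ x) = s) : Tendsto (deriv γ) atTop atTop := by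
  have hzero : Tendsto (fun x => pdy u x (γ x)) atTop (nhds 0) := by
    rw [Metric.tendsto_nhds]
    intro ε hε
    filter_upwards [(eventually_cobounded_forall_abs_le (hu.tendsto_pdy_cobounded hF hc)
      (half_pos hε)).filter_mono atTop_le_cobounded] with x hx
    rw [dist_zero_right]
    exact (hx (γ x)).trans_lt (half_lt_self hε)
  have hinv : Tendsto (fun x => (pdy u x (γ x))⁻¹) atTop atTop :=
    tendsto_inv_nhdsGT_zero.comp (tendsto_nhdsWithin_iff.2
      ⟨hzero, .of_forall fun x => hu.isSolution.pdy_pos x (γ x)⟩)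
  refine tendsto_atTop_mono' _ ?_ (hinv.const_mul_atTop (sqrt_pos.2 (hF.pos s hs)))
  filter_upwards [hu.eventually_pdx_le hF hc hs] with x hx
  rw [← div_eq_mul_inv, div_le_iff₀ (hu.isSolution.pdy_pos x (γ x))]
  linarith [hx _ (hlevel x), pdx_add_deriv_mul_pdy_eq_zero hu.isSolution.differentiable
    hγ hlevel x]

lemma comp_neg (hu : IsTravelingWave F c u) : IsTravelingWave F c fun x y => u (-x) y := by
  have hdx : pdx (fun x y => u (-x) y) = fun x y => -pdx u (-x) y :=
    funext₂ fun x y => deriv_comp_neg (fun t => u t y) x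
  have hdxx (x y : ℝ) : pdxx (fun x y => u (-x) y) x y = pdxx u (-x) y := by
    rw [pdxx, hdx, deriv.fun_neg, deriv_comp_neg (fun t => pdx u t y), neg_neg]
    rfl
  refine ⟨⟨hu.isSolution.contDiff.comp (contDiff_fst.neg.prodMk contDiff_snd), fun x y => ?_,
    fun x y => hu.1.2.2.1 (-x) y, fun x y => hu.isSolution.pdy_pos (-x) y⟩,
    fun x => hu.tendsto_one_atTop (-x), fun x => hu.tendsto_neg_one_atBot (-x)⟩
  rw [hdxx]
  exact hu.isSolution.equation (-x) y

end IsTravelingWave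

theorem level_curve_opens_upward_general {F : ℝ → ℝ} (hF : BalancedPotential F) {c : ℝ}
    (hc : 0 < c) {u : ℝ → ℝ → ℝ} (hu : IsTravelingWave F c u) {s : ℝ}
    (hs : s ∈ Set.Ioo (-1 : ℝ) 1) {γ : ℝ → ℝ} (hγ : Differentiable ℝ γ)
    (hlevel : ∀ x, u x (γ x) = s) :
    Tendsto (deriv γ) atTop atTop ∧ Tendsto (deriv γ) atBot atBot := by
  refine ⟨hu.tendsto_deriv_level_atTop hF hc hs hγ hlevel, ?_⟩
  have hreflect := hu.comp_neg.tendsto_deriv_level_atTop hF hc hs (hγ.comp differentiable_neg)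
    fun x => hlevel (-x)
  have h := tendsto_neg_atTop_atBot.comp (hreflect.comp tendsto_neg_atBot_atTop)
  refine h.congr fun x => ?_
  simp only [Function.comp_def, deriv_comp_neg γ, neg_neg]

/-- The zero level curve opens upward at both ends: `γ'(x) → +∞` as `x → +∞`
and `γ'(x) → -∞` as `x → -∞` (Lemma 2.6). -/
theorem level_curve_opens_upward
    (F : ℝ → ℝ) (hF : BalancedDoubleWell F) (c : ℝ) (hc : 0 < c)
    (u : ℝ → ℝ → ℝ) (hu : IsTravelingWave F c u)
    (γ : ℝ → ℝ) (hγ : ContDiff ℝ 1 γ)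
    (hγlevel : ∀ x y : ℝ, u x y = 0 ↔ y = γ x) :
    Tendsto (deriv γ) atTop atTop ∧ Tendsto (deriv γ) atBot atBot :=
  level_curve_opens_upward_general hF.balancedPotential hc hu ⟨neg_one_lt_zero, one_pos⟩
    (hγ.differentiable one_ne_zero) fun x => (hγlevel x (γ x)).2 rfl
end
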